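/- arXiv:2601.10941 — 4 statements merged into one kernel-verified Lean document; each statement's English description precedes it below -/
import Mathlib

section
/- Under assumptions (I1)–(I4), the Nehari–Pankov set NP_λ is nonempty and contains every nonzero critical point of J_λ (i.e. every u ∈ E∖{0} with J_λ′(u) = 0 in E′). Moreover c_λ := inf_{u ∈ NP_λ} J_λ(u) = inf_{u ∈ E∖E_n} sup_{w ∈ F_n(u)⁺} J_λ(w) > 0, this infimum over NP_λ is attained, and every minimizer of J_λ on NP_λ is a critical point of J_λ. -/
open Filter Topology Set
open scoped InnerProductSpace

/- Abstract setting: `E = D(A^{1/2})` is a real Hilbert space in which the rescaled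
eigenfunctions `ζ_k / √(1+λ_k)` form a Hilbert basis (encoded by `hON` and `hdense` below);
the `H`-inner product of `u, v ∈ E` is recovered as `∑ₖ ⟨u,ζ_k⟩_H ⟨v,ζ_k⟩_H`, where
`⟨u,ζ_k⟩_H = ⟨u,ζ_k⟩_E / (1+λ_k)`. -/

variable {E : Type*} [NormedAddCommGroup E] [InnerProductSpace ℝ E] [CompleteSpace E]

/-- The `H`-inner-product coefficient `⟨u, ζ_k⟩_H = ⟨u, ζ_k⟩_E / (1 + λ_k)`. -/
noncomputable def coefH (lam : ℕ → ℝ) (ζ : ℕ → E) (u : E) (k : ℕ) : ℝ :=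
  ⟪u, ζ k⟫_ℝ / (1 + lam k)

/-- The square of the `H`-norm: `‖u‖_H² = ∑ₖ ⟨u,ζ_k⟩_H²`. -/
noncomputable def normHsq (lam : ℕ → ℝ) (ζ : ℕ → E) (u : E) : ℝ :=
  ∑' k, (coefH lam ζ u k) ^ 2

/-- The symmetric bilinear form `q_λ(u,v) = ∑ₖ (λ_k − λ) ⟨u,ζ_k⟩_H ⟨v,ζ_k⟩_H`. -/
noncomputable def qForm (lam : ℕ → ℝ) (ζ : ℕ → E) (lambda : ℝ) (u v : E) : ℝ :=
  ∑' k, (lam k - lambda) * (coefH lam ζ u k * coefH lam ζ v k)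

/-- The action functional `J_λ(u) = ½ q_λ(u) − I(u)`. -/
noncomputable def Jfun (lam : ℕ → ℝ) (ζ : ℕ → E) (I : E → ℝ) (lambda : ℝ) (u : E) : ℝ :=
  qForm lam ζ lambda u u / 2 - I u

/-- `E_n`, the span of the eigenfunctions `ζ_0, …, ζ_n` (the first `n+1` of them). -/
noncomputable def Esub (ζ : ℕ → E) (n : ℕ) : Submodule ℝ E :=
  Submodule.span ℝ (ζ '' {k : ℕ | k ≤ n})

/-- `F_n(u) = E_n ⊕ ℝ u`. -/
noncomputable def Fsub (ζ : ℕ → E) (n : ℕ) (u : E) : Submodule ℝ E :=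
  Esub ζ n ⊔ Submodule.span ℝ {u}

/-- `F_n(u)⁺ = E_n ⊕ ℝ⁺ u = {v + t u : v ∈ E_n, t > 0}`. -/
def FsubPlus (ζ : ℕ → E) (n : ℕ) (u : E) : Set E :=
  {w | ∃ v ∈ Esub ζ n, ∃ t : ℝ, 0 < t ∧ w = v + t • u}

/-- The derivative of `J_λ` at `u` applied to `w`: `J_λ'(u)[w] = q_λ(u,w) − I'(u)[w]`. -/
noncomputable def Jderiv (lam : ℕ → ℝ) (ζ : ℕ → E) (I' : E → E →L[ℝ] ℝ)
    (lambda : ℝ) (u w : E) : ℝ :=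
  qForm lam ζ lambda u w - I' u w

/-- The Nehari–Pankov set `NP_λ = {u ∈ E ∖ E_n : J_λ'(u)|_{F_n(u)} = 0}`. -/
def NehariPankov (lam : ℕ → ℝ) (ζ : ℕ → E) (I' : E → E →L[ℝ] ℝ)
    (n : ℕ) (lambda : ℝ) : Set E :=
  {u | u ∉ Esub ζ n ∧ ∀ w ∈ Fsub ζ n u, Jderiv lam ζ I' lambda u w = 0}

/-- The ground-state level `c_λ = inf_{NP_λ} J_λ`. -/
noncomputable def clevel (lam : ℕ → ℝ) (ζ : ℕ → E) (I : E → ℝ) (I' : E → E →L[ℝ] ℝ)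
    (n : ℕ) (lambda : ℝ) : ℝ :=
  sInf (Jfun lam ζ I lambda '' NehariPankov lam ζ I' n lambda)

/-- The set `Q_λ` of minimizers of `J_λ` on `NP_λ`. -/
def Qset (lam : ℕ → ℝ) (ζ : ℕ → E) (I : E → ℝ) (I' : E → E →L[ℝ] ℝ)
    (n : ℕ) (lambda : ℝ) : Set E :=
  {u | u ∈ NehariPankov lam ζ I' n lambda ∧
    Jfun lam ζ I lambda u = clevel lam ζ I I' n lambda}

/-- `E_n^⊥ = {w ∈ E : ⟨w, ζ_k⟩_H = 0 for k = 0, …, n}`. -/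
def EsubPerp (lam : ℕ → ℝ) (ζ : ℕ → E) (n : ℕ) : Set E :=
  {w | ∀ k ≤ n, coefH lam ζ w k = 0}

structure AbsHyp (B : E →L[ℝ] E →L[ℝ] ℝ) (V : Submodule ℝ E) (I : E → ℝ)
    (I' : E → E →L[ℝ] ℝ) (δ : ℝ) : Prop where
  symm : ∀ u v, B u v = B v u
  neg : ∀ v ∈ V, v ≠ 0 → B v v < 0
  dpos : 0 < δ
  pos : ∀ w ∈ Vᗮ, δ * ‖w‖ ^ 2 ≤ B w w
  fin : FiniteDimensional ℝ V
  sep : TopologicalSpace.SeparableSpace E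
  hIderiv : ∀ u, HasFDerivAt I (I' u) u
  hIc : Continuous I'
  hI1 : ∀ (u : ℕ → E) (a : E),
      (∀ φ : E →L[ℝ] ℝ, Tendsto (fun j => φ (u j)) atTop (𝓝 (φ a))) →
      Tendsto (fun j => I (u j)) atTop (𝓝 (I a))
  hI0 : I 0 = 0
  hI2 : ∀ u : E, u ≠ 0 → 0 < I u
  hI3mono : ∀ u : E, u ≠ 0 → MonotoneOn (fun t : ℝ => I (t • u) / t ^ 2) (Ioi 0)
  hI3zero : ∀ u : E, u ≠ 0 → Tendsto (fun t : ℝ => I (t • u) / t ^ 2) (𝓝[>] 0) (𝓝 0)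
  hI3top : ∀ u : E, u ≠ 0 → Tendsto (fun t : ℝ => I (t • u) / t ^ 2) atTop atTop
  hI4 : ∀ u : E, u ≠ 0 → ∀ v : E, ∀ s : ℝ, -1 ≤ s →
      I u - I ((1 + s) • u + v) + I' u ((s * (s / 2 + 1)) • u + (1 + s) • v) ≤ 0
  hI4strict : ∀ u : E, u ≠ 0 → ∀ s : ℝ, -1 ≤ s → s ≠ 0 →
      I u - I ((1 + s) • u) + I' u ((s * (s / 2 + 1)) • u) < 0

noncomputable def JJ (B : E →L[ℝ] E →L[ℝ] ℝ) (I : E → ℝ) (u : E) : ℝ := B u u / 2 - I u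

def NPset (B : E →L[ℝ] E →L[ℝ] ℝ) (V : Submodule ℝ E) (I' : E → E →L[ℝ] ℝ) : Set E :=
  {u | u ∉ V ∧ ∀ w ∈ V ⊔ Submodule.span ℝ {u}, B u w - I' u w = 0}

theorem weak_subseq (hs : TopologicalSpace.SeparableSpace E) (x : ℕ → E) (R : ℝ)
    (h : ∀ n, ‖x n‖ ≤ R) :
    ∃ a : E, ∃ φ : ℕ → ℕ, StrictMono φ ∧
      ∀ f : E →L[ℝ] ℝ, Tendsto (fun j => f (x (φ j))) atTop (𝓝 (f a)) := by
  have key := WeakDual.isSeqCompact_closedBall ℝ E (0 : StrongDual ℝ E) R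
  let y : ℕ → WeakDual ℝ E := fun n => StrongDual.toWeakDual (InnerProductSpace.toDual ℝ E (x n))
  obtain ⟨a, -, φ, hφ, hlim⟩ := key (x := y) (fun n => by
    simpa [y] using h n)
  refine ⟨(InnerProductSpace.toDual ℝ E).symm (WeakDual.toStrongDual a), φ, hφ, fun f => ?_⟩
  obtain ⟨z, rfl⟩ := (InnerProductSpace.toDual ℝ E).surjective f
  have h1 := ((WeakDual.eval_continuous (𝕜 := ℝ) z).tendsto a).comp hlim
  have h2 : ((InnerProductSpace.toDual ℝ E) z) ((InnerProductSpace.toDual ℝ E).symm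
      (WeakDual.toStrongDual a)) = a z := by
    rw [InnerProductSpace.toDual_apply_apply, real_inner_comm,
      InnerProductSpace.toDual_symm_apply]
    rfl
  rw [h2]
  refine h1.congr fun j => ?_
  simp only [InnerProductSpace.toDual_apply_apply, Function.comp, y]
  rw [real_inner_comm]
  rfl

namespace AbsHyp

variable {B : E →L[ℝ] E →L[ℝ] ℝ} {V : Submodule ℝ E} {I : E → ℝ}
    {I' : E → E →L[ℝ] ℝ} {δ : ℝ}

theorem Icont (H : AbsHyp B V I I' δ) : Continuous I :=
  continuous_iff_continuousAt.2 fun u => (H.hIderiv u).continuousAt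

theorem qcont (B : E →L[ℝ] E →L[ℝ] ℝ) : Continuous fun u => B u u := by fun_prop

theorem Jcont (H : AbsHyp B V I I' δ) : Continuous (JJ B I) := by
  have := H.Icont
  unfold JJ
  fun_prop

theorem hasFDerivJ (H : AbsHyp B V I I' δ) (u : E) : HasFDerivAt (JJ B I) (B u - I' u) u := by
  have h1 : HasFDerivAt (fun u => B u u) (B u + B.flip u) u := by
    have := (B.hasFDerivAt (x := u)).clm_apply (hasFDerivAt_id u)
    refine this.congr_fderiv ?_
    ext w
    simp
  have h2 := (h1.mul_const (1 / 2 : ℝ)).sub (H.hIderiv u)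
  have e : JJ B I = fun u => B u u * (1 / 2) - I u := by
    funext u; simp [JJ]; ring
  rw [e]
  refine h2.congr_fderiv ?_
  ext w
  simp [H.symm w u]
  ring

theorem maxJ (H : AbsHyp B V I I' δ) {u : E} (hu : u ∈ NPset B V I') {v : E} (hv : v ∈ V)
    {t : ℝ} (ht : 0 ≤ t) :
    JJ B I (v + t • u) ≤ JJ B I u ∧ (JJ B I u ≤ JJ B I (v + t • u) → v = 0 ∧ t = 1) := by
  obtain ⟨huV, hc⟩ := hu
  have hu0 : u ≠ 0 := by rintro rfl; exact huV V.zero_mem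
  have hcV : B u v = I' u v := sub_eq_zero.1 (hc v (Submodule.mem_sup_left hv))
  have hcu : B u u = I' u u :=
    sub_eq_zero.1 (hc u (Submodule.mem_sup_right (Submodule.mem_span_singleton_self u)))
  have e1 : JJ B I (v + t • u) = B v v / 2 + t * B u v + t ^ 2 * B u u / 2 - I (v + t • u) := by
    simp only [JJ, map_add, map_smul, _root_.add_apply, _root_.smul_apply,
      smul_eq_mul, H.symm v u]
    ring
  have e0 : JJ B I u = B u u / 2 - I u := rfl
  have hv0 : v = 0 ∨ B v v < 0 := by
    by_cases h : v = 0
    · exact Or.inl h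
    · exact Or.inr (H.neg v hv h)
  have h4 := H.hI4 u hu0 v (t - 1) (by linarith)
  have h4s := H.hI4strict u hu0 (t - 1) (by linarith)
  rw [show (1 + (t - 1)) = t by ring] at h4 h4s
  rw [add_comm (t • u) v] at h4
  simp only [map_add, map_smul, smul_eq_mul] at h4 h4s
  rw [← hcV, ← hcu] at h4
  rw [← hcu] at h4s
  rcases hv0 with rfl | hneg
  · simp only [map_zero, zero_add, mul_zero, add_zero] at h4 e1 ⊢
    by_cases ht1 : t = 1
    · subst ht1
      simp
    · have := h4s (sub_ne_zero.2 ht1)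
      constructor
      · rw [e1, e0]; simp; nlinarith
      · rw [e1, e0]; simp; intro h; exfalso; nlinarith
  · constructor
    · rw [e1, e0]; nlinarith
    · rw [e1, e0]; intro h; exfalso; nlinarith

/-- coercivity. -/
theorem coercive (H : AbsHyp B V I I' δ) {u : E} (hu : u ∉ V) (us : ℕ → E)
    (hus : Tendsto us atTop (𝓝 u)) (x : ℕ → V × ℝ) (hx : ∀ j, 0 ≤ (x j).2)
    (hJ : ∀ j, 0 ≤ JJ B I ((x j).1 + (x j).2 • us j)) :
    ∃ a : V × ℝ, 0 ≤ a.2 ∧ ∃ φ : ℕ → ℕ, StrictMono φ ∧ Tendsto (x ∘ φ) atTop (𝓝 a) := by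
  have := H.fin
  have : ProperSpace V := FiniteDimensional.proper ℝ V
  by_cases hb : ∃ R : ℝ, ∃ᶠ n in atTop, x n ∈ Metric.closedBall 0 R
  · obtain ⟨R, hR⟩ := hb
    obtain ⟨a, -, φ, hφ, hl⟩ := tendsto_subseq_of_frequently_bounded Metric.isBounded_closedBall hR
    refine ⟨a, ?_, φ, hφ, hl⟩
    exact ge_of_tendsto' ((continuous_snd.tendsto a).comp hl) fun j => hx _
  · exfalso
    push Not at hb
    have hinf : ∀ R : ℝ, ∀ᶠ n in atTop, R < ‖x n‖ := by
      intro R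
      have := hb R
      simpa [Filter.not_frequently] using this
    let z : ℕ → V × ℝ := fun n => ‖x n‖⁻¹ • x n
    obtain ⟨a, -, φ, hφ, hl⟩ := tendsto_subseq_of_bounded (x := z) (s := Metric.closedBall 0 1)
      Metric.isBounded_closedBall (fun n => by
        simp only [z, mem_closedBall_zero_iff, norm_smul, norm_inv, norm_norm]
        exact inv_mul_le_one)
    have hna : ‖a‖ = 1 := by
      refine tendsto_nhds_unique ((continuous_norm.tendsto a).comp hl) ?_
      refine (tendsto_const_nhds (x := (1 : ℝ))).congr' ?_
      filter_upwards [hφ.tendsto_atTop.eventually (hinf 0)] with j hj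
      simp only [Function.comp, z, norm_smul, norm_inv, norm_norm]
      rw [inv_mul_cancel₀ hj.ne']
    have ha2 : 0 ≤ a.2 := ge_of_tendsto' ((continuous_snd.tendsto a).comp hl) fun j => by
      simp only [Function.comp, z, Prod.smul_snd, smul_eq_mul]
      exact mul_nonneg (inv_nonneg.2 (norm_nonneg _)) (hx _)
    let y : E := (a.1 : E) + a.2 • u
    have hy0 : y ≠ 0 := by
      intro hy
      by_cases h2 : a.2 = 0
      · have h1 : (a.1 : E) = 0 := by simpa [y, h2] using hy
        have : a = 0 := Prod.ext (by simpa using h1) h2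
        rw [this] at hna
        simp at hna
      · apply hu
        have : u = a.2⁻¹ • (-(a.1 : E)) := by
          rw [eq_inv_smul_iff₀ h2]
          exact eq_neg_of_add_eq_zero_right hy
        rw [this]
        exact V.smul_mem _ (V.neg_mem a.1.2)
    have hyl : Tendsto (fun j => ((z (φ j)).1 : E) + (z (φ j)).2 • us (φ j)) atTop (𝓝 y) := by
      refine Tendsto.add ?_ (Tendsto.smul ((continuous_snd.tendsto a).comp hl)
        (hus.comp hφ.tendsto_atTop))
      exact ((continuous_subtype_val.comp continuous_fst).tendsto a).comp hl
    set ys : ℕ → E := fun j => ((z (φ j)).1 : E) + (z (φ j)).2 • us (φ j) with hys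
    obtain ⟨M, hM0, hM⟩ := ((eventually_gt_atTop (0 : ℝ)).and
      ((H.hI3top y hy0).eventually_gt_atTop (B y y / 2))).exists
    have hcont : Continuous fun w : E => B w w / 2 - I (M • w) / M ^ 2 := by
      have := H.Icont
      fun_prop
    have hlt : ∀ᶠ j in atTop, B (ys j) (ys j) / 2 - I (M • ys j) / M ^ 2 < 0 :=
      ((hcont.tendsto y).comp hyl).eventually_lt_const (by linarith)
    have hne : ∀ᶠ j in atTop, ys j ≠ 0 := hyl.eventually_ne hy0
    obtain ⟨j, hj1, hj2, hj3⟩ :=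
      (hlt.and (hne.and (hφ.tendsto_atTop.eventually (hinf M)))).exists
    have hr : 0 < ‖x (φ j)‖ := hM0.trans hj3
    have hmono := H.hI3mono (ys j) hj2 (show M ∈ Ioi (0 : ℝ) from hM0)
      (show ‖x (φ j)‖ ∈ Ioi (0 : ℝ) from hr) hj3.le
    simp only at hmono
    have hyx : ‖x (φ j)‖ • ys j = ((x (φ j)).1 : E) + (x (φ j)).2 • us (φ j) := by
      simp only [hys, z, smul_add, smul_smul, Prod.smul_fst, Prod.smul_snd, smul_eq_mul,
        Submodule.coe_smul]
      rw [← mul_assoc, mul_inv_cancel₀ hr.ne']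
      simp
    have hJj := hJ (φ j)
    rw [← hyx] at hJj
    set r := ‖x (φ j)‖
    simp only [JJ, map_smul, _root_.smul_apply, smul_eq_mul] at hJj
    have h3 : I (r • ys j) / r ^ 2 * r ^ 2 = I (r • ys j) := by field_simp
    have h4 : 0 < r ^ 2 := by positivity
    nlinarith

/-- positivity. -/
theorem smallpos (H : AbsHyp B V I I' δ) {w : E} (hw : w ∈ Vᗮ) (hw0 : w ≠ 0) :
    ∃ t : ℝ, 0 < t ∧ 0 < JJ B I (t • w) := by
  have hq : 0 < B w w := lt_of_lt_of_le
    (mul_pos H.dpos (pow_pos (norm_pos_iff.2 hw0) 2)) (H.pos w hw)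
  have h := (H.hI3zero w hw0).eventually_lt_const (show 0 < B w w / 2 by linarith)
  obtain ⟨t, ht, ht0⟩ := (h.and self_mem_nhdsWithin).exists
  have ht0 : 0 < t := ht0
  refine ⟨t, ht0, ?_⟩
  simp only [JJ, map_smul, _root_.smul_apply, smul_eq_mul]
  rw [div_lt_iff₀ (by positivity)] at ht
  nlinarith

theorem JV (H : AbsHyp B V I I' δ) {v : E} (hv : v ∈ V) : JJ B I v ≤ 0 := by
  by_cases h : v = 0
  · subst h; simp [JJ, H.hI0]
  · have := H.neg v hv h
    have := H.hI2 v h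
    unfold JJ; linarith

/-- orthogonal component. -/
theorem exists_perp (H : AbsHyp B V I I' δ) {u : E} (hu : u ∉ V) :
    ∃ v ∈ V, ∃ w ∈ Vᗮ, w ≠ 0 ∧ w = v + u := by
  have := H.fin
  refine ⟨-(V.starProjection u), V.neg_mem (Submodule.starProjection_apply_mem V u),
    u - V.starProjection u, Submodule.sub_starProjection_mem_orthogonal u, ?_, by abel⟩
  intro h
  apply hu
  rw [sub_eq_zero.1 h]
  exact Submodule.starProjection_apply_mem V u

theorem exists_NP (H : AbsHyp B V I I' δ) {u : E} (hu : u ∉ V) :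
    ∃ v ∈ V, ∃ t : ℝ, 0 < t ∧ v + t • u ∈ NPset B V I' ∧ 0 < JJ B I (v + t • u) := by
  have := H.fin
  have hc : Continuous fun x : V × ℝ => JJ B I ((x.1 : E) + x.2 • u) := by
    have := H.Jcont
    fun_prop
  let S : Set (V × ℝ) := {x | 0 ≤ x.2 ∧ 0 ≤ JJ B I ((x.1 : E) + x.2 • u)}
  have hS : IsCompact S := by
    apply IsSeqCompact.isCompact
    intro x hx
    obtain ⟨a, ha, φ, hφ, hl⟩ := H.coercive hu (fun _ => u) tendsto_const_nhds x
      (fun j => (hx j).1) (fun j => (hx j).2)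
    exact ⟨a, ⟨ha, ge_of_tendsto' ((hc.tendsto a).comp hl) fun j => (hx _).2⟩, φ, hφ, hl⟩
  obtain ⟨v1, hv1, w, hw, hw0, hwu⟩ := H.exists_perp hu
  obtain ⟨t1, ht1, hJ1⟩ := H.smallpos hw hw0
  have hx1 : ((⟨t1 • v1, V.smul_mem _ hv1⟩, t1) : V × ℝ) ∈ S := by
    refine ⟨ht1.le, ?_⟩
    simp only
    rw [← smul_add, ← hwu]
    exact hJ1.le
  obtain ⟨x, hxS, hmax⟩ := hS.exists_isMaxOn ⟨_, hx1⟩ hc.continuousOn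
  have hpos : 0 < JJ B I ((x.1 : E) + x.2 • u) := by
    refine lt_of_lt_of_le hJ1 ?_
    have := hmax hx1
    simp only [mem_setOf_eq] at this
    rwa [← smul_add, ← hwu] at this
  have hgmax : ∀ v ∈ V, ∀ t : ℝ, 0 ≤ t → JJ B I (v + t • u) ≤ JJ B I ((x.1 : E) + x.2 • u) := by
    intro v hv t ht
    by_cases h : 0 ≤ JJ B I (v + t • u)
    · exact hmax (show ((⟨v, hv⟩, t) : V × ℝ) ∈ S from ⟨ht, h⟩)
    · linarith
  have hx2 : 0 < x.2 := by
    rcases hxS.1.lt_or_eq with h | h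
    · exact h
    · rw [← h] at hpos
      simp only [zero_smul, add_zero] at hpos
      exact absurd (H.JV x.1.2) (not_le.2 hpos)
  refine ⟨x.1, x.1.2, x.2, hx2, ⟨?_, ?_⟩, hpos⟩
  · intro h
    apply hu
    have h2 := (Submodule.add_mem_iff_right V x.1.2).1 h
    exact (Submodule.smul_mem_iff V hx2.ne').1 h2
  · intro w hw
    obtain ⟨v', hv', z, hz, rfl⟩ := Submodule.mem_sup.1 hw
    obtain ⟨c, rfl⟩ := Submodule.mem_span_singleton.1 hz
    set X := (x.1 : E) + x.2 • u with hX
    set W := v' + c • X with hW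
    have hline : HasDerivAt (fun s : ℝ => X + s • W) W 0 := by
      simpa using ((hasDerivAt_id (0 : ℝ)).smul_const W).const_add X
    have hd : HasDerivAt (fun s : ℝ => JJ B I (X + s • W)) ((B X - I' X) W) 0 := by
      have hJ : HasFDerivAt (JJ B I) (B X - I' X) (X + (0 : ℝ) • W) := by
        simpa using H.hasFDerivJ X
      exact hJ.comp_hasDerivAt (0 : ℝ) hline
    have hloc : IsLocalMax (fun s : ℝ => JJ B I (X + s • W)) 0 := by
      have hev : ∀ᶠ s : ℝ in 𝓝 0, 0 < 1 + s * c := by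
        have : Continuous fun s : ℝ => 1 + s * c := by fun_prop
        exact (this.tendsto 0).eventually_const_lt (by simp)
      filter_upwards [hev] with s hs
      have e : X + s • W = ((1 + s * c) • (x.1 : E) + s • v') + ((1 + s * c) * x.2) • u := by
        rw [hW, hX]; module
      rw [e, zero_smul, add_zero]
      exact hgmax _ (V.add_mem (V.smul_mem _ x.1.2) (V.smul_mem _ hv')) _
        (mul_nonneg hs.le hx2.le)
    simpa using hloc.hasDerivAt_eq_zero hd

theorem JNP_pos (H : AbsHyp B V I I' δ) {u : E} (hu : u ∈ NPset B V I') : 0 < JJ B I u := by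
  obtain ⟨v, hv, t, ht, -, hp⟩ := H.exists_NP hu.1
  exact hp.trans_le (H.maxJ hu hv ht.le).1

theorem attained (H : AbsHyp B V I I' δ) (hne : (NPset B V I').Nonempty) :
    ∃ u ∈ NPset B V I', ∀ x ∈ NPset B V I', JJ B I u ≤ JJ B I x := by
  set c := sInf (JJ B I '' NPset B V I') with hcdef
  have hbdd : BddBelow (JJ B I '' NPset B V I') := ⟨0, by
    rintro _ ⟨u, hu, rfl⟩; exact (H.JNP_pos hu).le⟩
  obtain ⟨s, -, hs, hsm⟩ := exists_seq_tendsto_sInf (hne.image (JJ B I)) hbdd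
  choose us hus hJus using hsm
  have hw : ∀ j, ∃ w ∈ Vᗮ, ‖w‖ = 1 ∧ ∀ v ∈ V, ∀ t : ℝ, 0 ≤ t → JJ B I (v + t • w) ≤ s j := by
    intro j
    obtain ⟨v1, hv1, w, hw, hw0, hwu⟩ := H.exists_perp (hus j).1
    refine ⟨‖w‖⁻¹ • w, Submodule.smul_mem _ _ hw, norm_smul_inv_norm hw0, fun v hv t ht => ?_⟩
    rw [← hJus j]
    have e : v + t • ‖w‖⁻¹ • w = (v + (t * ‖w‖⁻¹) • v1) + (t * ‖w‖⁻¹) • us j := by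
      rw [smul_smul]
      nth_rewrite 2 [hwu]
      module
    rw [e]
    exact (H.maxJ (hus j) (V.add_mem hv (V.smul_mem _ hv1)) (by positivity)).1
  choose ws hwV hwn hwJ using hw
  obtain ⟨w, φ, hφ, hweak⟩ := weak_subseq H.sep ws 1 (fun j => (hwn j).le)
  have hsφ := hs.comp hφ.tendsto_atTop
  have hwVo : w ∈ Vᗮ := by
    rw [Submodule.mem_orthogonal]
    intro v hv
    have h1 := hweak (innerSL ℝ v)
    refine tendsto_nhds_unique h1 ?_
    refine (tendsto_const_nhds (x := (0 : ℝ))).congr fun j => ?_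
    exact ((Submodule.mem_orthogonal _ _).1 (hwV (φ j)) v hv).symm
  have hw0 : w ≠ 0 := by
    rintro rfl
    have hb : ∀ t : ℝ, 0 ≤ t → t ^ 2 * δ / 2 ≤ c := by
      intro t ht
      have h1 : Tendsto (fun j => I (t • ws (φ j))) atTop (𝓝 (I 0)) := by
        apply H.hI1
        intro f
        simpa using (hweak f).const_mul t
      rw [H.hI0] at h1
      have h2 := hsφ.add h1
      rw [add_zero] at h2
      refine ge_of_tendsto' h2 fun j => ?_
      have h3 := hwJ (φ j) 0 V.zero_mem t ht
      have h4 := H.pos _ (hwV (φ j))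
      rw [hwn] at h4
      simp only [JJ, zero_add, map_smul, _root_.smul_apply, smul_eq_mul] at h3
      simp only [Function.comp]
      nlinarith [mul_le_mul_of_nonneg_left h4 (sq_nonneg t)]
    have hc0 : 0 ≤ c := by simpa using hb 0 le_rfl
    have := hb (1 + 2 * c / δ) (by have := H.dpos; positivity)
    have hd := H.dpos
    have h5 : (1 + 2 * c / δ) ^ 2 * δ / 2 = δ / 2 + 2 * c + 2 * c ^ 2 / δ := by
      field_simp; ring
    have : 0 ≤ 2 * c ^ 2 / δ := by positivity
    linarith
  have hwV' : w ∉ V := fun h => hw0 (by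
    have := (Submodule.mem_orthogonal _ _).1 hwVo w h
    simpa using this)
  obtain ⟨v, hv, t, ht, hNP, -⟩ := H.exists_NP hwV'
  refine ⟨v + t • w, hNP, ?_⟩
  have hle : JJ B I (v + t • w) ≤ c := by
    set X := v + t • w with hX
    have hwk : ∀ f : E →L[ℝ] ℝ, Tendsto (fun j => f (v + t • ws (φ j))) atTop (𝓝 (f X)) := by
      intro f
      simpa [hX] using ((hweak f).const_mul t).const_add (f v)
    have h1 := H.hI1 _ _ hwk
    have h2 := hwk (B X)
    have h3 : Tendsto (fun j => B X (v + t • ws (φ j)) - B X X / 2 - I (v + t • ws (φ j)))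
        atTop (𝓝 (B X X - B X X / 2 - I X)) := (h2.sub_const _).sub h1
    have h4 : JJ B I X = B X X - B X X / 2 - I X := by unfold JJ; ring
    rw [h4]
    refine le_of_tendsto_of_tendsto' h3 hsφ fun j => ?_
    refine le_trans ?_ (hwJ (φ j) v hv t ht.le)
    set Y := v + t • ws (φ j) with hY
    have h5 : Y - X ∈ Vᗮ := by
      have : Y - X = t • (ws (φ j) - w) := by rw [hX, hY]; module
      rw [this]
      exact Submodule.smul_mem _ _ (Submodule.sub_mem _ (hwV _) hwVo)
    have h6 : 0 ≤ B (Y - X) (Y - X) :=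
      le_trans (mul_nonneg H.dpos.le (sq_nonneg _)) (H.pos _ h5)
    simp only [map_sub, _root_.sub_apply, H.symm Y X] at h6
    unfold JJ
    linarith
  intro x hx
  exact hle.trans (csInf_le hbdd ⟨x, hx, rfl⟩)

theorem crit (H : AbsHyp B V I I' δ) {u : E} (hu : u ∈ NPset B V I')
    (hmin : ∀ x ∈ NPset B V I', JJ B I u ≤ JJ B I x) (p : E) : B u p - I' u p = 0 := by
  have := H.fin
  -- it suffices to exclude negative values
  suffices key : ∀ p : E, ¬ (B u p - I' u p < 0) by
    have h1 := key p
    have h2 := key (-p)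
    simp only [map_neg] at h2
    linarith
  intro p hp
  have hcontD : Continuous fun x : E => B x p - I' x p := by
    have := H.hIc
    fun_prop
  obtain ⟨r, hr, hball⟩ := Metric.eventually_nhds_iff_ball.1
    ((hcontD.tendsto u).eventually_lt_const hp)
  have hVc : IsClosed (V : Set E) := V.closed_of_finiteDimensional
  let us0 : ℕ → E := fun j => u + (1 / ((j : ℝ) + 1)) • p
  have hus0 : Tendsto us0 atTop (𝓝 u) := by
    have h := (tendsto_one_div_add_atTop_nhds_zero_nat (𝕜 := ℝ)).smul_const p
    simpa [us0] using h.const_add u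
  have hev : ∀ᶠ j in atTop, us0 j ∉ V :=
    hus0.eventually (hVc.isOpen_compl.mem_nhds hu.1)
  obtain ⟨N, hN⟩ := eventually_atTop.1 hev
  let ε : ℕ → ℝ := fun j => 1 / (((j + N : ℕ) : ℝ) + 1)
  have hε : Tendsto ε atTop (𝓝 0) :=
    (tendsto_one_div_add_atTop_nhds_zero_nat (𝕜 := ℝ)).comp (tendsto_add_atTop_nat N)
  have hεpos : ∀ j, 0 < ε j := fun j => by simp only [ε]; positivity
  let us : ℕ → E := fun j => u + ε j • p
  have hus : Tendsto us atTop (𝓝 u) := hus0.comp (tendsto_add_atTop_nat N)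
  have husV : ∀ j, us j ∉ V := fun j => hN (j + N) (Nat.le_add_left _ _)
  have hex := fun j => H.exists_NP (husV j)
  choose vs hvs ts hts hNP hpos using hex
  obtain ⟨a, ha, φ, hφ, hl⟩ := H.coercive hu.1 us hus (fun j => ((⟨vs j, hvs j⟩ : V), ts j))
    (fun j => (hts j).le) (fun j => (hpos j).le)
  have hlv : Tendsto (fun j => vs (φ j)) atTop (𝓝 (a.1 : E)) :=
    ((continuous_subtype_val.comp continuous_fst).tendsto a).comp hl
  have hlt : Tendsto (fun j => ts (φ j)) atTop (𝓝 a.2) := (continuous_snd.tendsto a).comp hl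
  have hlu : Tendsto (fun j => us (φ j)) atTop (𝓝 u) := hus.comp hφ.tendsto_atTop
  have hlx : Tendsto (fun j => vs (φ j) + ts (φ j) • us (φ j)) atTop (𝓝 ((a.1 : E) + a.2 • u)) :=
    hlv.add (hlt.smul hlu)
  have hly : Tendsto (fun j => vs (φ j) + ts (φ j) • u) atTop (𝓝 ((a.1 : E) + a.2 • u)) :=
    hlv.add (hlt.smul_const u)
  have hge : JJ B I u ≤ JJ B I ((a.1 : E) + a.2 • u) :=
    ge_of_tendsto' ((H.Jcont.tendsto _).comp hlx) fun j => hmin _ (hNP _)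
  obtain ⟨ha1, ha2⟩ := (H.maxJ hu a.1.2 ha).2 hge
  rw [ha1, ha2, one_smul, zero_add] at hlx hly
  obtain ⟨j, hjx, hjy⟩ := ((hlx.eventually (Metric.ball_mem_nhds u hr)).and
    (hly.eventually (Metric.ball_mem_nhds u hr))).exists
  set y := vs (φ j) + ts (φ j) • u with hy
  set σ := ts (φ j) * ε (φ j) with hσ
  have hσ0 : 0 < σ := mul_pos (hts _) (hεpos _)
  have hxy : vs (φ j) + ts (φ j) • us (φ j) = y + σ • p := by
    simp only [hy, hσ, us]; module
  have hx1 := hmin _ (hNP (φ j))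
  rw [hxy] at hjx hx1
  have hy1 : JJ B I y ≤ JJ B I u := (H.maxJ hu (hvs _) (hts _).le).1
  have hd : ∀ s : ℝ, HasDerivAt (fun s : ℝ => JJ B I (y + s • p))
      ((B (y + s • p) - I' (y + s • p)) p) s := by
    intro s
    have hline : HasDerivAt (fun s : ℝ => y + s • p) p s := by
      simpa using ((hasDerivAt_id s).smul_const p).const_add y
    exact (H.hasFDerivJ (y + s • p)).comp_hasDerivAt s hline
  obtain ⟨s, hs, hsl⟩ := exists_hasDerivAt_eq_slope (fun s : ℝ => JJ B I (y + s • p)) _ hσ0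
    (fun s _ => (hd s).continuousAt.continuousWithinAt) (fun s _ => hd s)
  have hsb : y + s • p ∈ Metric.ball u r := by
    have hconv := convex_ball u r
    have := hconv.add_smul_mem hjy hjx (t := s / σ)
      ⟨div_nonneg hs.1.le hσ0.le, (div_le_one hσ0).2 hs.2.le⟩
    rwa [smul_smul, div_mul_cancel₀ _ hσ0.ne'] at this
  have h7 := hball _ hsb
  simp only [_root_.sub_apply, zero_smul, add_zero, sub_zero] at hsl
  rw [hsl, div_lt_iff₀ hσ0] at h7
  linarith

theorem crit_mem (H : AbsHyp B V I I' δ) {u : E} (hu : u ≠ 0)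
    (hc : ∀ v, B u v - I' u v = 0) : u ∈ NPset B V I' := by
  refine ⟨fun h => ?_, fun w _ => hc w⟩
  have h1 := H.neg u h hu
  have h2 := H.hI4strict u hu (-1) le_rfl (by norm_num)
  have h3 := H.hI2 u hu
  have h4 := hc u
  simp only [map_smul, smul_eq_mul] at h2
  norm_num [H.hI0] at h2
  linarith

end AbsHyp

section concrete

variable {lam : ℕ → ℝ} {ζ : ℕ → E}

theorem exists_basis (hlam_nonneg : ∀ k, 0 ≤ lam k)
    (hON : ∀ j k, ⟪ζ j, ζ k⟫_ℝ = if j = k then 1 + lam k else 0)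
    (hdense : (Submodule.span ℝ (Set.range ζ)).topologicalClosure = ⊤) :
    ∃ b : HilbertBasis ℕ ℝ E, ∀ k, b k = (√(1 + lam k))⁻¹ • ζ k := by
  have hp : ∀ k, 0 < 1 + lam k := fun k => by have := hlam_nonneg k; linarith
  let e : ℕ → E := fun k => (√(1 + lam k))⁻¹ • ζ k
  have hs : ∀ k, √(1 + lam k) ≠ 0 := fun k => (Real.sqrt_pos.2 (hp k)).ne'
  have he : Orthonormal ℝ e := by
    rw [orthonormal_iff_ite]
    intro i j
    simp only [e, inner_smul_left, inner_smul_right, hON, RCLike.conj_to_real]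
    by_cases h : i = j
    · subst h
      have := Real.mul_self_sqrt (hp i).le
      simp only [if_true]
      nth_rewrite 3 [← this]
      have := hs i
      field_simp
    · simp [h]
  have hsp : ⊤ ≤ (Submodule.span ℝ (Set.range e)).topologicalClosure := by
    rw [← hdense]
    apply Submodule.topologicalClosure_mono
    rw [Submodule.span_le]
    rintro _ ⟨k, rfl⟩
    have : ζ k = √(1 + lam k) • e k := by
      simp only [e]; rw [smul_inv_smul₀ (hs k)]
    rw [this]
    exact Submodule.smul_mem _ _ (Submodule.subset_span ⟨k, rfl⟩)
  exact ⟨HilbertBasis.mk he hsp, fun k => by rw [HilbertBasis.coe_mk]⟩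

theorem sep_of_dense
    (hdense : (Submodule.span ℝ (Set.range ζ)).topologicalClosure = ⊤) :
    TopologicalSpace.SeparableSpace E := by
  rw [← TopologicalSpace.isSeparable_univ_iff]
  have h : TopologicalSpace.IsSeparable (Submodule.span ℝ (Set.range ζ) : Set E) :=
    (Set.countable_range ζ).isSeparable.span
  have h2 := h.closure
  rwa [← Submodule.topologicalClosure_coe, hdense] at h2

theorem abs_mu_le (hlam_nonneg : ∀ k, 0 ≤ lam k) {lambda : ℝ} (hl : 0 < lambda) (k : ℕ) :
    |(lam k - lambda) / (1 + lam k)| ≤ 1 + lambda := by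
  have := hlam_nonneg k
  rw [abs_div, abs_of_pos (show 0 < 1 + lam k by linarith), div_le_iff₀ (by linarith), abs_le]
  constructor <;> nlinarith

theorem qForm_eq (hlam_nonneg : ∀ k, 0 ≤ lam k) (b : HilbertBasis ℕ ℝ E)
    (hb : ∀ k, b k = (√(1 + lam k))⁻¹ • ζ k) (lambda : ℝ) (u v : E) :
    qForm lam ζ lambda u v =
      ∑' k, (lam k - lambda) / (1 + lam k) * (⟪u, b k⟫_ℝ * ⟪b k, v⟫_ℝ) := by
  unfold qForm coefH
  refine tsum_congr fun k => ?_
  have hp : 0 < 1 + lam k := by have := hlam_nonneg k; linarith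
  have h1 : (√(1 + lam k))⁻¹ * (√(1 + lam k))⁻¹ = (1 + lam k)⁻¹ := by
    rw [← mul_inv, Real.mul_self_sqrt hp.le]
  rw [real_inner_comm v (b k), hb, inner_smul_right, inner_smul_right]
  have : (lam k - lambda) / (1 + lam k) *
      ((√(1 + lam k))⁻¹ * ⟪u, ζ k⟫_ℝ * ((√(1 + lam k))⁻¹ * ⟪v, ζ k⟫_ℝ)) =
      (lam k - lambda) / (1 + lam k) *
      (((√(1 + lam k))⁻¹ * (√(1 + lam k))⁻¹) * (⟪u, ζ k⟫_ℝ * ⟪v, ζ k⟫_ℝ)) := by ring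
  rw [this, h1]
  field_simp

theorem summ_q (hlam_nonneg : ∀ k, 0 ≤ lam k) (b : HilbertBasis ℕ ℝ E) {lambda : ℝ}
    (hl : 0 < lambda) (u v : E) :
    Summable fun k => (lam k - lambda) / (1 + lam k) * (⟪u, b k⟫_ℝ * ⟪b k, v⟫_ℝ) := by
  refine Summable.of_norm_bounded
    (g := fun k => (1 + lambda) * |⟪u, b k⟫_ℝ * ⟪b k, v⟫_ℝ|)
    ((b.summable_inner_mul_inner u v).abs.mul_left _) fun k => ?_
  rw [norm_mul, Real.norm_eq_abs, Real.norm_eq_abs]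
  exact mul_le_mul_of_nonneg_right (abs_mu_le hlam_nonneg hl k) (abs_nonneg _)

theorem bound_q (hlam_nonneg : ∀ k, 0 ≤ lam k) (b : HilbertBasis ℕ ℝ E) {lambda : ℝ}
    (hl : 0 < lambda) (u v : E) :
    ‖∑' k, (lam k - lambda) / (1 + lam k) * (⟪u, b k⟫_ℝ * ⟪b k, v⟫_ℝ)‖ ≤
      (1 + lambda) * ‖u‖ * ‖v‖ := by
  have hs := (summ_q hlam_nonneg b hl u v).norm
  refine (norm_tsum_le_tsum_norm hs).trans ?_
  refine hs.tsum_le_of_sum_le fun s => ?_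
  have h1 : ∀ x : E, √(∑ k ∈ s, |⟪b k, x⟫_ℝ| ^ 2) ≤ ‖x‖ := fun x => by
    rw [Real.sqrt_le_left (norm_nonneg _)]
    simpa using b.orthonormal.sum_inner_products_le (s := s) x
  calc ∑ k ∈ s, ‖(lam k - lambda) / (1 + lam k) * (⟪u, b k⟫_ℝ * ⟪b k, v⟫_ℝ)‖
      ≤ ∑ k ∈ s, (1 + lambda) * (|⟪b k, u⟫_ℝ| * |⟪b k, v⟫_ℝ|) := by
        refine Finset.sum_le_sum fun k _ => ?_
        rw [norm_mul, norm_mul, Real.norm_eq_abs, Real.norm_eq_abs, Real.norm_eq_abs,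
          real_inner_comm]
        exact mul_le_mul_of_nonneg_right (abs_mu_le hlam_nonneg hl k) (by positivity)
    _ = (1 + lambda) * ∑ k ∈ s, |⟪b k, u⟫_ℝ| * |⟪b k, v⟫_ℝ| := by rw [Finset.mul_sum]
    _ ≤ (1 + lambda) * (√(∑ k ∈ s, |⟪b k, u⟫_ℝ| ^ 2) * √(∑ k ∈ s, |⟪b k, v⟫_ℝ| ^ 2)) := by
        gcongr
        exact Real.sum_mul_le_sqrt_mul_sqrt s _ _
    _ ≤ (1 + lambda) * (‖u‖ * ‖v‖) := by
        gcongr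
        · exact h1 u
        · exact h1 v
    _ = _ := by ring

theorem exists_B (hlam_nonneg : ∀ k, 0 ≤ lam k) (b : HilbertBasis ℕ ℝ E)
    (hb : ∀ k, b k = (√(1 + lam k))⁻¹ • ζ k) {lambda : ℝ} (hl : 0 < lambda) :
    ∃ B : E →L[ℝ] E →L[ℝ] ℝ, ∀ u v, qForm lam ζ lambda u v = B u v := by
  have hS := summ_q hlam_nonneg b hl
  let L : E →ₗ[ℝ] E →ₗ[ℝ] ℝ := LinearMap.mk₂ ℝ
    (fun u v => ∑' k, (lam k - lambda) / (1 + lam k) * (⟪u, b k⟫_ℝ * ⟪b k, v⟫_ℝ))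
    (fun u u' v => by
      rw [← (hS u v).tsum_add (hS u' v)]
      refine tsum_congr fun k => ?_
      rw [inner_add_left]; ring)
    (fun c u v => by
      rw [smul_eq_mul, ← tsum_mul_left]
      refine tsum_congr fun k => ?_
      rw [real_inner_smul_left]; ring)
    (fun u v v' => by
      rw [← (hS u v).tsum_add (hS u v')]
      refine tsum_congr fun k => ?_
      rw [inner_add_right]; ring)
    (fun c u v => by
      rw [smul_eq_mul, ← tsum_mul_left]
      refine tsum_congr fun k => ?_
      rw [real_inner_smul_right]; ring)
  have hL : ∀ u v, L u v =
      ∑' k, (lam k - lambda) / (1 + lam k) * (⟪u, b k⟫_ℝ * ⟪b k, v⟫_ℝ) := fun u v => rfl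
  have hbd : ∀ u v, ‖L u v‖ ≤ (1 + lambda) * ‖u‖ * ‖v‖ := fun u v => by
    rw [hL]
    exact bound_q hlam_nonneg b hl u v
  refine ⟨L.mkContinuous₂ (1 + lambda) hbd, fun u v => ?_⟩
  rw [qForm_eq hlam_nonneg b hb, LinearMap.mkContinuous₂_apply, hL]

theorem norm_sq_tsum (b : HilbertBasis ℕ ℝ E) (u : E) :
    HasSum (fun k => ⟪u, b k⟫_ℝ * ⟪b k, u⟫_ℝ) (‖u‖ ^ 2) := by
  rw [← real_inner_self_eq_norm_sq]
  exact b.hasSum_inner_mul_inner u u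

theorem Esub_inner (hON : ∀ j k, ⟪ζ j, ζ k⟫_ℝ = if j = k then 1 + lam k else 0)
    {n k : ℕ} (hk : n < k) {v : E} (hv : v ∈ Esub ζ n) : ⟪v, ζ k⟫_ℝ = 0 := by
  unfold Esub at hv
  induction hv using Submodule.span_induction with
  | mem x hx =>
    obtain ⟨j, hj, rfl⟩ := hx
    have hj : j ≤ n := hj
    rw [hON, if_neg (by omega)]
  | zero => simp
  | add x y _ _ hx hy => rw [inner_add_left, hx, hy, add_zero]
  | smul c x _ hx => rw [real_inner_smul_left, hx, mul_zero]

end concrete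

/-- The Nehari–Pankov set is nonempty, contains every nonzero critical point
of `J_λ`; `c_λ = inf_{NP_λ} J_λ = inf_{u ∉ E_n} sup_{F_n(u)⁺} J_λ > 0`, the infimum over `NP_λ`
is attained, and every minimizer of `J_λ` on `NP_λ` is a critical point of `J_λ`. -/
theorem nehari_pankov_ground_states {E : Type*} [NormedAddCommGroup E]
    [InnerProductSpace ℝ E] [CompleteSpace E]
    (lam : ℕ → ℝ) (ζ : ℕ → E)
    (hlam_mono : Monotone lam) (hlam_nonneg : ∀ k, 0 ≤ lam k)
    (hlam_top : Tendsto lam atTop atTop)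
    (hON : ∀ j k, ⟪ζ j, ζ k⟫_ℝ = if j = k then 1 + lam k else 0)
    (hdense : (Submodule.span ℝ (Set.range ζ)).topologicalClosure = ⊤)
    (I : E → ℝ) (I' : E → E →L[ℝ] ℝ)
    (hIderiv : ∀ u, HasFDerivAt I (I' u) u) (hIderiv_cont : Continuous I')
    (hI1 : ∀ (u : ℕ → E) (a : E),
      (∀ φ : E →L[ℝ] ℝ, Tendsto (fun j => φ (u j)) atTop (𝓝 (φ a))) →
      Tendsto (fun j => I (u j)) atTop (𝓝 (I a)))
    (hI2 : I 0 = 0 ∧ ∀ u : E, u ≠ 0 → 0 < I u)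
    (hI3mono : ∀ u : E, u ≠ 0 → MonotoneOn (fun t : ℝ => I (t • u) / t ^ 2) (Ioi 0))
    (hI3zero : ∀ u : E, u ≠ 0 → Tendsto (fun t : ℝ => I (t • u) / t ^ 2) (𝓝[>] 0) (𝓝 0))
    (hI3top : ∀ u : E, u ≠ 0 → Tendsto (fun t : ℝ => I (t • u) / t ^ 2) atTop atTop)
    (hI4 : ∀ u : E, u ≠ 0 → ∀ v : E, ∀ s : ℝ, -1 ≤ s →
      I u - I ((1 + s) • u + v) + I' u ((s * (s / 2 + 1)) • u + (1 + s) • v) ≤ 0)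
    (hI4strict : ∀ u : E, u ≠ 0 → ∀ s : ℝ, -1 ≤ s → s ≠ 0 →
      I u - I ((1 + s) • u) + I' u ((s * (s / 2 + 1)) • u) < 0)
    (n : ℕ)
    (lambda : ℝ) (hlambda : lambda ∈ Ioo (lam n) (lam (n + 1))) :
    (NehariPankov lam ζ I' n lambda).Nonempty ∧
    (∀ u : E, u ≠ 0 → (∀ v : E, Jderiv lam ζ I' lambda u v = 0) →
      u ∈ NehariPankov lam ζ I' n lambda) ∧
    clevel lam ζ I I' n lambda =
      sInf ((fun u => sSup (Jfun lam ζ I lambda '' FsubPlus ζ n u)) ''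
        {u : E | u ∉ Esub ζ n}) ∧
    0 < clevel lam ζ I I' n lambda ∧
    (∃ u ∈ NehariPankov lam ζ I' n lambda,
      Jfun lam ζ I lambda u = clevel lam ζ I I' n lambda) ∧
    (∀ u ∈ NehariPankov lam ζ I' n lambda,
      Jfun lam ζ I lambda u = clevel lam ζ I I' n lambda →
      ∀ v : E, Jderiv lam ζ I' lambda u v = 0) := by
  have hln := hlam_nonneg n
  have hl : 0 < lambda := lt_of_le_of_lt hln hlambda.1
  have hp : ∀ k, 0 < 1 + lam k := fun k => by have := hlam_nonneg k; linarith
  obtain ⟨b, hb⟩ := exists_basis hlam_nonneg hON hdense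
  obtain ⟨B, hB⟩ := exists_B hlam_nonneg b hb hl
  have hBq : ∀ u v, B u v =
      ∑' k, (lam k - lambda) / (1 + lam k) * (⟪u, b k⟫_ℝ * ⟪b k, v⟫_ℝ) := fun u v => by
    rw [← hB, qForm_eq hlam_nonneg b hb]
  have hS := summ_q hlam_nonneg b hl
  have H : AbsHyp B (Esub ζ n) I I' ((lam (n + 1) - lambda) / (1 + lam (n + 1))) :=
    { symm := fun u v => by
        rw [← hB, ← hB]
        unfold qForm
        refine tsum_congr fun k => ?_
        ring
      neg := by
        intro v hv hv0
        have h1 : B v v ≤ (lam n - lambda) / (1 + lam n) * ‖v‖ ^ 2 := by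
          rw [hBq]
          refine hasSum_le (fun k => ?_) (hS v v).hasSum ((norm_sq_tsum b v).mul_left _)
          rw [real_inner_comm v (b k)]
          by_cases hk : k ≤ n
          · refine mul_le_mul_of_nonneg_right ?_ (mul_self_nonneg _)
            rw [div_le_div_iff₀ (hp k) (hp n)]
            nlinarith [hlam_mono hk]
          · rw [hb, real_inner_smul_right, Esub_inner hON (not_le.1 hk) hv]
            simp
        refine lt_of_le_of_lt h1 (mul_neg_of_neg_of_pos ?_ (pow_pos (norm_pos_iff.2 hv0) 2))
        exact div_neg_of_neg_of_pos (sub_neg.2 hlambda.1) (hp n)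
      dpos := div_pos (sub_pos.2 hlambda.2) (hp _)
      pos := by
        intro w hw
        rw [hBq]
        refine hasSum_le (fun k => ?_) ((norm_sq_tsum b w).mul_left _) (hS w w).hasSum
        rw [real_inner_comm w (b k)]
        by_cases hk : k ≤ n
        · have h0 : ⟪w, ζ k⟫_ℝ = 0 := by
            rw [real_inner_comm]
            exact (Submodule.mem_orthogonal _ _).1 hw _ (Submodule.subset_span ⟨k, hk, rfl⟩)
          rw [hb, real_inner_smul_right, h0]
          simp
        · refine mul_le_mul_of_nonneg_right ?_ (mul_self_nonneg _)
          rw [div_le_div_iff₀ (hp _) (hp k)]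
          nlinarith [hlam_mono (show n + 1 ≤ k by omega)]
      fin := FiniteDimensional.span_of_finite ℝ ((Set.finite_Iic n).image ζ)
      sep := sep_of_dense hdense
      hIderiv := hIderiv
      hIc := hIderiv_cont
      hI1 := hI1
      hI0 := hI2.1
      hI2 := hI2.2
      hI3mono := hI3mono
      hI3zero := hI3zero
      hI3top := hI3top
      hI4 := hI4
      hI4strict := hI4strict }
  have hJ : Jfun lam ζ I lambda = JJ B I := by
    funext u
    simp only [Jfun, JJ, hB]
  have hJd : ∀ u w, Jderiv lam ζ I' lambda u w = B u w - I' u w := fun u w => by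
    simp only [Jderiv, hB]
  have hNP : NehariPankov lam ζ I' n lambda = NPset B (Esub ζ n) I' := by
    simp only [NehariPankov, NPset, hJd, Fsub]
  have hne : (NPset B (Esub ζ n) I').Nonempty := by
    have hz : ζ (n + 1) ∉ Esub ζ n := by
      intro h
      have h1 := Esub_inner hON (Nat.lt_succ_self n) h
      rw [hON, if_pos rfl] at h1
      exact (hp (n + 1)).ne' h1
    obtain ⟨v, -, t, -, h, -⟩ := H.exists_NP hz
    exact ⟨_, h⟩
  obtain ⟨u₀, hu₀, hmin⟩ := H.attained hne
  have hleast : IsLeast (JJ B I '' NPset B (Esub ζ n) I') (JJ B I u₀) :=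
    ⟨⟨u₀, hu₀, rfl⟩, by rintro _ ⟨x, hx, rfl⟩; exact hmin x hx⟩
  have hc : clevel lam ζ I I' n lambda = JJ B I u₀ := by
    unfold clevel
    rw [hJ, hNP]
    exact hleast.csInf_eq
  refine ⟨hNP ▸ hne, ?_, ?_, ?_, ?_, ?_⟩
  · intro u hu hcr
    rw [hNP]
    exact H.crit_mem hu fun v => by rw [← hJd]; exact hcr v
  · unfold clevel
    congr 1
    rw [hJ, hNP]
    ext c
    constructor
    · rintro ⟨u, hu, rfl⟩
      refine ⟨u, hu.1, ?_⟩
      refine IsGreatest.csSup_eq ⟨⟨u, ⟨0, Submodule.zero_mem _, 1, one_pos, by simp⟩, rfl⟩, ?_⟩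
      rintro _ ⟨_, ⟨v, hv, t, ht, rfl⟩, rfl⟩
      exact (H.maxJ hu hv ht.le).1
    · rintro ⟨u, hu, rfl⟩
      obtain ⟨v, hv, t, ht, hx, -⟩ := H.exists_NP hu
      refine ⟨v + t • u, hx, ?_⟩
      symm
      refine IsGreatest.csSup_eq ⟨⟨v + t • u, ⟨v, hv, t, ht, rfl⟩, rfl⟩, ?_⟩
      rintro _ ⟨_, ⟨v', hv', t', ht', rfl⟩, rfl⟩
      have e : v' + t' • u = (v' - (t' / t) • v) + (t' / t) • (v + t • u) := by
        rw [smul_add, smul_smul, div_mul_cancel₀ _ ht.ne']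
        abel
      rw [e]
      exact (H.maxJ hx (Submodule.sub_mem _ hv' (Submodule.smul_mem _ _ hv)) (by positivity)).1
  · rw [hc]
    exact H.JNP_pos hu₀
  · exact ⟨u₀, hNP ▸ hu₀, by rw [hc, hJ]⟩
  · intro u hu hue v
    rw [hNP] at hu
    rw [hJd]
    refine H.crit hu (fun x hx => ?_) v
    rw [hJ, hc] at hue
    rw [hue]
    exact hmin x hx
end

section
/- Under assumptions (I1)–(I4), let M_n := { ‖u‖_H²/2 : u ∈ Q_λ for some λ ∈ (λ_n, λ_{n+1}) }. Then either M_n = (0, +∞), or there exists a real number g_n > 0 such that (0, g_n) ⊆ M_n ⊆ (0, g_n]. -/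
open Filter Topology Set
open scoped InnerProductSpace

/- Abstract setting: `E = D(A^{1/2})` is a real Hilbert space in which the rescaled
eigenfunctions `ζ_k / √(1+λ_k)` form a Hilbert basis (encoded by `hON` and `hdense` below);
the `H`-inner product of `u, v ∈ E` is recovered as `∑ₖ ⟨u,ζ_k⟩_H ⟨v,ζ_k⟩_H`, where
`⟨u,ζ_k⟩_H = ⟨u,ζ_k⟩_E / (1+λ_k)`. -/

variable {E : Type*} [NormedAddCommGroup E] [InnerProductSpace ℝ E] [CompleteSpace E]

namespace MassProof

set_option linter.unusedSectionVars false
set_option linter.unusedVariables false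

/-- The abstract setting: `B` is the `H`-inner product, `V = E_n`. -/
structure Setup (B : E →L[ℝ] E →L[ℝ] ℝ) (V : Submodule ℝ E) (z : E) (L0 L1 : ℝ)
    (I : E → ℝ) (I' : E → E →L[ℝ] ℝ) : Prop where
  L0nn : 0 ≤ L0
  L01 : L0 < L1
  fin : FiniteDimensional ℝ V
  symm : ∀ x y, B x y = B y x
  pos : ∀ x, x ≠ 0 → 0 < B x x
  onV : ∀ v ∈ V, ‖v‖ ^ 2 ≤ (1 + L0) * B v v
  onP : ∀ b ∈ Vᗮ, (1 + L1) * B b b ≤ ‖b‖ ^ 2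
  zV : z ∉ V
  onz : ∀ w ∈ V ⊔ Submodule.span ℝ {z}, ‖w‖ ^ 2 ≤ (1 + L1) * B w w
  wk : ∀ b : ℕ → E, (∀ j, ‖b j‖ ≤ 1) → ∃ (a : E) (φ : ℕ → ℕ), StrictMono φ ∧
    ∀ f : E →L[ℝ] ℝ, Tendsto (fun j => f (b (φ j))) atTop (𝓝 (f a))
  der : ∀ u, HasFDerivAt I (I' u) u
  I1 : ∀ (u : ℕ → E) (a : E),
      (∀ φ : E →L[ℝ] ℝ, Tendsto (fun j => φ (u j)) atTop (𝓝 (φ a))) →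
      Tendsto (fun j => I (u j)) atTop (𝓝 (I a))
  I0 : I 0 = 0
  Ipos : ∀ u : E, u ≠ 0 → 0 < I u
  I3mono : ∀ u : E, u ≠ 0 → MonotoneOn (fun t : ℝ => I (t • u) / t ^ 2) (Ioi 0)
  I3zero : ∀ u : E, u ≠ 0 → Tendsto (fun t : ℝ => I (t • u) / t ^ 2) (𝓝[>] 0) (𝓝 0)
  I3top : ∀ u : E, u ≠ 0 → Tendsto (fun t : ℝ => I (t • u) / t ^ 2) atTop atTop
  I4 : ∀ u : E, u ≠ 0 → ∀ v : E, ∀ s : ℝ, -1 ≤ s →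
      I u - I ((1 + s) • u + v) + I' u ((s * (s / 2 + 1)) • u + (1 + s) • v) ≤ 0
  I4s : ∀ u : E, u ≠ 0 → ∀ s : ℝ, -1 ≤ s → s ≠ 0 →
      I u - I ((1 + s) • u) + I' u ((s * (s / 2 + 1)) • u) < 0

/-- The quadratic form. -/
noncomputable def qq (B : E →L[ℝ] E →L[ℝ] ℝ) (l : ℝ) (u v : E) : ℝ := ⟪u, v⟫_ℝ - (1 + l) * B u v

/-- The action. -/
noncomputable def JJ (B : E →L[ℝ] E →L[ℝ] ℝ) (I : E → ℝ) (l : ℝ) (u : E) : ℝ :=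
  qq B l u u / 2 - I u

/-- The Nehari-Pankov set. -/
def NP (B : E →L[ℝ] E →L[ℝ] ℝ) (V : Submodule ℝ E) (I' : E → E →L[ℝ] ℝ) (l : ℝ) : Set E :=
  {u | u ∉ V ∧ ∀ w ∈ V ⊔ Submodule.span ℝ {u}, qq B l u w - I' u w = 0}

/-- The level. -/
noncomputable def cc (B : E →L[ℝ] E →L[ℝ] ℝ) (V : Submodule ℝ E) (I : E → ℝ)
    (I' : E → E →L[ℝ] ℝ) (l : ℝ) : ℝ := sInf (JJ B I l '' NP B V I' l)

variable {B : E →L[ℝ] E →L[ℝ] ℝ} {V : Submodule ℝ E} {z : E} {L0 L1 : ℝ}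
  {I : E → ℝ} {I' : E → E →L[ℝ] ℝ}

lemma qq_self (l : ℝ) (u : E) : qq B l u u = ‖u‖ ^ 2 - (1 + l) * B u u := by
  rw [qq, real_inner_self_eq_norm_sq]

lemma Setup.Icont (S : Setup B V z L0 L1 I I') : Continuous I :=
  continuous_iff_continuousAt.2 fun u => (S.der u).continuousAt

lemma Setup.Inn (S : Setup B V z L0 L1 I I') (u : E) : 0 ≤ I u := by
  by_cases h : u = 0
  · rw [h, S.I0]
  · exact (S.Ipos u h).le

lemma Setup.Bnn (S : Setup B V z L0 L1 I I') (u : E) : 0 ≤ B u u := by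
  by_cases h : u = 0
  · simp [h]
  · exact (S.pos u h).le

lemma qcont : Continuous fun p : ℝ × E × E => qq B p.1 p.2.1 p.2.2 := by
  unfold qq
  fun_prop

lemma Setup.Jcont (S : Setup B V z L0 L1 I I') : Continuous fun p : ℝ × E => JJ B I p.1 p.2 := by
  unfold JJ
  have := S.Icont
  have h2 : Continuous fun p : ℝ × E => qq B p.1 p.2 p.2 :=
    qcont.comp (continuous_fst.prodMk (continuous_snd.prodMk continuous_snd))
  fun_prop

lemma JJ_change (l l' : ℝ) (u : E) : JJ B I l u = JJ B I l' u - (l - l') * (B u u / 2) := by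
  simp only [JJ, qq_self]; ring

lemma Setup.qexp (S : Setup B V z L0 L1 I I') (l : ℝ) (u v : E) (t : ℝ) :
    qq B l (t • u + v) (t • u + v) =
      t ^ 2 * qq B l u u + 2 * t * qq B l u v + qq B l v v := by
  simp only [qq, map_add, map_smul, add_apply, smul_apply,
    inner_add_left, inner_add_right, inner_smul_left, inner_smul_right, S.symm v u,
    real_inner_comm u v, smul_eq_mul]
  simp
  ring

lemma Setup.qV (S : Setup B V z L0 L1 I I') {l : ℝ} (hl : L0 < l) {v : E} (hv : v ∈ V)
    (h0 : v ≠ 0) : qq B l v v < 0 := by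
  rw [qq_self]
  have := S.onV v hv
  have := S.pos v h0
  nlinarith

lemma Setup.qV' (S : Setup B V z L0 L1 I I') {l : ℝ} (hl : L0 < l) {v : E} (hv : v ∈ V) :
    qq B l v v ≤ 0 := by
  by_cases h0 : v = 0
  · simp [h0, qq]
  · exact (S.qV hl hv h0).le

lemma Setup.max_aux (S : Setup B V z L0 L1 I I') {l : ℝ} {u : E}
    (hu : u ∈ NP B V I' l) {v : E} (hv : v ∈ V) (t : ℝ) :
    JJ B I l (t • u + v) - JJ B I l u = qq B l v v / 2 + (I u - I ((1 + (t - 1)) • u + v)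
      + I' u (((t - 1) * ((t - 1) / 2 + 1)) • u + (1 + (t - 1)) • v)) := by
  have hw := hu.2 (((t - 1) * ((t - 1) / 2 + 1)) • u + (1 + (t - 1)) • v)
    (Submodule.add_mem _ (Submodule.smul_mem _ _ (Submodule.mem_sup_right
      (Submodule.mem_span_singleton_self u)))
      (Submodule.smul_mem _ _ (Submodule.mem_sup_left hv)))
  have h1 : I' u (((t - 1) * ((t - 1) / 2 + 1)) • u + (1 + (t - 1)) • v) =
     ((t - 1) * ((t - 1) / 2 + 1)) * qq B l u u + (1 + (t - 1)) * qq B l u v := by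
    rw [← sub_eq_zero.1 hw]
    simp only [qq, map_add, map_smul, inner_add_right, inner_smul_right, smul_eq_mul]
    ring
  rw [h1, JJ, JJ, S.qexp]
  have : (1 + (t - 1)) = t := by ring
  rw [this]
  ring

lemma Setup.ne0 {u : E} (S : Setup B V z L0 L1 I I') {l : ℝ} (hu : u ∈ NP B V I' l) : u ≠ 0 := by
  rintro rfl
  exact hu.1 V.zero_mem

lemma Setup.max_le (S : Setup B V z L0 L1 I I') {l : ℝ} (hl : L0 < l) {u : E}
    (hu : u ∈ NP B V I' l) {v : E} (hv : v ∈ V) {t : ℝ} (ht : 0 ≤ t) :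
    JJ B I l (t • u + v) ≤ JJ B I l u := by
  have h := S.max_aux hu hv t
  have := S.I4 u (S.ne0 hu) v (t - 1) (by linarith)
  have := S.qV' hl hv
  linarith

lemma Setup.max_eq (S : Setup B V z L0 L1 I I') {l : ℝ} (hl : L0 < l) {u : E}
    (hu : u ∈ NP B V I' l) {v : E} (hv : v ∈ V) {t : ℝ} (ht : 0 ≤ t)
    (hle : JJ B I l u ≤ JJ B I l (t • u + v)) : t • u + v = u := by
  have h := S.max_aux hu hv t
  have h4 := S.I4 u (S.ne0 hu) v (t - 1) (by linarith)
  have hv0 : v = 0 := by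
    by_contra h0
    have := S.qV hl hv h0
    linarith
  subst hv0
  by_contra hne
  have ht1 : t - 1 ≠ 0 := by
    intro h1
    apply hne
    rw [sub_eq_zero.1 h1]; simp
  have h5 := S.I4s u (S.ne0 hu) (t - 1) (by linarith) ht1
  have : qq B l (0 : E) 0 = 0 := by simp [qq]
  simp only [smul_zero, add_zero, this] at h h5 hle
  linarith

lemma fin_compact (F : Submodule ℝ E) [FiniteDimensional ℝ F] (R : ℝ) :
    IsCompact ((F : Set E) ∩ Metric.closedBall 0 R) := by
  have h : IsCompact (Metric.closedBall (0 : F) R) := isCompact_closedBall _ _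
  have h2 := h.image (continuous_subtype_val)
  convert h2 using 1
  ext x
  simp only [mem_inter_iff, mem_image, Metric.mem_closedBall, dist_zero_right]
  constructor
  · rintro ⟨h1, h2⟩
    exact ⟨⟨x, h1⟩, h2, rfl⟩
  · rintro ⟨y, h1, rfl⟩
    exact ⟨y.2, h1⟩

lemma Setup.bdd (S : Setup B V z L0 L1 I I') (F : Submodule ℝ E) [FiniteDimensional ℝ F] :
    ∃ R : ℝ, ∀ w ∈ F, I w ≤ ‖w‖ ^ 2 / 2 → ‖w‖ ≤ R := by
  by_contra! hcon
  choose w hwF hwI hwn using fun j : ℕ => hcon (j + 1 : ℕ)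
  have hpos : ∀ j, 0 < ‖w j‖ := fun j => lt_of_le_of_lt (by positivity) (hwn j)
  obtain ⟨x, hx, φ, hφ, hlim⟩ := (fin_compact F 1).tendsto_subseq
    (x := fun j => (‖w j‖)⁻¹ • w j) (fun j => ⟨F.smul_mem _ (hwF j), by
      simp [norm_smul, inv_mul_cancel₀ (hpos j).ne']⟩)
  have hxn : ‖x‖ = 1 := by
    refine tendsto_nhds_unique hlim.norm ?_
    refine tendsto_const_nhds.congr fun j => ?_
    simp [norm_smul, inv_mul_cancel₀ (hpos _).ne']
  have hx0 : x ≠ 0 := by rintro rfl; simp at hxn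
  have key : ∀ R : ℝ, 0 < R → I (R • x) / R ^ 2 ≤ 1 / 2 := by
    intro R hR
    have hl : Tendsto (fun j => I (R • ((‖w (φ j)‖)⁻¹ • w (φ j))) / R ^ 2) atTop
        (𝓝 (I (R • x) / R ^ 2)) :=
      ((S.Icont.tendsto _).comp (hlim.const_smul R)).div_const _
    refine le_of_tendsto hl ?_
    obtain ⟨N, hN⟩ := exists_nat_gt R
    filter_upwards [eventually_ge_atTop N] with j hj
    have h1 : R ≤ ‖w (φ j)‖ := by
      have h2 := hwn (φ j)
      have h3 : (N : ℝ) ≤ (φ j + 1 : ℕ) := by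
        exact_mod_cast (hj.trans (hφ.id_le j)).trans (Nat.le_succ _)
      linarith
    have hne : (‖w (φ j)‖)⁻¹ • w (φ j) ≠ 0 :=
      smul_ne_zero (inv_ne_zero (hpos _).ne') (norm_pos_iff.1 (hpos _))
    have h2 := S.I3mono _ hne (mem_Ioi.2 hR) (mem_Ioi.2 (hpos (φ j))) h1
    simp only at h2
    rw [smul_inv_smul₀ (hpos _).ne'] at h2
    refine h2.trans ?_
    rw [div_le_iff₀ (pow_pos (hpos _) 2)]
    linarith [hwI (φ j)]
  obtain ⟨R, hR1, hR2⟩ := (((S.I3top x hx0).eventually_ge_atTop 1).and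
    (eventually_gt_atTop 0)).exists
  linarith [key R hR2]

lemma Setup.bddJ (S : Setup B V z L0 L1 I I') (F : Submodule ℝ E) [FiniteDimensional ℝ F] :
    ∃ R : ℝ, ∀ l, -1 ≤ l → ∀ w ∈ F, 0 ≤ JJ B I l w → ‖w‖ ≤ R := by
  obtain ⟨R, hR⟩ := S.bdd F
  refine ⟨R, fun l hl w hw h => hR w hw ?_⟩
  rw [JJ, qq_self] at h
  have := S.Bnn w
  nlinarith

lemma Setup.decomp (S : Setup B V z L0 L1 I I') {u : E} (hu : u ∉ V) :
    ∃ a ∈ V, ∃ b ∈ Vᗮ, ∃ r : ℝ, 0 < r ∧ ‖b‖ = 1 ∧ u = a + r • b := by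
  have := S.fin
  obtain ⟨a, ha, b, hb, hab⟩ := V.exists_add_mem_mem_orthogonal u
  have hb0 : b ≠ 0 := by
    rintro rfl
    rw [add_zero] at hab
    exact hu (hab ▸ ha)
  have hbn : 0 < ‖b‖ := norm_pos_iff.2 hb0
  refine ⟨a, ha, (‖b‖)⁻¹ • b, Submodule.smul_mem _ _ hb, ‖b‖, hbn, ?_, ?_⟩
  · simp [norm_smul, inv_mul_cancel₀ hbn.ne']
  · rw [smul_inv_smul₀ hbn.ne', hab]

lemma Setup.posJ (S : Setup B V z L0 L1 I I') {l : ℝ} (hl : l < L1) {b : E} (hb : b ∈ Vᗮ)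
    (h0 : b ≠ 0) : ∃ t : ℝ, 0 < t ∧ 0 < JJ B I l (t • b) := by
  have hq : 0 < qq B l b b := by
    rw [qq_self]
    have := S.onP b hb
    have := S.pos b h0
    nlinarith
  obtain ⟨t, ht1, ht2⟩ := (((S.I3zero b h0).eventually_lt_const (half_pos hq)).and
    self_mem_nhdsWithin).exists
  refine ⟨t, ht2, ?_⟩
  have ht : (0 : ℝ) < t := ht2
  have h := S.qexp l b 0 t
  have h00 : qq B l (0 : E) 0 = 0 := by simp [qq]
  have h01 : qq B l b 0 = 0 := by simp [qq]
  rw [add_zero, h00, h01] at h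
  rw [JJ, h]
  rw [div_lt_iff₀ (by positivity)] at ht1
  nlinarith

lemma Setup.Jpos (S : Setup B V z L0 L1 I I') {l : ℝ} (hl : l ∈ Ioo L0 L1) {u : E}
    (hu : u ∈ NP B V I' l) : 0 < JJ B I l u := by
  obtain ⟨a, ha, b, hb, r, hr, hbn, hab⟩ := S.decomp hu.1
  have hb0 : b ≠ 0 := by rintro rfl; simp at hbn
  obtain ⟨t, ht, hJ⟩ := S.posJ hl.2 hb hb0
  have := S.max_le hl.1 hu (V.smul_mem (-(t / r)) ha) (t := t / r) (by positivity)
  have e : t • b = (t / r) • u + (-(t / r)) • a := by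
    rw [hab, smul_add, smul_smul, div_mul_cancel₀ _ hr.ne']
    module
  rw [← e] at this
  exact hJ.trans_le this

lemma mem_F {u w : E} (h : w ∈ V ⊔ Submodule.span ℝ {u}) : ∃ v ∈ V, ∃ t : ℝ, w = t • u + v := by
  obtain ⟨v, hv, y, hy, rfl⟩ := Submodule.mem_sup.1 h
  obtain ⟨t, rfl⟩ := Submodule.mem_span_singleton.1 hy
  exact ⟨v, hv, t, add_comm _ _⟩

lemma F_mem {u v : E} (hv : v ∈ V) (t : ℝ) : t • u + v ∈ V ⊔ Submodule.span ℝ {u} :=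
  Submodule.add_mem _ (Submodule.smul_mem _ _ (Submodule.mem_sup_right
      (Submodule.mem_span_singleton_self u))) (Submodule.mem_sup_left hv)

lemma Setup.exists_np (S : Setup B V z L0 L1 I I') {l : ℝ} (hl : l ∈ Ioo L0 L1) {u : E}
    (hu : u ∉ V) : ∃ w ∈ NP B V I' l, ∃ v ∈ V, ∃ t : ℝ, 0 < t ∧ w = t • u + v := by
  have := S.fin
  obtain ⟨a, ha, b, hb, r, hr, hbn, hab⟩ := S.decomp hu
  have hb0 : b ≠ 0 := by rintro rfl; simp at hbn
  obtain ⟨s, hs, hJs⟩ := S.posJ hl.2 hb hb0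
  have hin : ∀ v ∈ V, ∀ t : ℝ, ⟪t • u + v, b⟫_ℝ = t * r := by
    intro v hv t
    rw [hab]
    simp only [inner_add_left, inner_smul_left, smul_add, Submodule.inner_right_of_mem_orthogonal ha hb,
      Submodule.inner_right_of_mem_orthogonal hv hb, real_inner_self_eq_norm_sq, hbn]
    simp
  set F := V ⊔ Submodule.span ℝ {u} with hF
  obtain ⟨R, hR⟩ := S.bddJ F
  have hl1 : -1 ≤ l := by linarith [S.L0nn, hl.1]
  have hbF : s • b = (s / r) • u + (-(s / r)) • a := by
    rw [hab, smul_add, smul_smul, div_mul_cancel₀ _ hr.ne']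
    module
  have hsF : s • b ∈ F := by
    rw [hbF]; exact F_mem (V.smul_mem _ ha) _
  have hK : IsCompact (((F : Set E) ∩ Metric.closedBall 0 R) ∩ {w | 0 ≤ ⟪w, b⟫_ℝ}) :=
    (fin_compact F R).inter_right (isClosed_le continuous_const (by fun_prop))
  have hJc : Continuous (JJ B I l) := S.Jcont.comp (continuous_const.prodMk continuous_id)
  have hsb : 0 ≤ ⟪s • b, b⟫_ℝ := by
    rw [inner_smul_left, real_inner_self_eq_norm_sq, hbn]; simp [hs.le]
  obtain ⟨w, ⟨⟨hwF, hwR⟩, hwb⟩, hmax⟩ := hK.exists_isMaxOn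
    ⟨s • b, ⟨hsF, by simpa using hR l hl1 _ hsF hJs.le⟩, hsb⟩ hJc.continuousOn
  have hmax' : ∀ x ∈ F, 0 ≤ ⟪x, b⟫_ℝ → JJ B I l x ≤ JJ B I l w := by
    intro x hx hxb
    by_cases h : 0 ≤ JJ B I l x
    · exact hmax ⟨⟨hx, by simpa using hR l hl1 _ hx h⟩, hxb⟩
    · have h2 : JJ B I l (s • b) ≤ JJ B I l w :=
        hmax ⟨⟨hsF, by simpa using hR l hl1 _ hsF hJs.le⟩, hsb⟩
      linarith
  have hJw : 0 < JJ B I l w := hJs.trans_le (hmax' _ hsF hsb)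
  have hwV : w ∉ V := by
    intro h
    have h1 := S.qV' hl.1 h
    have h2 := S.Inn w
    rw [JJ] at hJw
    linarith
  obtain ⟨v, hv, t, hw⟩ := mem_F hwF
  have ht0 : 0 ≤ t := by
    have h1 : 0 ≤ ⟪w, b⟫_ℝ := hwb
    rw [hw, hin v hv] at h1
    exact nonneg_of_mul_nonneg_left h1 hr
  have ht : 0 < t := by
    refine lt_of_le_of_ne ht0 ?_
    rintro rfl
    apply hwV
    rw [hw]; simpa using hv
  refine ⟨w, ⟨hwV, ?_⟩, v, hv, t, ht, hw⟩
  intro x hx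
  have hxF : x ∈ F := by
    obtain ⟨v', hv', t', rfl⟩ := mem_F hx
    exact F.add_mem (F.smul_mem _ hwF) (Submodule.mem_sup_left hv')
  have hwb' : 0 < ⟪w, b⟫_ℝ := by rw [hw, hin v hv]; positivity
  have hder : HasDerivAt (fun τ : ℝ => JJ B I l (τ • x + w)) (qq B l w x - I' w x) 0 := by
    have hI : HasDerivAt (fun τ : ℝ => I (τ • x + w)) (I' w x) 0 := by
      have h1 : HasDerivAt (fun τ : ℝ => τ • x + w) x 0 := by
        simpa using ((hasDerivAt_id (0 : ℝ)).smul_const x).add_const w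
      have h2 : HasFDerivAt I (I' w) ((0 : ℝ) • x + w) := by simpa using S.der w
      exact h2.comp_hasDerivAt 0 h1
    have hq : HasDerivAt (fun τ : ℝ => (τ ^ 2 * qq B l x x + 2 * τ * qq B l x w + qq B l w w) / 2)
        (qq B l x w) 0 := by
      have h1 : HasDerivAt (fun τ : ℝ => τ ^ 2 * qq B l x x + 2 * τ * qq B l x w + qq B l w w)
        (2 * qq B l x w) 0 := by
        have e1 := ((hasDerivAt_pow 2 (0 : ℝ)).mul_const (qq B l x x))
        have e2 := (((hasDerivAt_id (0 : ℝ)).const_mul 2).mul_const (qq B l x w))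
        have := (e1.add e2).add_const (qq B l w w)
        simpa using this
      simpa using h1.div_const 2
    have hsy : qq B l w x = qq B l x w := by
      simp only [qq, S.symm w x, real_inner_comm w x]
    rw [hsy]
    refine (hq.sub hI).congr_of_eventuallyEq (Eventually.of_forall fun τ => ?_)
    simp only [JJ, S.qexp, Pi.sub_apply]
  refine IsLocalMax.hasDerivAt_eq_zero ?_ hder
  have hc : Tendsto (fun τ : ℝ => ⟪τ • x + w, b⟫_ℝ) (𝓝 0) (𝓝 ⟪w, b⟫_ℝ) := by
    have : Continuous (fun τ : ℝ => ⟪τ • x + w, b⟫_ℝ) := by fun_prop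
    simpa using this.tendsto 0
  filter_upwards [hc.eventually_const_lt hwb'] with τ hτ
  have := hmax' (τ • x + w) (F.add_mem (F.smul_mem _ hxF) hwF) (le_of_lt hτ)
  simpa using this

lemma Setup.Jtend (S : Setup B V z L0 L1 I I') {f : ℕ → ℝ} {g : ℕ → E} {l : ℝ} {x : E}
    (hf : Tendsto f atTop (𝓝 l)) (hg : Tendsto g atTop (𝓝 x)) :
    Tendsto (fun j => JJ B I (f j) (g j)) atTop (𝓝 (JJ B I l x)) :=
  (S.Jcont.tendsto (l, x)).comp (hf.prodMk_nhds hg)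

lemma Setup.limit (S : Setup B V z L0 L1 I I') {l : ℝ} (hl : l ∈ Ioo L0 L1)
    (lj : ℕ → ℝ) (hlj : ∀ j, lj j ∈ Ioo L0 L1) (hlim : Tendsto lj atTop (𝓝 l))
    (u : ℕ → E) (hu : ∀ j, u j ∈ NP B V I' (lj j)) (C : ℕ → ℝ) (c : ℝ)
    (hC : Tendsto C atTop (𝓝 c)) (hJ : ∀ j, JJ B I (lj j) (u j) ≤ C j) :
    ∃ w ∈ NP B V I' l, JJ B I l w ≤ c := by
  choose a ha b hb r hr hbn hab using fun j => S.decomp (hu j).1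
  obtain ⟨b0, φ, hφ, hwk⟩ := S.wk b (fun j => (hbn j).le)
  have hlim' := hlim.comp hφ.tendsto_atTop
  have hC' := hC.comp hφ.tendsto_atTop
  have hb0 : b0 ∈ Vᗮ := by
    rw [Submodule.mem_orthogonal]
    intro v hv
    have h1 := hwk (innerSL ℝ v)
    refine tendsto_nhds_unique h1 (tendsto_const_nhds.congr fun j => ?_)
    simpa using (Submodule.inner_right_of_mem_orthogonal hv (hb (φ j))).symm
  have hmax : ∀ v ∈ V, ∀ t : ℝ, 0 ≤ t → ∀ j, JJ B I (lj j) (t • b j + v) ≤ C j := by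
    intro v hv t ht j
    have h := S.max_le (hlj j).1 (hu j) (V.add_mem hv (V.smul_mem (-(t / r j)) (ha j)))
      (t := t / r j) (div_nonneg ht (hr j).le)
    have e : t • b j + v = (t / r j) • u j + (v + (-(t / r j)) • a j) := by
      conv_rhs => rw [hab j]
      rw [smul_add, smul_smul, div_mul_cancel₀ _ (hr j).ne']
      module
    rw [e]
    exact h.trans (hJ j)
  have hIwk : ∀ v : E, ∀ t : ℝ,
      Tendsto (fun j => I (t • b (φ j) + v)) atTop (𝓝 (I (t • b0 + v))) := by
    intro v t
    apply S.I1
    intro f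
    simp only [map_add, map_smul]
    exact ((hwk f).const_smul t).add_const _
  have hne : b0 ≠ 0 := by
    intro h0
    have hL1 : 0 < 1 + L1 := by linarith [S.L0nn, S.L01]
    set δ := 1 - (1 + l) / (1 + L1) with hδ
    have hδ0 : 0 < δ := by
      rw [hδ, sub_pos, div_lt_one hL1]; linarith [hl.2]
    have key : ∀ t : ℝ, 0 ≤ t → t ^ 2 * δ / 2 ≤ c := by
      intro t ht
      have h1 : Tendsto (fun j => t ^ 2 * (1 - (1 + lj (φ j)) / (1 + L1)) / 2
          - I (t • b (φ j) + 0)) atTop (𝓝 (t ^ 2 * δ / 2 - I (t • b0 + 0))) := by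
        refine Tendsto.sub ?_ (hIwk 0 t)
        exact (((hlim'.const_add 1).div_const (1 + L1)).const_sub 1).const_mul (t ^ 2)
          |>.div_const 2
      rw [h0, smul_zero, zero_add, S.I0, sub_zero] at h1
      refine le_of_tendsto_of_tendsto' h1 hC' fun j => ?_
      refine le_trans ?_ (hmax 0 V.zero_mem t ht (φ j))
      rw [JJ]
      refine sub_le_sub_right ?_ _
      have hq := S.qexp (lj (φ j)) (b (φ j)) 0 t
      have h00 : qq B (lj (φ j)) (0 : E) 0 = 0 := by simp [qq]
      have h01 : qq B (lj (φ j)) (b (φ j)) 0 = 0 := by simp [qq]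
      rw [hq, h00, h01, qq_self, hbn]
      have hB := S.onP _ (hb (φ j))
      rw [hbn] at hB
      have hB' : B (b (φ j)) (b (φ j)) ≤ 1 / (1 + L1) := by
        rw [le_div_iff₀ hL1]; linarith
      have hpos : 0 < 1 + lj (φ j) := by linarith [S.L0nn, (hlj (φ j)).1]
      have h3 := mul_le_mul_of_nonneg_left hB' hpos.le
      rw [mul_one_div] at h3
      have h4 := mul_le_mul_of_nonneg_left h3 (sq_nonneg t)
      nlinarith
    have hT : Tendsto (fun t : ℝ => t ^ 2 * δ / 2) atTop atTop :=
      ((tendsto_pow_atTop two_ne_zero).atTop_mul_const hδ0).atTop_div_const two_pos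
    obtain ⟨t, h1, h2⟩ := ((hT.eventually_gt_atTop c).and (eventually_ge_atTop 0)).exists
    linarith [key t h2]
  have hb0V : b0 ∉ V := by
    intro h
    exact hne (inner_self_eq_zero.1 (Submodule.inner_right_of_mem_orthogonal h hb0))
  obtain ⟨w, hw, v, hv, t, ht, hwe⟩ := S.exists_np hl hb0V
  refine ⟨w, hw, ?_⟩
  rw [hwe]
  set x := t • b0 + v with hx
  have hfun : ∀ f : E →L[ℝ] ℝ, Tendsto (fun j => f (t • (b (φ j) - b0))) atTop (𝓝 0) := by
    intro f
    have := ((hwk f).sub_const (f b0)).const_mul t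
    simpa using this
  have h1 : Tendsto (fun j => (qq B (lj (φ j)) x x
        + 2 * (innerSL ℝ x (t • (b (φ j) - b0)) - (1 + lj (φ j)) * B x (t • (b (φ j) - b0)))) / 2
      - I (t • b (φ j) + v)) atTop (𝓝 ((qq B l x x + 2 * (0 - (1 + l) * 0)) / 2 - I x)) := by
    refine Tendsto.sub (Tendsto.div_const (Tendsto.add ?_ (Tendsto.const_mul _
      (Tendsto.sub (hfun _) (Tendsto.mul (hlim'.const_add 1) (hfun _))))) _) (hIwk v t)
    exact ((qcont (B := B)).tendsto (l, x, x)).comp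
      (hlim'.prodMk_nhds (tendsto_const_nhds.prodMk_nhds tendsto_const_nhds))
  rw [mul_zero, sub_zero, mul_zero, add_zero] at h1
  refine le_of_tendsto_of_tendsto' h1 hC' fun j => ?_
  refine le_trans ?_ (hmax v hv t ht.le (φ j))
  rw [JJ]
  refine sub_le_sub_right ?_ _
  have e : t • b (φ j) + v = (1 : ℝ) • x + t • (b (φ j) - b0) := by
    rw [hx]; module
  have hy : t • (b (φ j) - b0) ∈ Vᗮ :=
    Submodule.smul_mem _ _ (Submodule.sub_mem _ (hb _) hb0)
  have e2 := S.qexp (lj (φ j)) x (t • (b (φ j) - b0)) 1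
  rw [e, e2]
  have hB := S.onP _ hy
  have hBn := S.Bnn (t • (b (φ j) - b0))
  have hq : 0 ≤ qq B (lj (φ j)) (t • (b (φ j) - b0)) (t • (b (φ j) - b0)) := by
    rw [qq_self]
    nlinarith [(hlj (φ j)).2]
  have : qq B (lj (φ j)) x (t • (b (φ j) - b0)) =
    innerSL ℝ x (t • (b (φ j) - b0)) - (1 + lj (φ j)) * B x (t • (b (φ j) - b0)) := by
    rw [qq, innerSL_apply_apply]
  rw [← this]
  linarith

lemma Setup.cc_le (S : Setup B V z L0 L1 I I') {l : ℝ} (hl : l ∈ Ioo L0 L1) {u : E}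
    (hu : u ∈ NP B V I' l) : cc B V I I' l ≤ JJ B I l u := by
  refine csInf_le ⟨0, ?_⟩ ⟨u, hu, rfl⟩
  rintro _ ⟨w, hw, rfl⟩
  exact (S.Jpos hl hw).le

lemma Setup.exists_min (S : Setup B V z L0 L1 I I') {l : ℝ} (hl : l ∈ Ioo L0 L1) :
    ∃ u ∈ NP B V I' l, JJ B I l u = cc B V I I' l := by
  obtain ⟨w, hw, -⟩ := S.exists_np hl S.zV
  have hbd : BddBelow (JJ B I l '' NP B V I' l) := by
    refine ⟨0, ?_⟩
    rintro _ ⟨w, hw, rfl⟩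
    exact (S.Jpos hl hw).le
  obtain ⟨x, -, hx, hmem⟩ := exists_seq_tendsto_sInf (S := JJ B I l '' NP B V I' l)
    ⟨_, w, hw, rfl⟩ hbd
  choose u hu hux using hmem
  obtain ⟨y, hy, hyc⟩ := S.limit hl (fun _ => l) (fun _ => hl) tendsto_const_nhds u hu x _ hx
    (fun j => (hux j).le)
  exact ⟨y, hy, le_antisymm hyc (S.cc_le hl hy)⟩

lemma Setup.cc_pos (S : Setup B V z L0 L1 I I') {l : ℝ} (hl : l ∈ Ioo L0 L1) :
    0 < cc B V I I' l := by
  obtain ⟨u, hu, h⟩ := S.exists_min hl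
  rw [← h]
  exact S.Jpos hl hu

lemma Setup.envelope (S : Setup B V z L0 L1 I I') {l : ℝ} (hl : l ∈ Ioo L0 L1) {u : E}
    (hu : u ∈ NP B V I' l) (huc : JJ B I l u = cc B V I I' l)
    (lj : ℕ → ℝ) (hlj : ∀ j, lj j ∈ Ioo L0 L1) (hlim : Tendsto lj atTop (𝓝 l)) :
    ∃ (φ : ℕ → ℕ) (x : ℕ → ℝ), Tendsto x atTop (𝓝 (B u u / 2)) ∧
      ∀ j, cc B V I I' (lj (φ j)) ≤ cc B V I I' l - (lj (φ j) - l) * x j := by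
  have := S.fin
  choose w hw v hv t ht hwe using fun j => S.exists_np (hlj j) hu.1
  obtain ⟨R, hR⟩ := S.bddJ (V ⊔ Submodule.span ℝ {u})
  have hwF : ∀ j, w j ∈ V ⊔ Submodule.span ℝ {u} := fun j => by
    rw [hwe]; exact F_mem (hv j) _
  obtain ⟨w0, ⟨hw0F, -⟩, φ, hφ, hlimw⟩ :=
    (fin_compact (V ⊔ Submodule.span ℝ {u}) R).tendsto_subseq (x := w) (fun j => ⟨hwF j, by
      simpa using hR (lj j) (by linarith [S.L0nn, (hlj j).1]) _ (hwF j) (S.Jpos (hlj j) (hw j)).le⟩)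
  have hlim' := hlim.comp hφ.tendsto_atTop
  obtain ⟨v0, hv0, t0, hw0⟩ := mem_F hw0F
  have ht0 : 0 ≤ t0 := by
    obtain ⟨a, ha, b, hb, r, hr, hbn, hab⟩ := S.decomp hu.1
    have hin : ∀ v ∈ V, ∀ t : ℝ, ⟪t • u + v, b⟫_ℝ = t * r := by
      intro v hv t
      rw [hab]
      simp only [inner_add_left, inner_smul_left, smul_add,
        Submodule.inner_right_of_mem_orthogonal ha hb,
        Submodule.inner_right_of_mem_orthogonal hv hb, real_inner_self_eq_norm_sq, hbn]
      simp
    have h1 : Tendsto (fun j => ⟪w (φ j), b⟫_ℝ) atTop (𝓝 ⟪w0, b⟫_ℝ) :=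
      hlimw.inner tendsto_const_nhds
    have h2 : 0 ≤ ⟪w0, b⟫_ℝ := by
      refine ge_of_tendsto' h1 fun j => ?_
      rw [hwe, hin _ (hv _)]
      exact mul_nonneg (ht _).le hr.le
    rw [hw0, hin _ hv0] at h2
    exact nonneg_of_mul_nonneg_left h2 hr
  have hJ : JJ B I l u ≤ JJ B I l w0 := by
    have h1 : Tendsto (fun j => JJ B I (lj (φ j)) u) atTop (𝓝 (JJ B I l u)) :=
      S.Jtend hlim' tendsto_const_nhds
    have h2 : Tendsto (fun j => JJ B I (lj (φ j)) (w (φ j))) atTop (𝓝 (JJ B I l w0)) :=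
      S.Jtend hlim' hlimw
    refine le_of_tendsto_of_tendsto' h1 h2 fun j => ?_
    have h := S.max_le (hlj (φ j)).1 (hw (φ j)) (V.smul_mem (-(t (φ j))⁻¹) (hv (φ j)))
      (t := (t (φ j))⁻¹) (inv_nonneg.2 (ht _).le)
    have e : (t (φ j))⁻¹ • w (φ j) + (-(t (φ j))⁻¹) • v (φ j) = u := by
      conv_lhs => rw [hwe]
      rw [smul_add, inv_smul_smul₀ (ht _).ne']
      module
    rwa [e] at h
  have hwu : w0 = u := by
    rw [hw0] at hJ ⊢
    exact S.max_eq hl.1 hu hv0 ht0 hJ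
  rw [hwu] at hlimw
  refine ⟨φ, fun j => B (w (φ j)) (w (φ j)) / 2, ?_, fun j => ?_⟩
  · have : Continuous fun x : E => B x x / 2 := by fun_prop
    exact (this.tendsto u).comp hlimw
  · have h1 := S.cc_le (hlj _) (hw (φ j))
    rw [JJ_change _ l] at h1
    have h2 := S.max_le hl.1 hu (hv (φ j)) (ht (φ j)).le
    rw [← hwe, huc] at h2
    linarith

lemma Setup.near_top (S : Setup B V z L0 L1 I I') {m : ℝ} (hm : 0 < m) {l1 : ℝ}
    (hl1 : l1 ∈ Ioo L0 L1) :
    ∃ l ∈ Ioo l1 L1, cc B V I I' l < m * (L1 - l) := by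
  have := S.fin
  by_contra! hcon
  set lj : ℕ → ℝ := fun j => L1 - (L1 - l1) / (j + 2) with hljd
  have hd : 0 < L1 - l1 := by linarith [hl1.2]
  have hlj : ∀ j, lj j ∈ Ioo l1 L1 := by
    intro j
    have h2 : (0 : ℝ) < j + 2 := by positivity
    have h3 : (L1 - l1) / (j + 2) < L1 - l1 := by
      rw [div_lt_iff₀ h2]; nlinarith [(Nat.cast_nonneg j : (0 : ℝ) ≤ j)]
    have h4 : 0 < (L1 - l1) / (j + 2) := by positivity
    simp only [hljd]
    constructor <;> linarith
  have hlj' : ∀ j, lj j ∈ Ioo L0 L1 := fun j => ⟨hl1.1.trans (hlj j).1, (hlj j).2⟩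
  have hlim : Tendsto lj atTop (𝓝 L1) := by
    have h1 : Tendsto (fun j : ℕ => (L1 - l1) / ((j : ℝ) + 2)) atTop (𝓝 0) :=
      tendsto_const_nhds.div_atTop (tendsto_atTop_add_const_right _ _ tendsto_natCast_atTop_atTop)
    simpa using h1.const_sub L1
  choose w hw v hv t ht hwe using fun j => S.exists_np (hlj' j) S.zV
  obtain ⟨R, hR⟩ := S.bddJ (V ⊔ Submodule.span ℝ {z})
  have hwF : ∀ j, w j ∈ V ⊔ Submodule.span ℝ {z} := fun j => by
    rw [hwe]; exact F_mem (hv j) _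
  obtain ⟨w0, ⟨hw0F, -⟩, φ, hφ, hlimw⟩ :=
    (fin_compact (V ⊔ Submodule.span ℝ {z}) R).tendsto_subseq (x := w) (fun j => ⟨hwF j, by
      simpa using hR (lj j) (by linarith [S.L0nn, (hlj' j).1]) _ (hwF j)
        (S.Jpos (hlj' j) (hw j)).le⟩)
  have hlim' := hlim.comp hφ.tendsto_atTop
  have hJ0 : 0 ≤ JJ B I L1 w0 := by
    have h2 : Tendsto (fun j => JJ B I (lj (φ j)) (w (φ j))) atTop (𝓝 (JJ B I L1 w0)) :=
      S.Jtend hlim' hlimw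
    exact ge_of_tendsto' h2 fun j => (S.Jpos (hlj' _) (hw _)).le
  have hmass : ∀ j, m ≤ B (w j) (w j) / 2 := by
    intro j
    have h1 := (hcon (lj j) (hlj j)).trans (S.cc_le (hlj' j) (hw j))
    rw [JJ, qq_self] at h1
    have h2 := S.Inn (w j)
    have h3 := S.onz _ (hwF j)
    have h4 : 0 < L1 - lj j := by linarith [(hlj j).2]
    have h5 : (L1 - lj j) * m ≤ (L1 - lj j) * (B (w j) (w j) / 2) := by nlinarith
    exact le_of_mul_le_mul_left h5 h4
  have hm0 : m ≤ B w0 w0 / 2 := by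
    have hc : Continuous fun x : E => B x x / 2 := by fun_prop
    exact ge_of_tendsto' ((hc.tendsto w0).comp hlimw) fun j => hmass _
  have hw00 : w0 ≠ 0 := by
    rintro rfl
    simp at hm0
    linarith
  have h1 := S.onz _ hw0F
  have h2 := S.Ipos _ hw00
  rw [JJ, qq_self] at hJ0
  linarith

/-- The abstract mass set. -/
def MM (B : E →L[ℝ] E →L[ℝ] ℝ) (V : Submodule ℝ E) (L0 L1 : ℝ) (I : E → ℝ)
    (I' : E → E →L[ℝ] ℝ) : Set ℝ :=
  {m | ∃ l ∈ Ioo L0 L1, ∃ u, (u ∈ NP B V I' l ∧ JJ B I l u = cc B V I I' l) ∧ m = B u u / 2}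

lemma Setup.desc_right (S : Setup B V z L0 L1 I I') {l : ℝ} (hl : l ∈ Ioo L0 L1) {u : E}
    (hu : u ∈ NP B V I' l) (huc : JJ B I l u = cc B V I I' l) {m l' : ℝ} (hm : m < B u u / 2)
    (hl' : l < l') : ∃ k ∈ Ioo l l', k < L1 ∧ cc B V I I' k + m * k < cc B V I I' l + m * l := by
  set d := min l' L1 - l with hd
  have hd0 : 0 < d := by rw [hd, sub_pos]; exact lt_min hl' hl.2
  have hmem : ∀ j : ℕ, l + d / (j + 2) ∈ Ioo l (min l' L1) := by
    intro j
    have h2 : (0 : ℝ) < j + 2 := by positivity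
    have h3 : d / (j + 2) < d := by
      rw [div_lt_iff₀ h2]; nlinarith [(Nat.cast_nonneg j : (0 : ℝ) ≤ j)]
    have h4 : 0 < d / (j + 2) := by positivity
    constructor <;> linarith
  have hlim : Tendsto (fun j : ℕ => l + d / ((j : ℝ) + 2)) atTop (𝓝 l) := by
    have h1 : Tendsto (fun j : ℕ => d / ((j : ℝ) + 2)) atTop (𝓝 0) :=
      tendsto_const_nhds.div_atTop (tendsto_atTop_add_const_right _ _ tendsto_natCast_atTop_atTop)
    simpa using h1.const_add l
  obtain ⟨φ, x, hx, hle⟩ := S.envelope hl hu huc _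
    (fun j => ⟨hl.1.trans (hmem j).1, (hmem j).2.trans_le (min_le_right _ _)⟩) hlim
  obtain ⟨j, hj⟩ := (hx.eventually_const_lt hm).exists
  refine ⟨_, ⟨(hmem (φ j)).1, (hmem (φ j)).2.trans_le (min_le_left _ _)⟩,
    (hmem (φ j)).2.trans_le (min_le_right _ _), ?_⟩
  have h1 := hle j
  have h2 := (hmem (φ j)).1
  generalize l + d / ((φ j : ℝ) + 2) = k at *
  nlinarith

lemma Setup.desc_left (S : Setup B V z L0 L1 I I') {l : ℝ} (hl : l ∈ Ioo L0 L1) {u : E}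
    (hu : u ∈ NP B V I' l) (huc : JJ B I l u = cc B V I I' l) {m l' : ℝ} (hm : B u u / 2 < m)
    (hl' : l' < l) : ∃ k ∈ Ioo l' l, L0 < k ∧ cc B V I I' k + m * k < cc B V I I' l + m * l := by
  set d := l - max l' L0 with hd
  have hd0 : 0 < d := by rw [hd, sub_pos]; exact max_lt hl' hl.1
  have hmem : ∀ j : ℕ, l - d / (j + 2) ∈ Ioo (max l' L0) l := by
    intro j
    have h2 : (0 : ℝ) < j + 2 := by positivity
    have h3 : d / (j + 2) < d := by
      rw [div_lt_iff₀ h2]; nlinarith [(Nat.cast_nonneg j : (0 : ℝ) ≤ j)]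
    have h4 : 0 < d / (j + 2) := by positivity
    constructor <;> linarith
  have hlim : Tendsto (fun j : ℕ => l - d / ((j : ℝ) + 2)) atTop (𝓝 l) := by
    have h1 : Tendsto (fun j : ℕ => d / ((j : ℝ) + 2)) atTop (𝓝 0) :=
      tendsto_const_nhds.div_atTop (tendsto_atTop_add_const_right _ _ tendsto_natCast_atTop_atTop)
    simpa using h1.const_sub l
  obtain ⟨φ, x, hx, hle⟩ := S.envelope hl hu huc _
    (fun j => ⟨(le_max_right _ _).trans_lt (hmem j).1, (hmem j).2.trans hl.2⟩) hlim
  obtain ⟨j, hj⟩ := (hx.eventually_lt_const hm).exists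
  refine ⟨_, ⟨(le_max_left _ _).trans_lt (hmem (φ j)).1, (hmem (φ j)).2⟩,
    (le_max_right _ _).trans_lt (hmem (φ j)).1, ?_⟩
  have h1 := hle j
  have h2 := (hmem (φ j)).2
  generalize l - d / ((φ j : ℝ) + 2) = k at *
  nlinarith

lemma Setup.down (S : Setup B V z L0 L1 I I') {m1 m : ℝ} (hm1 : m1 ∈ MM B V L0 L1 I I')
    (hm : 0 < m) (hlt : m < m1) : m ∈ MM B V L0 L1 I I' := by
  obtain ⟨l1, hl1, u1, ⟨hu1, hu1c⟩, rfl⟩ := hm1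
  obtain ⟨l2, hl2, hc2⟩ := S.near_top hm hl1 (I := I) (I' := I')
  set h : ℝ → ℝ := fun l => cc B V I I' l + m * l with hh
  have hh2 : h l2 < m * L1 := by simp only [hh]; linarith
  obtain ⟨l3, hl3, hc3⟩ : ∃ l3 ∈ Ioo l2 L1, h l2 < m * l3 := by
    refine ⟨(max l2 (h l2 / m) + L1) / 2, ?_, ?_⟩
    · have h1 : h l2 / m < L1 := by rw [div_lt_iff₀ hm]; linarith
      have := max_lt hl2.2 h1
      have := le_max_left l2 (h l2 / m)
      constructor <;> linarith [hl2.2]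
    · have h1 : h l2 / m < L1 := by rw [div_lt_iff₀ hm]; linarith
      have h2 := le_max_right l2 (h l2 / m)
      have h3 : h l2 / m < (max l2 (h l2 / m) + L1) / 2 := by linarith
      rw [div_lt_iff₀ hm] at h3
      linarith
  have hsub : ∀ l ∈ Icc l1 l3, l ∈ Ioo L0 L1 := fun l hl =>
    ⟨hl1.1.trans_le hl.1, hl.2.trans_lt hl3.2⟩
  -- a minimum point of `h`
  obtain ⟨l0, hl0, hmin⟩ : ∃ l0 ∈ Icc l1 l3, ∀ l ∈ Icc l1 l3, h l0 ≤ h l := by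
    have hbd : BddBelow (h '' Icc l1 l3) := by
      refine ⟨0, ?_⟩
      rintro _ ⟨l, hl, rfl⟩
      have h1 := S.cc_pos (hsub l hl)
      have h2 : 0 ≤ m * l := mul_nonneg hm.le (by linarith [S.L0nn, (hsub l hl).1])
      simp only [hh]; linarith
    obtain ⟨y, -, hy, hmem⟩ := exists_seq_tendsto_sInf (S := h '' Icc l1 l3)
      ⟨_, l2, ⟨hl2.1.le, hl3.1.le⟩, rfl⟩ hbd
    choose lj hlj hljy using hmem
    obtain ⟨l0, hl0, φ, hφ, hlim⟩ := isCompact_Icc.tendsto_subseq hlj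
    refine ⟨l0, hl0, fun l hl => ?_⟩
    choose u hu huc using fun j => S.exists_min (hsub _ (hlj (φ j)))
    obtain ⟨w, hw, hwc⟩ := S.limit (hsub l0 hl0) _ (fun j => hsub _ (hlj (φ j))) hlim u hu
      (fun j => y (φ j) - m * lj (φ j)) (sInf (h '' Icc l1 l3) - m * l0)
      ((hy.comp hφ.tendsto_atTop).sub (hlim.const_mul m)) (fun j => by
        rw [huc, ← hljy]
        simp only [hh]
        linarith)
    have h1 := (S.cc_le (hsub l0 hl0) hw).trans hwc
    have h2 : sInf (h '' Icc l1 l3) ≤ h l := csInf_le hbd ⟨l, hl, rfl⟩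
    refine le_trans ?_ h2
    simp only [hh]
    linarith
  have hl03 : l0 < l3 := by
    refine lt_of_le_of_ne hl0.2 ?_
    rintro rfl
    have h1 := hmin l2 ⟨hl2.1.le, hl3.1.le⟩
    have h2 := S.cc_pos (hsub _ hl0)
    have h3 : h l0 = cc B V I I' l0 + m * l0 := rfl
    linarith
  have hl10 : l1 < l0 := by
    refine lt_of_le_of_ne hl0.1 ?_
    rintro rfl
    obtain ⟨k, hk, -, hkc⟩ := S.desc_right hl1 hu1 hu1c hlt hl03
    exact absurd (hmin k ⟨hk.1.le, hk.2.le⟩) (not_le.2 hkc)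
  have hl0' := hsub l0 hl0
  obtain ⟨u, hu, huc⟩ := S.exists_min hl0'
  refine ⟨l0, hl0', u, ⟨hu, huc⟩, ?_⟩
  rcases lt_trichotomy m (B u u / 2) with hlt' | heq | hgt
  · obtain ⟨k, hk, -, hkc⟩ := S.desc_right hl0' hu huc hlt' hl03
    exact absurd (hmin k ⟨hl0.1.trans hk.1.le, hk.2.le⟩) (not_le.2 hkc)
  · exact heq
  · obtain ⟨k, hk, -, hkc⟩ := S.desc_left hl0' hu huc hgt hl10
    exact absurd (hmin k ⟨hk.1.le, hk.2.le.trans hl0.2⟩) (not_le.2 hkc)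

theorem Setup.main (S : Setup B V z L0 L1 I I') :
    MM B V L0 L1 I I' = Ioi 0 ∨ ∃ g : ℝ, 0 < g ∧ Ioo 0 g ⊆ MM B V L0 L1 I I' ∧
      MM B V L0 L1 I I' ⊆ Ioc 0 g := by
  have hpos : ∀ m ∈ MM B V L0 L1 I I', 0 < m := by
    rintro _ ⟨l, hl, u, ⟨hu, -⟩, rfl⟩
    exact half_pos (S.pos u (S.ne0 hu))
  have hne : (MM B V L0 L1 I I').Nonempty := by
    have hl : (L0 + L1) / 2 ∈ Ioo L0 L1 := by constructor <;> linarith [S.L01]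
    obtain ⟨u, hu, huc⟩ := S.exists_min hl
    exact ⟨_, _, hl, u, ⟨hu, huc⟩, rfl⟩
  by_cases hbd : BddAbove (MM B V L0 L1 I I')
  · right
    obtain ⟨m0, hm0⟩ := hne
    refine ⟨sSup (MM B V L0 L1 I I'), (hpos _ hm0).trans_le (le_csSup hbd hm0), ?_, ?_⟩
    · intro m hm
      obtain ⟨m1, hm1, hlt⟩ := exists_lt_of_lt_csSup ⟨m0, hm0⟩ hm.2
      exact S.down hm1 hm.1 hlt
    · exact fun m hm => ⟨hpos m hm, le_csSup hbd hm⟩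
  · left
    ext m
    refine ⟨fun h => hpos m h, fun h => ?_⟩
    rw [not_bddAbove_iff] at hbd
    obtain ⟨m1, hm1, hlt⟩ := hbd m
    exact S.down hm1 h hlt

section concrete

lemma exists_basis (lam : ℕ → ℝ) (ζ : ℕ → E) (hlam_nonneg : ∀ k, 0 ≤ lam k)
    (hON : ∀ j k, ⟪ζ j, ζ k⟫_ℝ = if j = k then 1 + lam k else 0)
    (hdense : (Submodule.span ℝ (Set.range ζ)).topologicalClosure = ⊤) :
    ∃ b : HilbertBasis ℕ ℝ E, ∀ k, ζ k = √(1 + lam k) • b k := by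
  have hpos : ∀ k, 0 < √(1 + lam k) := fun k => Real.sqrt_pos.2 (by linarith [hlam_nonneg k])
  have ho : Orthonormal ℝ (fun k => (√(1 + lam k))⁻¹ • ζ k) := by
    rw [orthonormal_iff_ite]
    intro i j
    rw [inner_smul_left, inner_smul_right, hON]
    split_ifs with h
    · subst h
      have h2 : √(1 + lam i) * √(1 + lam i) = 1 + lam i :=
        Real.mul_self_sqrt (by linarith [hlam_nonneg i])
      have := (hpos i).ne'
      simp only [conj_trivial]
      rw [← h2]
      field_simp
      rw [Real.sqrt_sq (hpos i).le]
    · simp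
  refine ⟨HilbertBasis.mk ho ?_, fun k => ?_⟩
  · rw [← hdense]
    apply Submodule.topologicalClosure_mono
    rw [Submodule.span_le]
    rintro _ ⟨k, rfl⟩
    have : ζ k = √(1 + lam k) • ((√(1 + lam k))⁻¹ • ζ k) := by
      rw [smul_inv_smul₀ (hpos k).ne']
    rw [SetLike.mem_coe, this]
    exact Submodule.smul_mem _ _ (Submodule.subset_span ⟨k, rfl⟩)
  · rw [HilbertBasis.coe_mk, smul_inv_smul₀ (hpos k).ne']

variable {lam : ℕ → ℝ} {ζ : ℕ → E} {b : HilbertBasis ℕ ℝ E}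

lemma coef_mul (h0 : ∀ k, 0 ≤ lam k) (hb : ∀ k, ζ k = √(1 + lam k) • b k) (u v : E) (k : ℕ) :
    coefH lam ζ u k * coefH lam ζ v k = ⟪u, b k⟫_ℝ * ⟪b k, v⟫_ℝ / (1 + lam k) := by
  have hp : 0 < 1 + lam k := by linarith [h0 k]
  have h2 : √(1 + lam k) ^ 2 = 1 + lam k := Real.sq_sqrt hp.le
  simp only [coefH, hb, inner_smul_right, real_inner_comm v (b k)]
  rw [div_mul_div_comm]
  rw [div_eq_div_iff (by positivity) (by positivity)]
  linear_combination (⟪u, b k⟫_ℝ * ⟪v, b k⟫_ℝ * (1 + lam k)) * h2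

lemma coef_summable (h0 : ∀ k, 0 ≤ lam k) (hb : ∀ k, ζ k = √(1 + lam k) • b k) (u v : E) :
    Summable fun k => coefH lam ζ u k * coefH lam ζ v k := by
  refine Summable.of_norm_bounded (b.summable_inner_mul_inner u v).abs fun k => ?_
  rw [coef_mul h0 hb, Real.norm_eq_abs, abs_div]
  exact div_le_self (abs_nonneg _) (by rw [abs_of_nonneg] <;> linarith [h0 k])

/-- the coefficient is linear. -/
lemma coef_add (u v : E) (k : ℕ) : coefH lam ζ (u + v) k = coefH lam ζ u k + coefH lam ζ v k := by
  simp only [coefH, inner_add_left]; ring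

lemma coef_smul (c : ℝ) (u : E) (k : ℕ) : coefH lam ζ (c • u) k = c * coefH lam ζ u k := by
  simp only [coefH, inner_smul_left, conj_trivial]; ring

lemma exists_B (h0 : ∀ k, 0 ≤ lam k) (hb : ∀ k, ζ k = √(1 + lam k) • b k) :
    ∃ B : E →L[ℝ] E →L[ℝ] ℝ, ∀ u v, B u v = ∑' k, coefH lam ζ u k * coefH lam ζ v k := by
  have hs := coef_summable h0 hb
  let B0 : E →ₗ[ℝ] E →ₗ[ℝ] ℝ := LinearMap.mk₂ ℝ
    (fun u v => ∑' k, coefH lam ζ u k * coefH lam ζ v k)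
    (fun u u' v => by
      rw [← (hs u v).tsum_add (hs u' v)]
      simp only [coef_add, add_mul])
    (fun c u v => by
      rw [smul_eq_mul, ← tsum_mul_left]
      simp only [coef_smul, mul_assoc])
    (fun u v v' => by
      rw [← (hs u v).tsum_add (hs u v')]
      simp only [coef_add, mul_add])
    (fun c u v => by
      rw [smul_eq_mul, ← tsum_mul_left]
      simp only [coef_smul, mul_left_comm])
  have hB0 : ∀ u v, B0 u v = ∑' k, coefH lam ζ u k * coefH lam ζ v k := fun u v => rfl
  have hnn : ∀ u, 0 ≤ B0 u u := fun u => by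
    rw [hB0]; exact tsum_nonneg fun k => mul_self_nonneg _
  have hle : ∀ u, B0 u u ≤ ‖u‖ ^ 2 := fun u => by
    rw [hB0, ← real_inner_self_eq_norm_sq, ← b.tsum_inner_mul_inner u u]
    refine (hs u u).tsum_le_tsum (fun k => ?_) (b.summable_inner_mul_inner u u)
    rw [coef_mul h0 hb]
    refine div_le_self ?_ (by linarith [h0 k])
    rw [real_inner_comm u (b k)]
    exact mul_self_nonneg _
  have hsy : ∀ u v, B0 u v = B0 v u := fun u v => by
    rw [hB0, hB0]; simp only [mul_comm]
  have hbd : ∀ u v, ‖B0 u v‖ ≤ 1 * ‖u‖ * ‖v‖ := by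
    intro u v
    have h1 := LinearMap.BilinForm.apply_mul_apply_le_of_forall_zero_le B0 hnn u v
    rw [hsy v u] at h1
    rw [one_mul, Real.norm_eq_abs]
    refine abs_le_of_sq_le_sq (a := B0 u v) (b := ‖u‖ * ‖v‖) ?_ (by positivity)
    have h2 := mul_le_mul (hle u) (hle v) (hnn v) (by positivity)
    nlinarith
  exact ⟨B0.mkContinuous₂ 1 hbd, fun u v => rfl⟩

lemma weak_compact [TopologicalSpace.SeparableSpace E] (b : ℕ → E) (hb : ∀ j, ‖b j‖ ≤ 1) :
    ∃ (a : E) (φ : ℕ → ℕ), StrictMono φ ∧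
      ∀ f : E →L[ℝ] ℝ, Tendsto (fun j => f (b (φ j))) atTop (𝓝 (f a)) := by
  have h := WeakDual.isSeqCompact_closedBall ℝ E (0 : StrongDual ℝ E) 1
  obtain ⟨a, -, φ, hφ, hlim⟩ := h (x := fun j =>
    StrongDual.toWeakDual (InnerProductSpace.toDual ℝ E (b j))) (fun j => by
      simpa using hb j)
  refine ⟨(InnerProductSpace.toDual ℝ E).symm (WeakDual.toStrongDual a), φ, hφ, fun f => ?_⟩
  set y := (InnerProductSpace.toDual ℝ E).symm f with hy
  have hf : ∀ x, f x = ⟪x, y⟫_ℝ := fun x => by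
    rw [real_inner_comm, hy, InnerProductSpace.toDual_symm_apply]
  have h1 : Tendsto (fun j => ⟪b (φ j), y⟫_ℝ) atTop (𝓝 (a y)) :=
    ((WeakDual.eval_continuous y).tendsto a).comp hlim
  simp only [hf]
  rw [InnerProductSpace.toDual_symm_apply]
  exact h1

lemma Esub_inner (hON : ∀ j k, ⟪ζ j, ζ k⟫_ℝ = if j = k then 1 + lam k else 0) {n k : ℕ}
    (hk : n < k) {v : E} (hv : v ∈ Esub ζ n) : ⟪v, ζ k⟫_ℝ = 0 := by
  unfold Esub at hv
  induction hv using Submodule.span_induction with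
  | mem x h =>
    obtain ⟨j, hj, rfl⟩ := h
    have hj' : j ≤ n := hj
    rw [hON, if_neg (by omega)]
  | zero => simp
  | add x y _ _ hx hy => rw [inner_add_left, hx, hy, add_zero]
  | smul a x _ hx => rw [inner_smul_left, hx, mul_zero]

lemma coef_zero (h0 : ∀ k, 0 ≤ lam k) (hb : ∀ k, ζ k = √(1 + lam k) • b k) {u : E} {k : ℕ}
    (h : ⟪u, ζ k⟫_ℝ = 0) : ⟪u, b k⟫_ℝ = 0 := by
  rw [hb, inner_smul_right] at h
  exact (mul_eq_zero.1 h).resolve_left (Real.sqrt_pos.2 (by linarith [h0 k])).ne'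

lemma onV_aux (hmono : Monotone lam) (h0 : ∀ k, 0 ≤ lam k)
    (hb : ∀ k, ζ k = √(1 + lam k) • b k)
    (hON : ∀ j k, ⟪ζ j, ζ k⟫_ℝ = if j = k then 1 + lam k else 0) (n : ℕ) {v : E}
    (hv : v ∈ Esub ζ n) :
    ‖v‖ ^ 2 ≤ (1 + lam n) * ∑' k, coefH lam ζ v k * coefH lam ζ v k := by
  rw [← real_inner_self_eq_norm_sq, ← b.tsum_inner_mul_inner v v, ← tsum_mul_left]
  refine (b.summable_inner_mul_inner v v).tsum_le_tsum (fun k => ?_)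
    ((coef_summable h0 hb v v).mul_left _)
  rw [coef_mul h0 hb, real_inner_comm v (b k)]
  have hp : 0 < 1 + lam k := by linarith [h0 k]
  by_cases hk : k ≤ n
  · have := hmono hk
    rw [← mul_div_assoc, le_div_iff₀ hp]
    nlinarith [mul_self_nonneg ⟪v, b k⟫_ℝ]
  · rw [coef_zero h0 hb (Esub_inner hON (not_le.1 hk) hv)]
    simp

lemma onP_aux (hmono : Monotone lam) (h0 : ∀ k, 0 ≤ lam k)
    (hb : ∀ k, ζ k = √(1 + lam k) • b k) (n : ℕ) {v : E}
    (hv : v ∈ (Esub ζ n)ᗮ) :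
    (1 + lam (n + 1)) * ∑' k, coefH lam ζ v k * coefH lam ζ v k ≤ ‖v‖ ^ 2 := by
  rw [← real_inner_self_eq_norm_sq, ← b.tsum_inner_mul_inner v v, ← tsum_mul_left]
  refine ((coef_summable h0 hb v v).mul_left _).tsum_le_tsum (fun k => ?_)
    (b.summable_inner_mul_inner v v)
  rw [coef_mul h0 hb, real_inner_comm v (b k)]
  have hp : 0 < 1 + lam k := by linarith [h0 k]
  by_cases hk : k ≤ n
  · have hz : ζ k ∈ Esub ζ n := Submodule.subset_span ⟨k, hk, rfl⟩
    have h1 : ⟪v, ζ k⟫_ℝ = 0 := Submodule.inner_left_of_mem_orthogonal hz hv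
    rw [coef_zero h0 hb h1]
    simp
  · have := hmono (Nat.succ_le_of_lt (not_le.1 hk))
    rw [← mul_div_assoc, div_le_iff₀ hp]
    nlinarith [mul_self_nonneg ⟪v, b k⟫_ℝ]

lemma pos_aux (h0 : ∀ k, 0 ≤ lam k) (hb : ∀ k, ζ k = √(1 + lam k) • b k) {v : E} (hv : v ≠ 0) :
    0 < ∑' k, coefH lam ζ v k * coefH lam ζ v k := by
  have : ∃ k, ⟪v, b k⟫_ℝ ≠ 0 := by
    by_contra! hcon
    have h1 := b.tsum_inner_mul_inner v v
    simp only [hcon, zero_mul, tsum_zero] at h1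
    exact hv (inner_self_eq_zero.1 h1.symm)
  obtain ⟨k, hk⟩ := this
  refine (coef_summable h0 hb v v).tsum_pos (fun j => mul_self_nonneg _) k ?_
  rw [coef_mul h0 hb, real_inner_comm v (b k)]
  have hp : 0 < 1 + lam k := by linarith [h0 k]
  have := mul_self_pos.2 hk
  positivity

lemma qForm_eq (h0 : ∀ k, 0 ≤ lam k) (hb : ∀ k, ζ k = √(1 + lam k) • b k)
    (B : E →L[ℝ] E →L[ℝ] ℝ) (hB : ∀ u v, B u v = ∑' k, coefH lam ζ u k * coefH lam ζ v k)
    (l : ℝ) (u v : E) : qForm lam ζ l u v = qq B l u v := by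
  rw [qq, hB, qForm, ← b.tsum_inner_mul_inner u v, ← tsum_mul_left,
    ← (b.summable_inner_mul_inner u v).tsum_sub ((coef_summable h0 hb u v).mul_left _)]
  congr 1
  ext k
  rw [coef_mul h0 hb]
  have hp : 0 < 1 + lam k := by linarith [h0 k]
  field_simp
  ring

lemma Esub_succ (ζ : ℕ → E) (n : ℕ) :
    Esub ζ n ⊔ Submodule.span ℝ {ζ (n + 1)} ≤ Esub ζ (n + 1) := by
  refine sup_le (Submodule.span_mono (image_mono fun k hk => ?_)) ?_
  · exact Nat.le_succ_of_le hk
  · rw [Submodule.span_le]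
    rintro _ rfl
    exact Submodule.subset_span ⟨n + 1, le_refl (n + 1), rfl⟩

lemma sep (hdense : (Submodule.span ℝ (Set.range ζ)).topologicalClosure = ⊤) :
    TopologicalSpace.SeparableSpace E := by
  have h1 : TopologicalSpace.IsSeparable (Submodule.span ℝ (Set.range ζ) : Set E) :=
    (countable_range ζ).isSeparable.span
  have h2 := h1.closure
  rw [← Submodule.topologicalClosure_coe, hdense] at h2
  exact TopologicalSpace.isSeparable_univ_iff.1 h2

end concrete

end MassProof

/-- The set `M_n` of half-squared `H`-norms of ground states over the
spectral gap `(λ_n, λ_{n+1})` is either all of `(0,∞)` or satisfies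
`(0, g_n) ⊆ M_n ⊆ (0, g_n]` for some `g_n > 0`. -/
theorem masses_form_connected_set {E : Type*} [NormedAddCommGroup E]
    [InnerProductSpace ℝ E] [CompleteSpace E]
    (lam : ℕ → ℝ) (ζ : ℕ → E)
    (hlam_mono : Monotone lam) (hlam_nonneg : ∀ k, 0 ≤ lam k)
    (hlam_top : Tendsto lam atTop atTop)
    (hON : ∀ j k, ⟪ζ j, ζ k⟫_ℝ = if j = k then 1 + lam k else 0)
    (hdense : (Submodule.span ℝ (Set.range ζ)).topologicalClosure = ⊤)
    (I : E → ℝ) (I' : E → E →L[ℝ] ℝ)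
    (hIderiv : ∀ u, HasFDerivAt I (I' u) u) (hIderiv_cont : Continuous I')
    (hI1 : ∀ (u : ℕ → E) (a : E),
      (∀ φ : E →L[ℝ] ℝ, Tendsto (fun j => φ (u j)) atTop (𝓝 (φ a))) →
      Tendsto (fun j => I (u j)) atTop (𝓝 (I a)))
    (hI2 : I 0 = 0 ∧ ∀ u : E, u ≠ 0 → 0 < I u)
    (hI3mono : ∀ u : E, u ≠ 0 → MonotoneOn (fun t : ℝ => I (t • u) / t ^ 2) (Ioi 0))
    (hI3zero : ∀ u : E, u ≠ 0 → Tendsto (fun t : ℝ => I (t • u) / t ^ 2) (𝓝[>] 0) (𝓝 0))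
    (hI3top : ∀ u : E, u ≠ 0 → Tendsto (fun t : ℝ => I (t • u) / t ^ 2) atTop atTop)
    (hI4 : ∀ u : E, u ≠ 0 → ∀ v : E, ∀ s : ℝ, -1 ≤ s →
      I u - I ((1 + s) • u + v) + I' u ((s * (s / 2 + 1)) • u + (1 + s) • v) ≤ 0)
    (hI4strict : ∀ u : E, u ≠ 0 → ∀ s : ℝ, -1 ≤ s → s ≠ 0 →
      I u - I ((1 + s) • u) + I' u ((s * (s / 2 + 1)) • u) < 0)
    (n : ℕ)
    (hgap : lam n < lam (n + 1)) :
    {m : ℝ | ∃ lambda ∈ Ioo (lam n) (lam (n + 1)),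
        ∃ u ∈ Qset lam ζ I I' n lambda, m = normHsq lam ζ u / 2} = Ioi 0 ∨
    ∃ g : ℝ, 0 < g ∧
      Ioo 0 g ⊆ {m : ℝ | ∃ lambda ∈ Ioo (lam n) (lam (n + 1)),
        ∃ u ∈ Qset lam ζ I I' n lambda, m = normHsq lam ζ u / 2} ∧
      {m : ℝ | ∃ lambda ∈ Ioo (lam n) (lam (n + 1)),
        ∃ u ∈ Qset lam ζ I I' n lambda, m = normHsq lam ζ u / 2} ⊆ Ioc 0 g := by
  obtain ⟨b, hb⟩ := MassProof.exists_basis lam ζ hlam_nonneg hON hdense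
  obtain ⟨B, hB⟩ := MassProof.exists_B hlam_nonneg hb
  have := MassProof.sep hdense
  have S : MassProof.Setup B (Esub ζ n) (ζ (n + 1)) (lam n) (lam (n + 1)) I I' :=
    { L0nn := hlam_nonneg n
      L01 := hgap
      fin := FiniteDimensional.span_of_finite ℝ ((Set.finite_le_nat n).image ζ)
      symm := fun x y => by rw [hB, hB]; simp only [mul_comm]
      pos := fun x hx => by rw [hB]; exact MassProof.pos_aux hlam_nonneg hb hx
      onV := fun v hv => by
        rw [hB]; exact MassProof.onV_aux hlam_mono hlam_nonneg hb hON n hv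
      onP := fun v hv => by
        rw [hB]; exact MassProof.onP_aux hlam_mono hlam_nonneg hb n hv
      zV := fun h => by
        have h1 := MassProof.Esub_inner hON (Nat.lt_succ_self n) h
        rw [hON, if_pos rfl] at h1
        linarith [hlam_nonneg (n + 1)]
      onz := fun w hw => by
        rw [hB]
        exact MassProof.onV_aux hlam_mono hlam_nonneg hb hON (n + 1) (MassProof.Esub_succ ζ n hw)
      wk := MassProof.weak_compact
      der := hIderiv
      I1 := hI1
      I0 := hI2.1
      Ipos := hI2.2
      I3mono := hI3mono
      I3zero := hI3zero
      I3top := hI3top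
      I4 := hI4
      I4s := hI4strict }
  have hN : ∀ u, normHsq lam ζ u = B u u := fun u => by
    rw [hB, normHsq]; simp only [pow_two]
  have hq := MassProof.qForm_eq hlam_nonneg hb B hB
  have hJ : ∀ l, Jfun lam ζ I l = MassProof.JJ B I l := fun l => by
    ext u; rw [Jfun, hq, MassProof.JJ]
  have hNP : ∀ l, NehariPankov lam ζ I' n l = MassProof.NP B (Esub ζ n) I' l := fun l => by
    simp only [NehariPankov, Jderiv, hq, Fsub, MassProof.NP]
  have hM : {m : ℝ | ∃ lambda ∈ Ioo (lam n) (lam (n + 1)),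
        ∃ u ∈ Qset lam ζ I I' n lambda, m = normHsq lam ζ u / 2} =
      MassProof.MM B (Esub ζ n) (lam n) (lam (n + 1)) I I' := by
    simp only [Qset, clevel, hJ, hNP, hN, MassProof.MM, MassProof.cc, mem_setOf_eq]
  rw [hM]
  exact S.main
end

section
/- Under assumptions (I1)–(I4), let k ≥ 1 be an integer and let n_1 < n_2 < … < n_k be integers with λ_{n_i} < λ_{n_i+1} for each i (so that the spectral gaps (λ_{n_i}, λ_{n_i+1}) are pairwise disjoint). Then there exists μ_k > 0 such that for every μ ∈ (0, μ_k) there exist real numbers Λ_1, …, Λ_k with Λ_i ∈ (λ_{n_i}, λ_{n_i+1}) and vectors u_1, …, u_k ∈ E satisfying q_{Λ_i}(u_i, v) = I′(u_i)[v] for all v ∈ E (i.e. u_i solves A u = Λ_i u + I′(u) weakly) and ‖u_i‖_H = μ for each i; in particular the k pairs (u_i, Λ_i) are distinct. -/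
open Filter Topology Set
open scoped InnerProductSpace

/- Abstract setting: `E = D(A^{1/2})` is a real Hilbert space in which the rescaled
eigenfunctions `ζ_k / √(1+λ_k)` form a Hilbert basis (encoded by `hON` and `hdense` below);
the `H`-inner product of `u, v ∈ E` is recovered as `∑ₖ ⟨u,ζ_k⟩_H ⟨v,ζ_k⟩_H`, where
`⟨u,ζ_k⟩_H = ⟨u,ζ_k⟩_E / (1+λ_k)`. -/

variable {E : Type*} [NormedAddCommGroup E] [InnerProductSpace ℝ E] [CompleteSpace E]

namespace GapProof

variable {E : Type*} [NormedAddCommGroup E] [InnerProductSpace ℝ E]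

/-- the quadratic functional -/
noncomputable def JJ (B : E →L[ℝ] E →L[ℝ] ℝ) (I : E → ℝ) (l : ℝ) (u : E) : ℝ :=
  (⟪u, u⟫_ℝ - (1 + l) * B u u) / 2 - I u

/-- parametrization of `V ⊕ ℝ w` -/
def UU (V : Submodule ℝ E) (w : E) (p : V × ℝ) : E := (p.1 : E) + p.2 • w

/-- all the hypotheses about a single gap -/
structure GapHyp (B : E →L[ℝ] E →L[ℝ] ℝ) (V : Submodule ℝ E) (a b : ℝ) (z : E)
    (I : E → ℝ) (I' : E → E →L[ℝ] ℝ) : Prop where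
  ha : 0 ≤ a
  hab : a < b
  symm : ∀ x y, B x y = B y x
  nonneg : ∀ x, 0 ≤ B x x
  fin : FiniteDimensional ℝ V
  orth : ∀ v ∈ V, ∀ w ∈ Vᗮ, B v w = 0
  low : ∀ v ∈ V, ⟪v, v⟫_ℝ ≤ (1 + a) * B v v
  high : ∀ w ∈ Vᗮ, (1 + b) * B w w ≤ ⟪w, w⟫_ℝ
  zperp : z ∈ Vᗮ
  zne : z ≠ 0
  zeq : ⟪z, z⟫_ℝ = (1 + b) * B z z
  weak : ∀ x : ℕ → E, (∀ j, ‖x j‖ ≤ 1) → ∃ a : E, ∃ φ : ℕ → ℕ, StrictMono φ ∧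
      ∀ f : E →L[ℝ] ℝ, Tendsto (fun j => f (x (φ j))) atTop (𝓝 (f a))
  hIderiv : ∀ u, HasFDerivAt I (I' u) u
  hIderiv_cont : Continuous I'
  hI1 : ∀ (u : ℕ → E) (a : E),
      (∀ φ : E →L[ℝ] ℝ, Tendsto (fun j => φ (u j)) atTop (𝓝 (φ a))) →
      Tendsto (fun j => I (u j)) atTop (𝓝 (I a))
  hI0 : I 0 = 0
  hI2 : ∀ u : E, u ≠ 0 → 0 < I u
  hI3mono : ∀ u : E, u ≠ 0 → MonotoneOn (fun t : ℝ => I (t • u) / t ^ 2) (Ioi 0)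
  hI3zero : ∀ u : E, u ≠ 0 → Tendsto (fun t : ℝ => I (t • u) / t ^ 2) (𝓝[>] 0) (𝓝 0)
  hI3top : ∀ u : E, u ≠ 0 → Tendsto (fun t : ℝ => I (t • u) / t ^ 2) atTop atTop
  hI4 : ∀ u : E, u ≠ 0 → ∀ v : E, ∀ s : ℝ, -1 ≤ s →
      I u - I ((1 + s) • u + v) + I' u ((s * (s / 2 + 1)) • u + (1 + s) • v) ≤ 0
  hI4strict : ∀ u : E, u ≠ 0 → ∀ s : ℝ, -1 ≤ s → s ≠ 0 →
      I u - I ((1 + s) • u) + I' u ((s * (s / 2 + 1)) • u) < 0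

variable {B : E →L[ℝ] E →L[ℝ] ℝ} {V : Submodule ℝ E} {a b : ℝ} {z : E}
    {I : E → ℝ} {I' : E → E →L[ℝ] ℝ}

lemma GapHyp.Icont (h : GapHyp B V a b z I I') : Continuous I :=
  continuous_iff_continuousAt.2 fun u => (h.hIderiv u).continuousAt

lemma GapHyp.Inonneg (h : GapHyp B V a b z I I') (u : E) : 0 ≤ I u := by
  by_cases hu : u = 0
  · rw [hu, h.hI0]
  · exact (h.hI2 u hu).le

lemma GapHyp.Jcont (h : GapHyp B V a b z I I') :
    Continuous fun x : ℝ × E => JJ B I x.1 x.2 := by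
  have := h.Icont
  unfold JJ
  fun_prop

lemma GapHyp.Jlim (h : GapHyp B V a b z I I') {l : ℕ → ℝ} {l0 : ℝ}
    (hl : Tendsto l atTop (𝓝 l0)) {u : ℕ → E} {u0 : E} (hu : Tendsto u atTop (𝓝 u0)) :
    Tendsto (fun j => JJ B I (l j) (u j)) atTop (𝓝 (JJ B I l0 u0)) := by
  have h1 : Tendsto (fun j => (l j, u j)) atTop (𝓝 (l0, u0)) := hl.prodMk_nhds hu
  have h2 := h.Jcont.tendsto (l0, u0)
  exact Tendsto.comp h2 h1

lemma UUlim {p : ℕ → V × ℝ} {p0 : V × ℝ}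
    (hp : Tendsto p atTop (𝓝 p0)) {u : ℕ → E} {u0 : E} (hu : Tendsto u atTop (𝓝 u0)) :
    Tendsto (fun j => UU V (u j) (p j)) atTop (𝓝 (UU V u0 p0)) := by
  have h3 : Tendsto (fun j => ((p j).1 : E)) atTop (𝓝 (p0.1 : E)) :=
    (continuous_subtype_val.tendsto _).comp hp.fst_nhds
  exact h3.add (hp.snd_nhds.smul hu)

/-- expansion of the quadratic part on `V ⊕ ℝ w`. -/
lemma GapHyp.J_UU (h : GapHyp B V a b z I I') (l : ℝ) {w : E} (hw : w ∈ Vᗮ) (p : V × ℝ) :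
    JJ B I l (UU V w p) = (⟪(p.1 : E), p.1⟫_ℝ - (1 + l) * B p.1 p.1) / 2
      + p.2 ^ 2 * ((⟪w, w⟫_ℝ - (1 + l) * B w w) / 2) - I (UU V w p) := by
  have h1 : ⟪(p.1 : E), w⟫_ℝ = 0 := Submodule.inner_right_of_mem_orthogonal p.1.2 hw
  have h1' : ⟪w, (p.1 : E)⟫_ℝ = 0 := Submodule.inner_left_of_mem_orthogonal p.1.2 hw
  have h2 := h.orth _ p.1.2 _ hw
  have h2' := h.symm w p.1
  simp only [JJ, UU, inner_add_left, inner_add_right, map_add, _root_.add_apply,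
    map_smul, _root_.smul_apply, smul_eq_mul, real_inner_smul_left,
    real_inner_smul_right, h1, h1', h2, h2']
  ring

lemma GapHyp.low_q (h : GapHyp B V a b z I I') {l : ℝ} (hl : a ≤ l) {v : E} (hv : v ∈ V) :
    (⟪v, v⟫_ℝ - (1 + l) * B v v) ≤ 0 := by
  nlinarith [h.low v hv, h.nonneg v]

lemma GapHyp.low_q_strict (h : GapHyp B V a b z I I') {l : ℝ} (hl : a < l) {v : E} (hv : v ∈ V)
    (hv0 : v ≠ 0) : (⟪v, v⟫_ℝ - (1 + l) * B v v) < 0 := by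
  have h1 := h.low v hv
  have h2 : 0 < ⟪v, v⟫_ℝ := real_inner_self_pos.2 hv0
  have h3 : 0 < B v v := by
    rcases (h.nonneg v).lt_or_eq with h3 | h3
    · exact h3
    · rw [← h3] at h1; linarith
  nlinarith

lemma GapHyp.high_q (h : GapHyp B V a b z I I') {l : ℝ} (hl : 0 ≤ l) {w : E} (hw : w ∈ Vᗮ) :
    (b - l) / (1 + b) * ⟪w, w⟫_ℝ ≤ ⟪w, w⟫_ℝ - (1 + l) * B w w := by
  have hb : 0 < 1 + b := by linarith [h.ha, h.hab]
  have h1 := h.high w hw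
  have h2 : B w w ≤ ⟪w, w⟫_ℝ / (1 + b) := by rw [le_div_iff₀ hb]; linarith
  have h3 : (b - l) / (1 + b) * ⟪w, w⟫_ℝ = ⟪w, w⟫_ℝ - (1 + l) * (⟪w, w⟫_ℝ / (1 + b)) := by
    field_simp; ring
  rw [h3]
  nlinarith

lemma UU_ne_zero {w : E} (hw : w ∈ Vᗮ) (hw0 : w ≠ 0) {p : V × ℝ} (hp : p ≠ 0) :
    UU V w p ≠ 0 := by
  intro h0
  have h1 : ⟪(p.1 : E), w⟫_ℝ = 0 := Submodule.inner_right_of_mem_orthogonal p.1.2 hw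
  have h2 : ⟪UU V w p, w⟫_ℝ = p.2 * ⟪w, w⟫_ℝ := by
    simp [UU, inner_add_left, real_inner_smul_left, h1]
  rw [h0, inner_zero_left] at h2
  have h3 : p.2 = 0 := by
    rcases mul_eq_zero.1 h2.symm with h3 | h3
    · exact h3
    · exact absurd (inner_self_eq_zero.1 h3) hw0
  apply hp
  have h4 : (p.1 : E) = 0 := by simpa [UU, h3] using h0
  exact Prod.ext (Subtype.ext h4) h3

lemma UU_cont : Continuous fun x : E × (V × ℝ) => UU V x.1 x.2 := by
  unfold UU
  fun_prop

lemma UU_smul (w : E) (c : ℝ) (p : V × ℝ) : UU V w (c • p) = c • UU V w p := by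
  simp [UU, smul_smul]

/-- Key compactness lemma. -/
lemma GapHyp.key (h : GapHyp B V a b z I I') {l : ℕ → ℝ} {l0 : ℝ}
    (hl : Tendsto l atTop (𝓝 l0)) {w : ℕ → E} {w0 : E} (hw : Tendsto w atTop (𝓝 w0))
    (hwV : w0 ∈ Vᗮ) (hw0 : w0 ≠ 0) (p : ℕ → V × ℝ) (M : ℝ)
    (hJ : ∀ j, M ≤ JJ B I (l j) (UU V (w j) (p j))) :
    ∃ p0, ∃ φ : ℕ → ℕ, StrictMono φ ∧ Tendsto (fun j => p (φ j)) atTop (𝓝 p0) := by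
  have := h.fin
  have : ProperSpace V := FiniteDimensional.proper ℝ V
  by_cases hb : ∃ R : ℝ, ∃ᶠ j in atTop, p j ∈ Metric.closedBall (0 : V × ℝ) R
  · obtain ⟨R, hR⟩ := hb
    obtain ⟨p0, -, φ, hφ, hp⟩ := tendsto_subseq_of_frequently_bounded Metric.isBounded_closedBall hR
    exact ⟨p0, φ, hφ, hp⟩
  exfalso
  push Not at hb
  have htop : Tendsto (fun j => ‖p j‖) atTop atTop := by
    rw [tendsto_atTop]
    intro R
    filter_upwards [hb R] with j hj
    simp only [Metric.mem_closedBall, dist_zero_right, not_le] at hj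
    exact hj.le
  obtain ⟨y0, -, φ, hφ, hy⟩ := tendsto_subseq_of_bounded
    (x := fun j => ‖p j‖⁻¹ • p j) (s := Metric.closedBall (0 : V × ℝ) 1)
    Metric.isBounded_closedBall (by
      intro j
      rw [Metric.mem_closedBall, dist_zero_right, norm_smul, norm_inv, norm_norm]
      exact inv_mul_le_one)
  have hr : Tendsto (fun j => ‖p (φ j)‖) atTop atTop := htop.comp hφ.tendsto_atTop
  have hy1 : ‖y0‖ = 1 := by
    have h1 := hy.norm
    refine tendsto_nhds_unique h1 (tendsto_const_nhds.congr' ?_)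
    filter_upwards [hr.eventually_gt_atTop 0] with j hj
    simp only [Function.comp, norm_smul, norm_inv, norm_norm]
    field_simp
  have hy0 : y0 ≠ 0 := by rintro rfl; simp at hy1
  set zz := UU V w0 y0 with hzz
  have hz0 : zz ≠ 0 := UU_ne_zero hwV hw0 hy0
  set q : ℝ := (⟪zz, zz⟫_ℝ - (1 + l0) * B zz zz) / 2 with hq
  obtain ⟨T, hT, hT0⟩ := (((h.hI3top zz hz0).eventually_gt_atTop (q + 1)).and
    (eventually_gt_atTop (0 : ℝ))).exists
  have hwφ := hw.comp hφ.tendsto_atTop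
  have hlφ := hl.comp hφ.tendsto_atTop
  have hz : Tendsto (fun j => UU V (w (φ j)) (‖p (φ j)‖⁻¹ • p (φ j))) atTop (𝓝 zz) :=
    (UU_cont.tendsto (w0, y0)).comp (hwφ.prodMk_nhds hy)
  have hcont : Continuous fun x : ℝ × E =>
      (⟪x.2, x.2⟫_ℝ - (1 + x.1) * B x.2 x.2) / 2 - I (T • x.2) / T ^ 2 := by
    have := h.Icont
    fun_prop
  have hlim := (hcont.tendsto (l0, zz)).comp (hlφ.prodMk_nhds hz)
  have hlt : (⟪zz, zz⟫_ℝ - (1 + l0) * B zz zz) / 2 - I (T • zz) / T ^ 2 < -1 := by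
    have : I (T • zz) / T ^ 2 > q + 1 := hT
    rw [← hq]; linarith
  have hsq : Tendsto (fun j => ‖p (φ j)‖ ^ 2) atTop atTop :=
    (tendsto_pow_atTop two_ne_zero).comp hr
  obtain ⟨j, h1, h2, h3, h4, h5⟩ := ((hlim.eventually_lt_const hlt).and
    ((hr.eventually_ge_atTop T).and ((hr.eventually_gt_atTop 0).and
    ((hsq.eventually_gt_atTop (-M)).and (hz.eventually_ne hz0))))).exists
  simp only [Function.comp] at h1
  set r := ‖p (φ j)‖
  set y := UU V (w (φ j)) (r⁻¹ • p (φ j)) with hydef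
  have hu : UU V (w (φ j)) (p (φ j)) = r • y := by
    rw [hydef, ← UU_smul, smul_smul, mul_inv_cancel₀ h3.ne', one_smul]
  have hJ' := hJ (φ j)
  rw [hu] at hJ'
  have hm : I (T • y) / T ^ 2 ≤ I (r • y) / r ^ 2 := h.hI3mono y h5 hT0 h3 h2
  have hr2 : 0 < r ^ 2 := by positivity
  have hexp : JJ B I (l (φ j)) (r • y) =
      r ^ 2 * ((⟪y, y⟫_ℝ - (1 + l (φ j)) * B y y) / 2 - I (r • y) / r ^ 2) := by
    simp only [JJ, map_smul, _root_.smul_apply, smul_eq_mul, real_inner_smul_left,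
      real_inner_smul_right]
    field_simp
  rw [hexp] at hJ'
  nlinarith

/-- attainment -/
lemma GapHyp.attain (h : GapHyp B V a b z I I') (l : ℝ) {w : E} (hw : w ∈ Vᗮ) (hw0 : w ≠ 0) :
    ∃ p : V × ℝ, 0 ≤ p.2 ∧ ∀ p' : V × ℝ, 0 ≤ p'.2 →
      JJ B I l (UU V w p') ≤ JJ B I l (UU V w p) := by
  have hc : Continuous fun p : V × ℝ => JJ B I l (UU V w p) :=
    h.Jcont.comp (continuous_const.prodMk (UU_cont.comp (continuous_const.prodMk continuous_id)))
  have hclosed : IsClosed {p : V × ℝ | 0 ≤ p.2 ∧ 0 ≤ JJ B I l (UU V w p)} :=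
    (isClosed_le continuous_const continuous_snd).inter (isClosed_le continuous_const hc)
  have hcomp : IsCompact {p : V × ℝ | 0 ≤ p.2 ∧ 0 ≤ JJ B I l (UU V w p)} := by
    apply IsSeqCompact.isCompact
    intro p hp
    obtain ⟨p0, φ, hφ, hlim⟩ := h.key (l := fun _ => l) tendsto_const_nhds (w := fun _ => w)
      tendsto_const_nhds hw hw0 p 0 (fun j => (hp j).2)
    exact ⟨p0, hclosed.mem_of_tendsto hlim (Eventually.of_forall fun j => hp (φ j)), φ, hφ, hlim⟩
  have hzero : JJ B I l (UU V w (0 : V × ℝ)) = 0 := by simp [JJ, UU, h.hI0]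
  obtain ⟨p, hp, hmax⟩ := hcomp.exists_isMaxOn ⟨0, le_refl _, hzero.ge⟩ hc.continuousOn
  refine ⟨p, hp.1, fun p' hp' => ?_⟩
  by_cases h0 : 0 ≤ JJ B I l (UU V w p')
  · exact hmax ⟨hp', h0⟩
  · exact (not_le.1 h0).le.trans hp.2

/-- uniform smallness of `I` near zero -/
lemma GapHyp.small (h : GapHyp B V a b z I I') {ε : ℝ} (hε : 0 < ε) :
    ∃ t : ℝ, 0 < t ∧ ∀ w : E, ‖w‖ ≤ 1 → I (t • w) / t ^ 2 < ε := by
  by_contra hcon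
  push Not at hcon
  have hpos : ∀ j : ℕ, (0 : ℝ) < 1 / ((j : ℝ) + 1) := fun j => Nat.one_div_pos_of_nat
  choose w hw1 hw2 using fun j : ℕ => hcon (1 / ((j : ℝ) + 1)) (hpos j)
  obtain ⟨x, φ, hφ, hx⟩ := h.weak w hw1
  have key : ∀ t : ℝ, 0 < t → ε ≤ I (t • x) / t ^ 2 := by
    intro t ht
    have hlim : Tendsto (fun j => I (t • w (φ j)) / t ^ 2) atTop (𝓝 (I (t • x) / t ^ 2)) := by
      refine (h.hI1 _ _ ?_).div_const _
      intro f
      simpa using (hx f).const_mul t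
    refine ge_of_tendsto hlim ?_
    have h0 : Tendsto (fun j => 1 / (((φ j : ℕ) : ℝ) + 1)) atTop (𝓝 0) :=
      tendsto_one_div_add_atTop_nhds_zero_nat.comp hφ.tendsto_atTop
    filter_upwards [h0.eventually_lt_const ht] with j hj
    have hne : w (φ j) ≠ 0 := by
      intro h0
      have := hw2 (φ j)
      rw [h0, smul_zero, h.hI0, zero_div] at this
      linarith
    exact (hw2 (φ j)).trans (h.hI3mono _ hne (hpos _) ht hj.le)
  by_cases hx0 : x = 0
  · have := key 1 one_pos
    rw [hx0, smul_zero, h.hI0, zero_div] at this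
    linarith
  · have h1 := (h.hI3zero x hx0).eventually_lt_const hε
    obtain ⟨t, ht1, ht2⟩ := (h1.and self_mem_nhdsWithin).exists
    exact absurd (key t ht2) (not_le.2 ht1)


lemma GapHyp.lower (h : GapHyp B V a b z I I') {l : ℝ} (hl0 : 0 ≤ l) (hlb : l < b) :
    ∃ d : ℝ, 0 < d ∧ ∃ r : ℝ, 0 < r ∧ ∀ w ∈ Vᗮ, ‖w‖ = 1 → d ≤ JJ B I l (r • w) := by
  have hb : 0 < 1 + b := by linarith
  have hk : 0 < (b - l) / (1 + b) := div_pos (by linarith) hb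
  set κ := (b - l) / (1 + b) with hκ
  obtain ⟨r, hr, hsm⟩ := h.small (ε := κ / 4) (by linarith)
  refine ⟨r ^ 2 * (κ / 4), by positivity, r, hr, fun w hw hw1 => ?_⟩
  have h1 := h.high_q hl0 hw
  rw [← hκ, real_inner_self_eq_norm_sq, hw1] at h1
  have h2 := hsm w hw1.le
  have hr2 : 0 < r ^ 2 := by positivity
  rw [div_lt_iff₀ hr2] at h2
  have h3 : JJ B I l (r • w) = r ^ 2 * ((⟪w, w⟫_ℝ - (1 + l) * B w w) / 2) - I (r • w) := by
    simp only [JJ, map_smul, _root_.smul_apply, smul_eq_mul, real_inner_smul_left,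
      real_inner_smul_right]
    ring
  rw [h3, real_inner_self_eq_norm_sq, hw1]
  nlinarith

lemma GapHyp.upper (h : GapHyp B V a b z I I') {η : ℝ} (hη : 0 < η) :
    ∀ᶠ l in 𝓝[<] b, ∀ p : V × ℝ, 0 ≤ p.2 → JJ B I l (UU V z p) ≤ η * (b - l) := by
  by_contra hcon
  have hfr : ∃ᶠ l in 𝓝[<] b, (∃ p : V × ℝ, 0 ≤ p.2 ∧ η * (b - l) < JJ B I l (UU V z p)) ∧
      (l < b ∧ a < l) := by
    rw [Filter.not_eventually] at hcon
    have e1 : ∀ᶠ l in 𝓝[<] b, l < b := self_mem_nhdsWithin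
    have e2 : ∀ᶠ l in 𝓝[<] b, a < l := mem_nhdsWithin_of_mem_nhds (lt_mem_nhds h.hab)
    have e3 := hcon.and_eventually (e1.and e2)
    refine e3.mono ?_
    intro l hl
    obtain ⟨h1, h2⟩ := hl
    push Not at h1
    exact ⟨h1, h2⟩
  obtain ⟨l, hl, hl2⟩ := Filter.exists_seq_forall_of_frequently hfr
  choose hp hlb using hl2
  choose p hp0 hp1 using hp
  have hl' : Tendsto l atTop (𝓝 b) := hl.mono_right nhdsWithin_le_nhds
  obtain ⟨p0, φ, hφ, hlim⟩ := h.key hl' (w := fun _ => z) tendsto_const_nhds h.zperp h.zne p 0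
    (fun j => (mul_nonneg hη.le (by linarith [(hlb j).1])).trans (hp1 j).le)
  have hJlim : Tendsto (fun j => JJ B I (l (φ j)) (UU V z (p (φ j)))) atTop
      (𝓝 (JJ B I b (UU V z p0))) :=
    h.Jlim (hl'.comp hφ.tendsto_atTop) (UUlim hlim tendsto_const_nhds)
  have hge : 0 ≤ JJ B I b (UU V z p0) := ge_of_tendsto' hJlim fun j =>
    (mul_nonneg hη.le (by linarith [(hlb (φ j)).1])).trans (hp1 (φ j)).le
  have hp00 : p0 = 0 := by
    by_contra hne
    have h1 := h.hI2 _ (UU_ne_zero h.zperp h.zne hne)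
    rw [h.J_UU b h.zperp, h.zeq] at hge
    have h2 := h.low_q h.hab.le p0.1.2
    linarith
  have ht : Tendsto (fun j => (p (φ j)).2 ^ 2 * (B z z / 2)) atTop (𝓝 0) := by
    have := ((hlim.snd_nhds).pow 2).mul_const (B z z / 2)
    simpa [hp00] using this
  obtain ⟨j, hj⟩ := (ht.eventually_lt_const hη).exists
  have h1 := hp1 (φ j)
  rw [h.J_UU _ h.zperp, h.zeq] at h1
  have h2 := h.low_q (hlb (φ j)).2.le (p (φ j)).1.2
  have h3 := h.Inonneg (UU V z (p (φ j)))
  have h4 : 0 < b - l (φ j) := by linarith [(hlb (φ j)).1]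
  have h5 : (p (φ j)).2 ^ 2 * (((1 + b) * B z z - (1 + l (φ j)) * B z z) / 2) =
    (b - l (φ j)) * ((p (φ j)).2 ^ 2 * (B z z / 2)) := by ring
  rw [h5] at h1
  have h6 := mul_lt_mul_of_pos_left hj h4
  linarith

lemma UU_normalize (w : E) (p : V × ℝ) :
    UU V (‖w‖⁻¹ • w) p = UU V w (p.1, p.2 * ‖w‖⁻¹) := by
  simp [UU, smul_smul]

lemma GapHyp.exists_min (h : GapHyp B V a b z I I') {l0 d r μ : ℝ} (hal : a < l0) (hlb : l0 < b)
    (hr : 0 < r) (hd : ∀ w ∈ Vᗮ, ‖w‖ = 1 → d ≤ JJ B I l0 (r • w)) (hμ : 0 < μ)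
    (hμd : μ ^ 2 / 2 * (b - l0) < d) :
    ∃ l1 ls m : ℝ, ∃ w : E, l0 < ls ∧ ls < l1 ∧ l1 < b ∧ w ∈ Vᗮ ∧ w ≠ 0 ∧
      (∀ p : V × ℝ, 0 ≤ p.2 → JJ B I ls (UU V w p) + μ ^ 2 / 2 * ls ≤ m) ∧
      (∀ l ∈ Icc l0 l1, ∀ w ∈ Vᗮ, w ≠ 0 → ∃ p : V × ℝ, 0 ≤ p.2 ∧
        m ≤ JJ B I l (UU V w p) + μ ^ 2 / 2 * l) := by
  have hμ2 : 0 < μ ^ 2 / 2 := by positivity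
  set ν := μ ^ 2 / 2 with hν
  have e1 : ∀ᶠ l in 𝓝[<] b, l < b := self_mem_nhdsWithin
  have e2 : ∀ᶠ l in 𝓝[<] b, l0 < l := mem_nhdsWithin_of_mem_nhds (lt_mem_nhds hlb)
  obtain ⟨lt, hlt1, hlt2, hlt3⟩ := ((h.upper (η := ν / 2) (by linarith)).and (e1.and e2)).exists
  set c0 := ν / 2 * (b - lt) + ν * lt with hc0
  set l1 := (lt + 3 * b) / 4 with hl1
  have hl1b : l1 < b := by rw [hl1]; linarith
  have hltl1 : lt < l1 := by rw [hl1]; linarith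
  have hc0l1 : c0 < ν * l1 := by rw [hc0, hl1]; nlinarith
  have hl00 : 0 ≤ l0 := by linarith [h.ha]
  let S : Set ℝ := {c | ∃ l ∈ Icc l0 l1, ∃ w ∈ Vᗮ, w ≠ 0 ∧
    ∀ p : V × ℝ, 0 ≤ p.2 → JJ B I l (UU V w p) + ν * l ≤ c}
  have hS0 : c0 ∈ S := by
    refine ⟨lt, ⟨hlt3.le, hltl1.le⟩, z, h.zperp, h.zne, fun p hp => ?_⟩
    have := hlt1 p hp
    rw [hc0]; linarith
  have hJ0 : ∀ l w, JJ B I l (UU V w (0 : V × ℝ)) = 0 := fun l w => by simp [JJ, UU, h.hI0]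
  have hSb : BddBelow S := by
    refine ⟨0, ?_⟩
    rintro c ⟨l, hl, w, -, -, hc⟩
    have := hc 0 le_rfl
    rw [hJ0] at this
    have : 0 ≤ ν * l := mul_nonneg hμ2.le (by linarith [hl.1])
    linarith
  set m := sInf S with hm
  have hmc0 : m ≤ c0 := csInf_le hSb hS0
  obtain ⟨c, -, hclim, hcS⟩ := exists_seq_tendsto_sInf ⟨c0, hS0⟩ hSb
  have hcS' : ∀ j, ∃ l ∈ Icc l0 l1, ∃ w ∈ Vᗮ, ‖w‖ = 1 ∧
    ∀ p : V × ℝ, 0 ≤ p.2 → JJ B I l (UU V w p) + ν * l ≤ c j := by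
    intro j
    obtain ⟨l, hl, w, hwV, hw0, hc⟩ := hcS j
    refine ⟨l, hl, ‖w‖⁻¹ • w, Submodule.smul_mem _ _ hwV, ?_, fun p hp => ?_⟩
    · rw [norm_smul, norm_inv, norm_norm, inv_mul_cancel₀ (norm_ne_zero_iff.2 hw0)]
    · rw [UU_normalize w]
      exact hc _ (mul_nonneg hp (by positivity))
  choose l hl w hwV hw1 hc using hcS'
  obtain ⟨ls, hls, φ1, hφ1, hlim1⟩ := isCompact_Icc.tendsto_subseq hl
  obtain ⟨x, φ2, hφ2, hx⟩ := h.weak (fun j => w (φ1 j)) (fun j => (hw1 _).le)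
  have hφ : Tendsto (fun j => φ1 (φ2 j)) atTop atTop :=
    hφ1.tendsto_atTop.comp hφ2.tendsto_atTop
  set φ : ℕ → ℕ := fun j => φ1 (φ2 j) with hφdef
  have hlφ : Tendsto (fun j => l (φ j)) atTop (𝓝 ls) := hlim1.comp hφ2.tendsto_atTop
  have hcφ : Tendsto (fun j => c (φ j)) atTop (𝓝 m) := hclim.comp hφ
  have hwφ : ∀ f : E →L[ℝ] ℝ, Tendsto (fun j => f (w (φ j))) atTop (𝓝 (f x)) := hx
  have hxV : x ∈ Vᗮ := by
    rw [Submodule.mem_orthogonal]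
    intro v hv
    have h1 := hwφ (innerSL ℝ v)
    refine tendsto_nhds_unique h1 (tendsto_const_nhds.congr fun j => ?_)
    exact (Submodule.inner_right_of_mem_orthogonal hv (hwV _)).symm
  have hIw : ∀ p : V × ℝ, Tendsto (fun j => I (UU V (w (φ j)) p)) atTop (𝓝 (I (UU V x p))) := by
    intro p
    apply h.hI1
    intro f
    simp only [UU, map_add, map_smul, smul_eq_mul]
    exact tendsto_const_nhds.add ((hwφ f).const_mul _)
  have hx0 : x ≠ 0 := by
    intro hx0
    have hk : 0 < (b - l1) / (1 + b) := div_pos (by linarith) (by linarith)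
    set κ := (b - l1) / (1 + b) with hκ
    have hT : Tendsto (fun T : ℝ => T ^ 2 * (κ / 2)) atTop atTop :=
      (tendsto_pow_atTop two_ne_zero).atTop_mul_const (by linarith)
    obtain ⟨T, hT1, hT0⟩ := ((hT.eventually_gt_atTop m).and (eventually_gt_atTop 0)).exists
    have h1 := hIw (0, T)
    have h2 : I (UU V x ((0, T) : V × ℝ)) = 0 := by simp [UU, hx0, h.hI0]
    rw [h2] at h1
    have h3 : T ^ 2 * (κ / 2) ≤ m := by
      have h4 := hcφ.add h1
      rw [add_zero] at h4
      refine ge_of_tendsto' h4 fun j => ?_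
      have h5 := hc (φ j) (0, T) hT0.le
      rw [h.J_UU _ (hwV _)] at h5
      have h6 := h.high_q (l := l (φ j)) (by linarith [(hl (φ j)).1]) (hwV (φ j))
      rw [real_inner_self_eq_norm_sq (w (φ j)), hw1] at h5 h6
      have h7 : κ ≤ (b - l (φ j)) / (1 + b) := by
        rw [hκ]
        exact div_le_div_of_nonneg_right (by linarith [(hl (φ j)).2]) (by linarith)
      have h8 : 0 ≤ ν * l (φ j) := mul_nonneg hμ2.le (by linarith [(hl (φ j)).1])
      simp only [ZeroMemClass.coe_zero, map_zero, inner_zero_left, mul_zero, sub_zero, zero_div,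
        zero_add] at h5
      have h9 : T ^ 2 * (κ / 2) ≤ T ^ 2 * ((1 ^ 2 - (1 + l (φ j)) * B (w (φ j)) (w (φ j))) / 2) := by
        apply mul_le_mul_of_nonneg_left _ (by positivity)
        linarith
      linarith
    linarith
  have hclaim : ∀ p : V × ℝ, 0 ≤ p.2 → JJ B I ls (UU V x p) + ν * ls ≤ m := by
    intro p hp
    have hlin1 := hwφ (innerSL ℝ x)
    have hlin2 := hwφ (B x)
    have hone : Tendsto (fun j => 1 + l (φ j)) atTop (𝓝 (1 + ls)) := hlφ.const_add 1
    have hA : Tendsto (fun j => (⟪(p.1 : E), p.1⟫_ℝ - (1 + l (φ j)) * B p.1 p.1) / 2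
        + p.2 ^ 2 * ((2 * (innerSL ℝ x (w (φ j)) - (1 + l (φ j)) * B x (w (φ j)))
          - (⟪x, x⟫_ℝ - (1 + l (φ j)) * B x x)) / 2) - I (UU V (w (φ j)) p) + ν * l (φ j)) atTop
        (𝓝 ((⟪(p.1 : E), p.1⟫_ℝ - (1 + ls) * B p.1 p.1) / 2
        + p.2 ^ 2 * ((2 * (innerSL ℝ x x - (1 + ls) * B x x)
          - (⟪x, x⟫_ℝ - (1 + ls) * B x x)) / 2) - I (UU V x p) + ν * ls)) := by
      refine ((Tendsto.add ((tendsto_const_nhds.sub (hone.mul_const _)).div_const _)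
        (((((hlin1.sub (hone.mul hlin2)).const_mul 2).sub
          (tendsto_const_nhds.sub (hone.mul_const _))).div_const _).const_mul _)).sub
          (hIw p)).add (hlφ.const_mul _)
    have hB := le_of_tendsto_of_tendsto' hA hcφ fun j => by
      refine le_trans ?_ (hc (φ j) p hp)
      rw [h.J_UU _ (hwV _)]
      have hlj := hl (φ j)
      have h6 := h.high_q (l := l (φ j)) (by linarith [hlj.1])
        (Submodule.sub_mem _ (hwV (φ j)) hxV)
      have h7 : 0 ≤ (b - l (φ j)) / (1 + b) * ⟪w (φ j) - x, w (φ j) - x⟫_ℝ :=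
        mul_nonneg (div_nonneg (by linarith [hlj.2]) (by linarith)) real_inner_self_nonneg
      have h8 := h7.trans h6
      simp only [inner_sub_left, inner_sub_right, map_sub, _root_.sub_apply] at h8
      rw [real_inner_comm x (w (φ j)), h.symm (w (φ j)) x] at h8
      have h9 : innerSL ℝ x (w (φ j)) = ⟪x, w (φ j)⟫_ℝ := rfl
      rw [h9]
      have h10 : p.2 ^ 2 * ((2 * (⟪x, w (φ j)⟫_ℝ - (1 + l (φ j)) * B x (w (φ j)))
          - (⟪x, x⟫_ℝ - (1 + l (φ j)) * B x x)) / 2) ≤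
          p.2 ^ 2 * ((⟪w (φ j), w (φ j)⟫_ℝ - (1 + l (φ j)) * B (w (φ j)) (w (φ j))) / 2) := by
        apply mul_le_mul_of_nonneg_left _ (by positivity)
        linarith
      linarith
    rw [h.J_UU _ hxV]
    have h9 : innerSL ℝ x x = ⟪x, x⟫_ℝ := rfl
    rw [h9] at hB
    refine le_trans (le_of_eq ?_) hB
    ring
  refine ⟨l1, ls, m, x, ?_, ?_, hl1b, hxV, hx0, hclaim, ?_⟩
  · rcases hls.1.lt_or_eq with h1 | h1
    · exact h1
    exfalso
    have h2 := hclaim (0, r * ‖x‖⁻¹) (mul_nonneg hr.le (by positivity))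
    have h3 := hd (‖x‖⁻¹ • x) (Submodule.smul_mem _ _ hxV)
      (by rw [norm_smul, norm_inv, norm_norm, inv_mul_cancel₀ (norm_ne_zero_iff.2 hx0)])
    rw [h1] at h3
    simp only [UU, ZeroMemClass.coe_zero, zero_add] at h2
    rw [smul_smul] at h3
    have h4 : c0 ≤ ν * b := by nlinarith
    have h5 : ν * (b - l0) = ν * b - ν * ls := by rw [h1]; ring
    linarith
  · rcases hls.2.lt_or_eq with h1 | h1
    · exact h1
    exfalso
    have h2 := hclaim 0 le_rfl
    rw [hJ0, h1] at h2
    linarith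
  · intro l hl w hwV hw0
    obtain ⟨p, hp, hmax⟩ := h.attain l hwV hw0
    refine ⟨p, hp, csInf_le hSb ⟨l, hl, w, hwV, hw0, fun p' hp' => ?_⟩⟩
    linarith [hmax p' hp']


/-- derivative of `JJ` -/
noncomputable def dJ (B : E →L[ℝ] E →L[ℝ] ℝ) (I' : E → E →L[ℝ] ℝ) (l : ℝ) (u h : E) : ℝ :=
  ⟪u, h⟫_ℝ - (1 + l) * B u h - I' u h

lemma GapHyp.dJcont (hh : GapHyp B V a b z I I') (l : ℝ) (h : E) :
    Continuous fun u => dJ B I' l u h := by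
  have := hh.hIderiv_cont
  unfold dJ
  fun_prop

lemma GapHyp.hasDerivAt (hh : GapHyp B V a b z I I') (l : ℝ) (u h : E) (t : ℝ) :
    HasDerivAt (fun s : ℝ => JJ B I l (u + s • h)) (dJ B I' l (u + t • h) h) t := by
  have h1 : HasDerivAt (fun s : ℝ => u + s • h) h t := by
    simpa using ((hasDerivAt_id t).smul_const h).const_add u
  have h2 := (hh.hIderiv (u + t • h)).comp_hasDerivAt t h1
  have h3 : HasDerivAt (fun s : ℝ => (⟪u, u⟫_ℝ - (1 + l) * B u u) / 2
      + s * (⟪u, h⟫_ℝ - (1 + l) * B u h) + s ^ 2 * ((⟪h, h⟫_ℝ - (1 + l) * B h h) / 2))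
      ((⟪u, h⟫_ℝ - (1 + l) * B u h) + t * (⟪h, h⟫_ℝ - (1 + l) * B h h)) t := by
    have h4 := (((hasDerivAt_id t).mul_const (⟪u, h⟫_ℝ - (1 + l) * B u h)).const_add
      ((⟪u, u⟫_ℝ - (1 + l) * B u u) / 2)).add
      (((hasDerivAt_id t).pow 2).mul_const ((⟪h, h⟫_ℝ - (1 + l) * B h h) / 2))
    refine h4.congr_deriv ?_
    simp
    ring
  have h5 := h3.sub h2
  have e1 : (fun s : ℝ => JJ B I l (u + s • h)) = (fun s : ℝ => (⟪u, u⟫_ℝ - (1 + l) * B u u) / 2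
      + s * (⟪u, h⟫_ℝ - (1 + l) * B u h) + s ^ 2 * ((⟪h, h⟫_ℝ - (1 + l) * B h h) / 2)) -
      (I ∘ fun s : ℝ => u + s • h) := by
    funext s
    simp only [JJ, inner_add_left, inner_add_right, map_add, _root_.add_apply,
      map_smul, _root_.smul_apply, smul_eq_mul, real_inner_smul_left,
      real_inner_smul_right, Pi.sub_apply, Function.comp, hh.symm h u, real_inner_comm u h]
    ring
  rw [e1]
  refine h5.congr_deriv ?_
  · simp only [dJ, inner_add_left, map_add, _root_.add_apply,
      map_smul, _root_.smul_apply, smul_eq_mul, real_inner_smul_left]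
    ring

/-- mean value inequality -/
lemma GapHyp.mvt (hh : GapHyp B V a b z I I') (l : ℝ) (u h : E) {s : ℝ} (hs : 0 < s)
    (hle : JJ B I l u ≤ JJ B I l (u + s • h)) :
    ∃ c ∈ Icc 0 s, 0 ≤ dJ B I' l (u + c • h) h := by
  obtain ⟨c, hc, he⟩ := exists_hasDerivAt_eq_slope (fun s : ℝ => JJ B I l (u + s • h))
    (fun t => dJ B I' l (u + t • h) h) hs
    (fun t _ => (hh.hasDerivAt l u h t).continuousAt.continuousWithinAt)
    (fun t _ => hh.hasDerivAt l u h t)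
  refine ⟨c, Ioo_subset_Icc_self hc, ?_⟩
  rw [he]
  simp only [zero_smul, add_zero, sub_zero]
  exact div_nonneg (by linarith) hs.le

/-- properties of a maximizer -/
lemma GapHyp.max_pos (h : GapHyp B V a b z I I') {l : ℝ} (hal : a < l) (hlb : l < b) {w : E}
    (hw : w ∈ Vᗮ) (hw0 : w ≠ 0) {p : V × ℝ} (hp : 0 ≤ p.2)
    (hmax : ∀ p' : V × ℝ, 0 ≤ p'.2 → JJ B I l (UU V w p') ≤ JJ B I l (UU V w p)) : 0 < p.2 := by
  rcases hp.lt_or_eq with h1 | h1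
  · exact h1
  exfalso
  have hl0 : 0 ≤ l := by linarith [h.ha]
  obtain ⟨d, hd, r, hr, hdr⟩ := h.lower hl0 hlb
  have h2 := hdr (‖w‖⁻¹ • w) (Submodule.smul_mem _ _ hw)
    (by rw [norm_smul, norm_inv, norm_norm, inv_mul_cancel₀ (norm_ne_zero_iff.2 hw0)])
  have h3 := hmax (0, r * ‖w‖⁻¹) (mul_nonneg hr.le (by positivity))
  have h4 : UU V w ((0, r * ‖w‖⁻¹) : V × ℝ) = r • ‖w‖⁻¹ • w := by simp [UU, smul_smul]
  rw [h4, h.J_UU l hw p, ← h1] at h3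
  have h5 := h.low_q hal.le p.1.2
  have h6 := h.Inonneg (UU V w p)
  have h7 : (0 : ℝ) ^ 2 * ((⟪w, w⟫_ℝ - (1 + l) * B w w) / 2) = 0 := by ring
  rw [h7] at h3
  linarith

lemma GapHyp.max_crit (h : GapHyp B V a b z I I') {l : ℝ} {w : E}
    {p : V × ℝ} (hp : 0 < p.2)
    (hmax : ∀ p' : V × ℝ, 0 ≤ p'.2 → JJ B I l (UU V w p') ≤ JJ B I l (UU V w p)) (x : V × ℝ) :
    dJ B I' l (UU V w p) (UU V w x) = 0 := by
  have h1 := h.hasDerivAt l (UU V w p) (UU V w x) 0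
  rw [zero_smul, add_zero] at h1
  refine IsLocalMax.hasDerivAt_eq_zero ?_ h1
  have h2 : Tendsto (fun s : ℝ => p.2 + s * x.2) (𝓝 0) (𝓝 (p.2 + 0 * x.2)) :=
    (Continuous.tendsto (by fun_prop) 0)
  rw [zero_mul, add_zero] at h2
  filter_upwards [h2.eventually_const_lt hp] with s hs
  have h3 : UU V w p + s • UU V w x = UU V w (p + s • x) := by
    simp only [UU, Prod.fst_add, Prod.snd_add, Prod.smul_fst, Prod.smul_snd, smul_eq_mul,
      Submodule.coe_add, Submodule.coe_smul, smul_add, add_smul, smul_smul]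
    abel
  rw [h3, zero_smul, add_zero]
  exact hmax _ (by simpa using hs.le)

lemma GapHyp.max_unique (h : GapHyp B V a b z I I') {l : ℝ} (hal : a < l) (hlb : l < b) {w : E}
    (hw : w ∈ Vᗮ) (hw0 : w ≠ 0) {p : V × ℝ} (hp : 0 ≤ p.2)
    (hmax : ∀ p' : V × ℝ, 0 ≤ p'.2 → JJ B I l (UU V w p') ≤ JJ B I l (UU V w p))
    {p' : V × ℝ} (hp' : 0 ≤ p'.2) (hge : JJ B I l (UU V w p) ≤ JJ B I l (UU V w p')) :
    p' = p := by
  have hpos := h.max_pos hal hlb hw hw0 hp hmax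
  have hcrit := h.max_crit hpos hmax
  set u := UU V w p with hu
  have hpne : p ≠ 0 := by rintro rfl; simp at hpos
  have hu0 : u ≠ 0 := UU_ne_zero hw hw0 hpne
  set s : ℝ := p'.2 / p.2 - 1 with hs
  have hs1 : -1 ≤ s := by
    have : 0 ≤ p'.2 / p.2 := by positivity
    rw [hs]; linarith
  set v : V := p'.1 - (1 + s) • p.1 with hv
  have hsp : (1 + s) * p.2 = p'.2 := by rw [hs]; field_simp; ring
  have hu' : UU V w p' = (1 + s) • u + (v : E) := by
    rw [hu, hv]
    simp only [UU, ← hsp, Submodule.coe_sub, Submodule.coe_smul, smul_add, smul_smul]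
    abel
  have hcu : dJ B I' l u u = 0 := hcrit p
  have hcv : dJ B I' l u (v : E) = 0 := by
    have := hcrit (v, 0)
    simpa [UU] using this
  have hI := h.hI4 u hu0 (v : E) s hs1
  rw [hu'] at hge
  have hexp : JJ B I l ((1 + s) • u + (v : E)) - JJ B I l u =
      (⟪(v : E), v⟫_ℝ - (1 + l) * B v v) / 2 +
      (I u - I ((1 + s) • u + v) + I' u ((s * (s / 2 + 1)) • u + (1 + s) • (v : E)))
      + (s * (s / 2 + 1)) * dJ B I' l u u + (1 + s) * dJ B I' l u (v : E) := by
    simp only [JJ, dJ, inner_add_left, inner_add_right, map_add, _root_.add_apply,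
      map_smul, _root_.smul_apply, smul_eq_mul, real_inner_smul_left,
      real_inner_smul_right, h.symm (v : E) u, real_inner_comm u (v : E)]
    ring
  rw [hcu, hcv] at hexp
  have hv0 : v = 0 := by
    by_contra hne
    have := h.low_q_strict hal v.2 (by simpa using hne)
    linarith
  have hs0 : s = 0 := by
    by_contra hne
    have h1 := h.hI4strict u hu0 s hs1 hne
    rw [hv0] at hexp hge
    simp only [ZeroMemClass.coe_zero, add_zero, smul_zero, map_zero, inner_zero_left, mul_zero,
      sub_zero, zero_div, zero_add] at hexp hge
    linarith
  rw [hs0] at hsp hv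
  refine Prod.ext ?_ (by linarith)
  rw [hv0, add_zero, one_smul] at hv
  exact (sub_eq_zero.1 hv.symm)

lemma GapHyp.main (h : GapHyp B V a b z I I') :
    ∃ μ0 : ℝ, 0 < μ0 ∧ ∀ μ : ℝ, 0 < μ → μ < μ0 → ∃ l ∈ Ioo a b, ∃ u : E,
      (∀ x, ⟪u, x⟫_ℝ - (1 + l) * B u x = I' u x) ∧ B u u = μ ^ 2 := by
  have hfin := h.fin
  have hab := h.hab
  have ha := h.ha
  set l0 := (a + b) / 2 with hl0
  have hal0 : a < l0 := by rw [hl0]; linarith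
  have hl0b : l0 < b := by rw [hl0]; linarith
  obtain ⟨d, hd, r, hr, hdr⟩ := h.lower (l := l0) (by linarith) hl0b
  have hpos : 0 < 2 * d / (b - l0) := div_pos (by linarith) (by linarith)
  refine ⟨√(2 * d / (b - l0)), Real.sqrt_pos.2 hpos, fun μ hμ hμ0 => ?_⟩
  have hμd : μ ^ 2 / 2 * (b - l0) < d := by
    rw [Real.lt_sqrt hμ.le, lt_div_iff₀ (by linarith)] at hμ0
    linarith
  obtain ⟨l1, ls, m, w, h0s, hs1, h1b, hwV, hw0, hle, hge⟩ :=
    h.exists_min hal0 hl0b hr hdr hμ hμd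
  set ν := μ ^ 2 / 2 with hν
  have hals : a < ls := by linarith
  have hlsb : ls < b := by linarith
  obtain ⟨p, hp, hmax⟩ := h.attain ls hwV hw0
  have hpm : m ≤ JJ B I ls (UU V w p) + ν * ls := by
    obtain ⟨p', hp', h1⟩ := hge ls ⟨h0s.le, hs1.le⟩ w hwV hw0
    linarith [hmax p' hp']
  have hppos := h.max_pos hals hlsb hwV hw0 hp hmax
  have hcrit := h.max_crit hppos hmax
  have hlimit : ∀ (l : ℕ → ℝ) (ww : ℕ → E) (pp : ℕ → V × ℝ), Tendsto l atTop (𝓝 ls) →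
      Tendsto ww atTop (𝓝 w) → (∀ j, l j ≤ l1) → (∀ j, 0 ≤ (pp j).2) →
      (∀ j, m ≤ JJ B I (l j) (UU V (ww j) (pp j)) + ν * l j) →
      ∃ φ : ℕ → ℕ, StrictMono φ ∧ Tendsto (fun j => pp (φ j)) atTop (𝓝 p) := by
    intro l ww pp hl hww hl1 hpp hm
    obtain ⟨p0, φ, hφ, hlim⟩ := h.key hl hww hwV hw0 pp (m - ν * l1) (fun j => by
      have : ν * l j ≤ ν * l1 := mul_le_mul_of_nonneg_left (hl1 j) (by rw [hν]; positivity)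
      linarith [hm j])
    refine ⟨φ, hφ, ?_⟩
    have hJlim : Tendsto (fun j => JJ B I (l (φ j)) (UU V (ww (φ j)) (pp (φ j)))) atTop
        (𝓝 (JJ B I ls (UU V w p0))) :=
      h.Jlim (hl.comp hφ.tendsto_atTop) (UUlim hlim (hww.comp hφ.tendsto_atTop))
    have h1 : m ≤ JJ B I ls (UU V w p0) + ν * ls :=
      ge_of_tendsto' (hJlim.add ((hl.comp hφ.tendsto_atTop).const_mul ν)) fun j => hm (φ j)
    have h2 : 0 ≤ p0.2 := ge_of_tendsto' hlim.snd_nhds fun j => hpp (φ j)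
    have h3 : p0 = p := by
      refine h.max_unique hals hlsb hwV hw0 hp hmax h2 ?_
      linarith [hle p hp]
    rwa [h3] at hlim
  have hUp : ∀ (q : ℕ → V × ℝ), Tendsto q atTop (𝓝 p) →
      Tendsto (fun j => UU V w (q j)) atTop (𝓝 (UU V w p)) := fun q hq =>
    UUlim hq tendsto_const_nhds
  -- derivative in orthogonal directions
  have hdir : ∀ x ∈ Vᗮ, 0 ≤ dJ B I' ls (UU V w p) x := by
    intro x hx
    have hwc : Tendsto (fun ε : ℝ => w + ε • x) (𝓝[>] 0) (𝓝 w) := by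
      have : Tendsto (fun ε : ℝ => w + ε • x) (𝓝 0) (𝓝 (w + (0 : ℝ) • x)) :=
        Continuous.tendsto (by fun_prop) 0
      rw [zero_smul, add_zero] at this
      exact this.mono_left nhdsWithin_le_nhds
    have e1 : ∀ᶠ ε : ℝ in 𝓝[>] 0, w + ε • x ≠ 0 := hwc.eventually_ne hw0
    have e2 : ∀ᶠ ε : ℝ in 𝓝[>] 0, 0 < ε := self_mem_nhdsWithin
    have e3 := (e1.and e2).frequently
    obtain ⟨ε, hε, hε2⟩ := Filter.exists_seq_forall_of_frequently e3
    choose pp hpp hppm using fun j => hge ls ⟨h0s.le, hs1.le⟩ (w + ε j • x)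
      (Submodule.add_mem _ hwV (Submodule.smul_mem _ _ hx)) (hε2 j).1
    obtain ⟨φ, hφ, hlim⟩ := hlimit (fun _ => ls) (fun j => w + ε j • x) pp tendsto_const_nhds
      (hwc.comp hε) (fun _ => hs1.le) hpp hppm
    have hex : ∀ j, ∃ c ∈ Icc 0 ((pp j).2 * ε j), 0 < (pp j).2 →
        0 ≤ dJ B I' ls (UU V w (pp j) + c • x) x := by
      intro j
      by_cases hpj : 0 < (pp j).2
      · obtain ⟨c, hc, h1⟩ := h.mvt ls (UU V w (pp j)) x (mul_pos hpj (hε2 j).2) (by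
          have h2 : UU V w (pp j) + ((pp j).2 * ε j) • x = UU V (w + ε j • x) (pp j) := by
            simp only [UU, smul_add, smul_smul]; abel
          rw [h2]
          linarith [hle (pp j) (hpp j), hppm j])
        exact ⟨c, hc, fun _ => h1⟩
      · exact ⟨0, ⟨le_rfl, mul_nonneg (hpp j) (hε2 j).2.le⟩, fun h => absurd h hpj⟩
    choose c hc hcd using hex
    have hε' : Tendsto (fun j => ε (φ j)) atTop (𝓝 0) :=
      (hε.mono_right nhdsWithin_le_nhds).comp hφ.tendsto_atTop
    have hclim : Tendsto (fun j => c (φ j)) atTop (𝓝 0) := by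
      have h1 := hlim.snd_nhds.mul hε'
      rw [mul_zero] at h1
      exact squeeze_zero (fun j => (hc (φ j)).1) (fun j => (hc (φ j)).2) h1
    have h1 : Tendsto (fun j => UU V w (pp (φ j)) + c (φ j) • x) atTop (𝓝 (UU V w p)) := by
      have := (hUp _ hlim).add (hclim.smul_const x)
      rwa [zero_smul, add_zero] at this
    have h2 := ((h.dJcont ls x).tendsto (UU V w p)).comp h1
    refine ge_of_tendsto h2 ?_
    filter_upwards [hlim.snd_nhds.eventually_const_lt hppos] with j hj
    exact hcd (φ j) hj
  have hBc : Continuous fun u : E => B u u := by fun_prop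
  -- derivative in `l`
  have hmass : ∀ σ : ℝ, σ = 1 ∨ σ = -1 → 0 ≤ σ * (ν - B (UU V w p) (UU V w p) / 2) := by
    intro σ hσ
    have hlc : Tendsto (fun ε : ℝ => ls + ε * σ) (𝓝[>] 0) (𝓝 ls) := by
      have : Tendsto (fun ε : ℝ => ls + ε * σ) (𝓝 0) (𝓝 (ls + (0 : ℝ) * σ)) :=
        Continuous.tendsto (by fun_prop) 0
      rw [zero_mul, add_zero] at this
      exact this.mono_left nhdsWithin_le_nhds
    have e1 : ∀ᶠ ε : ℝ in 𝓝[>] 0, l0 < ls + ε * σ := hlc.eventually_const_lt h0s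
    have e4 : ∀ᶠ ε : ℝ in 𝓝[>] 0, ls + ε * σ < l1 := hlc.eventually_lt_const hs1
    have e2 : ∀ᶠ ε : ℝ in 𝓝[>] 0, 0 < ε := self_mem_nhdsWithin
    have e3 := (e1.and (e4.and e2)).frequently
    obtain ⟨ε, hε, hε2⟩ := Filter.exists_seq_forall_of_frequently e3
    choose pp hpp hppm using fun j => hge (ls + ε j * σ) ⟨(hε2 j).1.le, (hε2 j).2.1.le⟩ w hwV hw0
    obtain ⟨φ, hφ, hlim⟩ := hlimit (fun j => ls + ε j * σ) (fun j => w) pp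
      (hlc.comp hε) tendsto_const_nhds (fun j => (hε2 j).2.1.le) hpp hppm
    have h2 := ((hBc.tendsto (UU V w p)).comp (hUp _ hlim))
    refine ge_of_tendsto' (((h2.div_const 2).const_sub ν).const_mul σ) fun j => ?_
    have h3 := hppm (φ j)
    have h4 := hle (pp (φ j)) (hpp (φ j))
    have h5 : JJ B I (ls + ε (φ j) * σ) (UU V w (pp (φ j))) = JJ B I ls (UU V w (pp (φ j)))
      - ε (φ j) * (σ * (B (UU V w (pp (φ j))) (UU V w (pp (φ j))) / 2)) := by
      simp only [JJ]; ring
    rw [h5] at h3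
    have h6 : 0 ≤ ε (φ j) *
        (σ * (ν - B (UU V w (pp (φ j))) (UU V w (pp (φ j))) / 2)) := by
      have h7 : ε (φ j) * (σ * (ν - B (UU V w (pp (φ j))) (UU V w (pp (φ j))) / 2)) =
        ν * (ls + ε (φ j) * σ) - ν * ls
        - ε (φ j) * (σ * (B (UU V w (pp (φ j))) (UU V w (pp (φ j))) / 2)) := by ring
      rw [h7]; linarith
    exact nonneg_of_mul_nonneg_right h6 (hε2 (φ j)).2.2
  refine ⟨ls, ⟨hals, hlsb⟩, UU V w p, fun x => ?_, ?_⟩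
  · obtain ⟨y, hy, x', hx', rfl⟩ := V.exists_add_mem_mem_orthogonal x
    have h1 := hcrit (⟨y, hy⟩, 0)
    have h2 := hdir x' hx'
    have h3 := hdir (-x') (Submodule.neg_mem _ hx')
    simp only [UU, zero_smul, add_zero] at h1
    simp only [dJ, UU, inner_add_right, inner_neg_right, map_add, map_neg] at h1 h2 h3 ⊢
    linarith
  · have h1 := hmass 1 (Or.inl rfl)
    have h2 := hmass (-1) (Or.inr rfl)
    linarith


section Concrete

theorem hasSum_congr_of {f g : ℕ → ℝ} {s : ℝ} (h : HasSum f s) (hfg : ∀ k, g k = f k) :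
    HasSum g s := by
  rw [funext hfg]; exact h

variable {F : Type*} [NormedAddCommGroup F] [InnerProductSpace ℝ F] [CompleteSpace F]

theorem weak_seq [TopologicalSpace.SeparableSpace F] (x : ℕ → F) (hx : ∀ j, ‖x j‖ ≤ 1) :
    ∃ a : F, ∃ φ : ℕ → ℕ, StrictMono φ ∧
      ∀ f : F →L[ℝ] ℝ, Tendsto (fun j => f (x (φ j))) atTop (𝓝 (f a)) := by
  have hc := WeakDual.isSeqCompact_closedBall ℝ F (0 : StrongDual ℝ F) 1
  have hm : ∀ j, StrongDual.toWeakDual (InnerProductSpace.toDual ℝ F (x j)) ∈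
      WeakDual.toStrongDual ⁻¹' Metric.closedBall (0 : StrongDual ℝ F) 1 := by
    intro j
    have : ‖InnerProductSpace.toDual ℝ F (x j)‖ ≤ 1 := by
      rw [LinearIsometryEquiv.norm_map]; exact hx j
    simpa using this
  obtain ⟨y, -, φ, hφ, hlim⟩ := hc hm
  refine ⟨(InnerProductSpace.toDual ℝ F).symm (WeakDual.toStrongDual y), φ, hφ, fun f => ?_⟩
  set w := (InnerProductSpace.toDual ℝ F).symm f with hw
  have hf : ∀ v, f v = ⟪v, w⟫_ℝ := by
    intro v
    rw [real_inner_comm, hw, InnerProductSpace.toDual_symm_apply]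
  have h1 := ((WeakDual.eval_continuous (𝕜 := ℝ) w).tendsto y).comp hlim
  have h2 : f ((InnerProductSpace.toDual ℝ F).symm (WeakDual.toStrongDual y)) = y w := by
    rw [hf, InnerProductSpace.toDual_symm_apply]; rfl
  rw [h2]
  refine h1.congr fun j => ?_
  rw [hf]
  simp [Function.comp]

theorem hasSum_E (lam : ℕ → ℝ) (ζ : ℕ → F) (hlam_nonneg : ∀ k, 0 ≤ lam k)
    (hON : ∀ j k, ⟪ζ j, ζ k⟫_ℝ = if j = k then 1 + lam k else 0)
    (hdense : (Submodule.span ℝ (Set.range ζ)).topologicalClosure = ⊤) (u v : F) :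
    HasSum (fun k => (1 + lam k) * (coefH lam ζ u k * coefH lam ζ v k)) ⟪u, v⟫_ℝ := by
  have hpos : ∀ k, 0 < 1 + lam k := fun k => by linarith [hlam_nonneg k]
  have hs : ∀ k, √(1 + lam k) ≠ 0 := fun k => (Real.sqrt_pos.2 (hpos k)).ne'
  have hsq : ∀ k, √(1 + lam k) * √(1 + lam k) = 1 + lam k := fun k =>
    Real.mul_self_sqrt (hpos k).le
  set e : ℕ → F := fun k => (√(1 + lam k))⁻¹ • ζ k with he
  have ho : Orthonormal ℝ e := by
    rw [orthonormal_iff_ite]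
    intro i j
    simp only [he, inner_smul_left, inner_smul_right, hON]
    split_ifs with hij
    · subst hij
      have := hs i
      simp only [conj_trivial]
      field_simp
      rw [sq, hsq]
    · simp
  have hsp : ⊤ ≤ (Submodule.span ℝ (Set.range e)).topologicalClosure := by
    rw [← hdense]
    apply Submodule.topologicalClosure_mono
    rw [Submodule.span_le]
    rintro _ ⟨k, rfl⟩
    have : ζ k = √(1 + lam k) • e k := by
      simp [he, smul_smul, hs k]
    rw [this]
    exact Submodule.smul_mem _ _ (Submodule.subset_span ⟨k, rfl⟩)
  have h := (HilbertBasis.mk ho hsp).hasSum_inner_mul_inner u v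
  rw [HilbertBasis.coe_mk] at h
  refine hasSum_congr_of h ?_
  intro k
  simp only [he, coefH, inner_smul_left, inner_smul_right, conj_trivial,
    real_inner_comm v (ζ k)]
  have h1 := hs k
  have h2 := (hpos k).ne'
  have h3 := hsq k
  set r := √(1 + lam k) with hr
  rw [← h3]
  field_simp

theorem summable_H (lam : ℕ → ℝ) (ζ : ℕ → F) (hlam_nonneg : ∀ k, 0 ≤ lam k)
    (hON : ∀ j k, ⟪ζ j, ζ k⟫_ℝ = if j = k then 1 + lam k else 0)
    (hdense : (Submodule.span ℝ (Set.range ζ)).topologicalClosure = ⊤) (u v : F) :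
    Summable (fun k => coefH lam ζ u k * coefH lam ζ v k) := by
  have h := (hasSum_E lam ζ hlam_nonneg hON hdense u v).summable
  refine Summable.of_norm_bounded h.norm fun k => ?_
  rw [norm_mul (1 + lam k)]
  refine le_mul_of_one_le_left (norm_nonneg _) ?_
  rw [Real.norm_eq_abs]
  exact le_trans (by linarith [hlam_nonneg k]) (le_abs_self _)

theorem exists_B (lam : ℕ → ℝ) (ζ : ℕ → F) (hlam_nonneg : ∀ k, 0 ≤ lam k)
    (hON : ∀ j k, ⟪ζ j, ζ k⟫_ℝ = if j = k then 1 + lam k else 0)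
    (hdense : (Submodule.span ℝ (Set.range ζ)).topologicalClosure = ⊤) :
    ∃ B : F →L[ℝ] F →L[ℝ] ℝ, ∀ u v,
      HasSum (fun k => coefH lam ζ u k * coefH lam ζ v k) (B u v) := by
  have hS := summable_H lam ζ hlam_nonneg hON hdense
  have hadd : ∀ (u u' : F) (k : ℕ),
      coefH lam ζ (u + u') k = coefH lam ζ u k + coefH lam ζ u' k := by
    intro u u' k; simp only [coefH, inner_add_left, add_div]
  have hsmul : ∀ (c : ℝ) (u : F) (k : ℕ), coefH lam ζ (c • u) k = c * coefH lam ζ u k := by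
    intro c u k; simp only [coefH, real_inner_smul_left, mul_div_assoc]
  let B0 : LinearMap.BilinForm ℝ F :=
    LinearMap.mk₂ ℝ (fun u v => ∑' k, coefH lam ζ u k * coefH lam ζ v k)
      (by
        intro u u' v
        rw [← (hS u v).tsum_add (hS u' v)]
        exact tsum_congr fun k => by rw [hadd, add_mul])
      (by
        intro c u v
        rw [smul_eq_mul, ← tsum_mul_left]
        exact tsum_congr fun k => by rw [hsmul, mul_assoc])
      (by
        intro u v v'
        rw [← (hS u v).tsum_add (hS u v')]
        exact tsum_congr fun k => by rw [hadd, mul_add])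
      (by
        intro c u v
        rw [smul_eq_mul, ← tsum_mul_left]
        exact tsum_congr fun k => by rw [hsmul]; ring)
  have hB0 : ∀ u v, B0 u v = ∑' k, coefH lam ζ u k * coefH lam ζ v k := fun u v => rfl
  have hsym : ∀ u v, B0 u v = B0 v u := by
    intro u v
    rw [hB0, hB0]
    exact tsum_congr fun k => mul_comm _ _
  have hnn : ∀ u, 0 ≤ B0 u u := by
    intro u
    rw [hB0]
    exact tsum_nonneg fun k => mul_self_nonneg _
  have hle : ∀ u, B0 u u ≤ ‖u‖ ^ 2 := by
    intro u
    rw [← real_inner_self_eq_norm_sq, hB0]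
    refine hasSum_le (fun k => ?_) (hS u u).hasSum
      (hasSum_E lam ζ hlam_nonneg hON hdense u u)
    exact le_mul_of_one_le_left (mul_self_nonneg _) (by linarith [hlam_nonneg k])
  have hbd : ∀ u v, ‖B0 u v‖ ≤ 1 * ‖u‖ * ‖v‖ := by
    intro u v
    have h := LinearMap.BilinForm.apply_mul_apply_le_of_forall_zero_le B0 hnn u v
    rw [hsym v u, ← sq] at h
    rw [Real.norm_eq_abs, one_mul]
    refine abs_le_of_sq_le_sq ?_ (by positivity)
    rw [mul_pow]
    exact h.trans (mul_le_mul (hle u) (hle v) (hnn v) (by positivity))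
  exact ⟨LinearMap.mkContinuous₂ B0 1 hbd, fun u v => (hS u v).hasSum⟩

theorem separable_of_dense (ζ : ℕ → F)
    (hdense : (Submodule.span ℝ (Set.range ζ)).topologicalClosure = ⊤) : TopologicalSpace.SeparableSpace F := by
  have h1 : TopologicalSpace.IsSeparable (Set.range ζ) := (Set.countable_range ζ).isSeparable
  have h2 := (h1.span (R := ℝ)).closure
  have h3 : closure ((Submodule.span ℝ (Set.range ζ) : Submodule ℝ F) : Set F) = Set.univ := by
    rw [← Submodule.topologicalClosure_coe, hdense]; rfl
  rw [h3] at h2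
  exact TopologicalSpace.isSeparable_univ_iff.1 h2

theorem gapHyp (lam : ℕ → ℝ) (ζ : ℕ → F)
    (hlam_mono : Monotone lam) (hlam_nonneg : ∀ k, 0 ≤ lam k)
    (hON : ∀ j k, ⟪ζ j, ζ k⟫_ℝ = if j = k then 1 + lam k else 0)
    (hdense : (Submodule.span ℝ (Set.range ζ)).topologicalClosure = ⊤)
    (I : F → ℝ) (I' : F → F →L[ℝ] ℝ)
    (hIderiv : ∀ u, HasFDerivAt I (I' u) u) (hIderiv_cont : Continuous I')
    (hI1 : ∀ (u : ℕ → F) (a : F),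
      (∀ φ : F →L[ℝ] ℝ, Tendsto (fun j => φ (u j)) atTop (𝓝 (φ a))) →
      Tendsto (fun j => I (u j)) atTop (𝓝 (I a)))
    (hI2 : I 0 = 0 ∧ ∀ u : F, u ≠ 0 → 0 < I u)
    (hI3mono : ∀ u : F, u ≠ 0 → MonotoneOn (fun t : ℝ => I (t • u) / t ^ 2) (Ioi 0))
    (hI3zero : ∀ u : F, u ≠ 0 → Tendsto (fun t : ℝ => I (t • u) / t ^ 2) (𝓝[>] 0) (𝓝 0))
    (hI3top : ∀ u : F, u ≠ 0 → Tendsto (fun t : ℝ => I (t • u) / t ^ 2) atTop atTop)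
    (hI4 : ∀ u : F, u ≠ 0 → ∀ v : F, ∀ s : ℝ, -1 ≤ s →
      I u - I ((1 + s) • u + v) + I' u ((s * (s / 2 + 1)) • u + (1 + s) • v) ≤ 0)
    (hI4strict : ∀ u : F, u ≠ 0 → ∀ s : ℝ, -1 ≤ s → s ≠ 0 →
      I u - I ((1 + s) • u) + I' u ((s * (s / 2 + 1)) • u) < 0)
    (B : F →L[ℝ] F →L[ℝ] ℝ)
    (hB : ∀ u v, HasSum (fun k => coefH lam ζ u k * coefH lam ζ v k) (B u v))
    (n : ℕ) (hgap : lam n < lam (n + 1)) :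
    GapHyp B (Esub ζ n) (lam n) (lam (n + 1)) (ζ (n + 1)) I I' := by
  have hpos : ∀ k, 0 < 1 + lam k := fun k => by linarith [hlam_nonneg k]
  have hE := hasSum_E lam ζ hlam_nonneg hON hdense
  have hζV : ∀ k, k ≤ n → ζ k ∈ Esub ζ n := fun k hk =>
    Submodule.subset_span ⟨k, hk, rfl⟩
  have hζP : ∀ k, n < k → ζ k ∈ (Esub ζ n)ᗮ := by
    intro k hk
    rw [Submodule.mem_orthogonal]
    intro v hv
    induction hv using Submodule.span_induction with
    | mem x hx =>
      obtain ⟨j, hj, rfl⟩ := hx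
      have hj' : j ≤ n := hj
      rw [hON, if_neg (by omega)]
    | zero => simp
    | add x y _ _ h1 h2 => rw [inner_add_left, h1, h2, add_zero]
    | smul c x _ h1 => rw [inner_smul_left, h1, mul_zero]
  have hV0 : ∀ v ∈ Esub ζ n, ∀ k, n < k → coefH lam ζ v k = 0 := by
    intro v hv k hk
    rw [coefH, Submodule.inner_right_of_mem_orthogonal hv (hζP k hk), zero_div]
  have hP0 : ∀ v ∈ (Esub ζ n)ᗮ, ∀ k, k ≤ n → coefH lam ζ v k = 0 := by
    intro v hv k hk
    rw [coefH, Submodule.inner_left_of_mem_orthogonal (hζV k hk) hv, zero_div]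
  have hsep := separable_of_dense ζ hdense
  have hzz : ∀ k, coefH lam ζ (ζ (n + 1)) k = if n + 1 = k then 1 else 0 := by
    intro k
    rw [coefH, hON]
    split_ifs
    · exact div_self (hpos k).ne'
    · exact zero_div _
  exact
  { ha := hlam_nonneg n
    hab := hgap
    symm := fun x y => (hB x y).unique (hasSum_congr_of (hB y x) (fun k => mul_comm _ _))
    nonneg := fun x => (hB x x).nonneg fun k => mul_self_nonneg _
    fin := FiniteDimensional.span_of_finite ℝ ((Set.finite_le_nat n).image ζ)
    orth := by
      intro v hv w hw
      refine (hB v w).unique ?_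
      refine hasSum_congr_of hasSum_zero fun k => ?_
      rcases le_or_gt k n with hk | hk
      · rw [hP0 w hw k hk, mul_zero]
      · rw [hV0 v hv k hk, zero_mul]
    low := by
      intro v hv
      refine hasSum_le (fun k => ?_) (hE v v) ((hB v v).mul_left (1 + lam n))
      rcases le_or_gt k n with hk | hk
      · exact mul_le_mul_of_nonneg_right (by linarith [hlam_mono hk]) (mul_self_nonneg _)
      · simp [hV0 v hv k hk]
    high := by
      intro v hv
      refine hasSum_le (fun k => ?_) ((hB v v).mul_left (1 + lam (n + 1))) (hE v v)
      rcases le_or_gt k n with hk | hk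
      · simp [hP0 v hv k hk]
      · exact mul_le_mul_of_nonneg_right
          (by linarith [hlam_mono (show n + 1 ≤ k from hk)]) (mul_self_nonneg _)
    zperp := hζP _ (Nat.lt_succ_self n)
    zne := by
      intro h0
      have := hON (n + 1) (n + 1)
      rw [h0, inner_zero_left, if_pos rfl] at this
      exact (hpos (n + 1)).ne this
    zeq := by
      refine (hE _ _).unique (hasSum_congr_of ((hB _ _).mul_left (1 + lam (n + 1))) fun k => ?_)
      rw [hzz k]
      split_ifs with h
      · rw [h]
      · simp
    weak := weak_seq
    hIderiv := hIderiv
    hIderiv_cont := hIderiv_cont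
    hI1 := hI1
    hI0 := hI2.1
    hI2 := hI2.2
    hI3mono := hI3mono
    hI3zero := hI3zero
    hI3top := hI3top
    hI4 := hI4
    hI4strict := hI4strict }

end Concrete

end GapProof

/-- Multiplicity of normalized solutions: given `k` pairwise disjoint
spectral gaps, there is `μ_k > 0` such that every mass `μ ∈ (0, μ_k)` is attained by `k`
distinct normalized solutions, one in each gap. -/
theorem multiple_normalized_solutions {E : Type*} [NormedAddCommGroup E]
    [InnerProductSpace ℝ E] [CompleteSpace E]
    (lam : ℕ → ℝ) (ζ : ℕ → E)
    (hlam_mono : Monotone lam) (hlam_nonneg : ∀ k, 0 ≤ lam k)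
    (hlam_top : Tendsto lam atTop atTop)
    (hON : ∀ j k, ⟪ζ j, ζ k⟫_ℝ = if j = k then 1 + lam k else 0)
    (hdense : (Submodule.span ℝ (Set.range ζ)).topologicalClosure = ⊤)
    (I : E → ℝ) (I' : E → E →L[ℝ] ℝ)
    (hIderiv : ∀ u, HasFDerivAt I (I' u) u) (hIderiv_cont : Continuous I')
    (hI1 : ∀ (u : ℕ → E) (a : E),
      (∀ φ : E →L[ℝ] ℝ, Tendsto (fun j => φ (u j)) atTop (𝓝 (φ a))) →
      Tendsto (fun j => I (u j)) atTop (𝓝 (I a)))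
    (hI2 : I 0 = 0 ∧ ∀ u : E, u ≠ 0 → 0 < I u)
    (hI3mono : ∀ u : E, u ≠ 0 → MonotoneOn (fun t : ℝ => I (t • u) / t ^ 2) (Ioi 0))
    (hI3zero : ∀ u : E, u ≠ 0 → Tendsto (fun t : ℝ => I (t • u) / t ^ 2) (𝓝[>] 0) (𝓝 0))
    (hI3top : ∀ u : E, u ≠ 0 → Tendsto (fun t : ℝ => I (t • u) / t ^ 2) atTop atTop)
    (hI4 : ∀ u : E, u ≠ 0 → ∀ v : E, ∀ s : ℝ, -1 ≤ s →
      I u - I ((1 + s) • u + v) + I' u ((s * (s / 2 + 1)) • u + (1 + s) • v) ≤ 0)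
    (hI4strict : ∀ u : E, u ≠ 0 → ∀ s : ℝ, -1 ≤ s → s ≠ 0 →
      I u - I ((1 + s) • u) + I' u ((s * (s / 2 + 1)) • u) < 0)
    (n : ℕ)
    (k : ℕ) (hk : 1 ≤ k) (ns : Fin k → ℕ) (hns : StrictMono ns)
    (hgaps : ∀ i, lam (ns i) < lam (ns i + 1)) :
    ∃ μk : ℝ, 0 < μk ∧ ∀ μ : ℝ, 0 < μ → μ < μk →
      ∃ (Λ : Fin k → ℝ) (u : Fin k → E),
        (∀ i, Λ i ∈ Ioo (lam (ns i)) (lam (ns i + 1))) ∧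
        (∀ i, ∀ v : E, qForm lam ζ (Λ i) (u i) v = I' (u i) v) ∧
        (∀ i, Real.sqrt (normHsq lam ζ (u i)) = μ) ∧
        Function.Injective (fun i => (u i, Λ i)) := by
  classical
  obtain ⟨B, hB⟩ := GapProof.exists_B lam ζ hlam_nonneg hON hdense
  have hE := GapProof.hasSum_E lam ζ hlam_nonneg hON hdense
  have hmain := fun i => (GapProof.gapHyp lam ζ hlam_mono hlam_nonneg hON hdense I I' hIderiv
    hIderiv_cont hI1 hI2 hI3mono hI3zero hI3top hI4 hI4strict B hB (ns i) (hgaps i)).main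
  choose μ0 hμ0 hsol using hmain
  have hne : (Finset.univ : Finset (Fin k)).Nonempty := ⟨⟨0, hk⟩, Finset.mem_univ _⟩
  refine ⟨Finset.univ.inf' hne μ0, ?_, ?_⟩
  · rw [Finset.lt_inf'_iff]
    exact fun i _ => hμ0 i
  intro μ hμ hμk
  rw [Finset.lt_inf'_iff] at hμk
  choose Λ hΛ u hu hm using fun i => hsol i μ hμ (hμk i (Finset.mem_univ i))
  refine ⟨Λ, u, hΛ, fun i v => ?_, fun i => ?_, fun i j hij => ?_⟩
  · rw [← hu i v]
    refine HasSum.tsum_eq (GapProof.hasSum_congr_of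
      ((hE (u i) v).sub ((hB (u i) v).mul_left (1 + Λ i))) fun j => ?_)
    ring
  · have : normHsq lam ζ (u i) = μ ^ 2 := by
      rw [← hm i]
      exact HasSum.tsum_eq (GapProof.hasSum_congr_of (hB (u i) (u i)) fun j => sq _)
    rw [this, Real.sqrt_sq hμ.le]
  · have hΛij : Λ i = Λ j := (Prod.mk.inj hij).2
    have key : ∀ i j : Fin k, i < j → Λ i < Λ j := fun i j h =>
      (hΛ i).2.trans ((hlam_mono (show ns i + 1 ≤ ns j from hns h)).trans_lt (hΛ j).1)
    rcases lt_trichotomy i j with h | h | h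
    · exact absurd hΛij (key i j h).ne
    · exact h
    · exact absurd hΛij (key j i h).ne'
end

section
/- Under assumptions (I1)–(I4), let K ⊂ (λ_n, λ_{n+1}) be a compact set and let u ∈ E∖E_n. Then there exists R > 0 such that J_λ(w) ≤ 0 for every λ ∈ K and every w ∈ F_n(u)⁺ with ‖w‖_E ≥ R. -/
open Filter Topology Set
open scoped InnerProductSpace

/- Abstract setting: `E = D(A^{1/2})` is a real Hilbert space in which the rescaled
eigenfunctions `ζ_k / √(1+λ_k)` form a Hilbert basis (encoded by `hON` and `hdense` below);
the `H`-inner product of `u, v ∈ E` is recovered as `∑ₖ ⟨u,ζ_k⟩_H ⟨v,ζ_k⟩_H`, where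
`⟨u,ζ_k⟩_H = ⟨u,ζ_k⟩_E / (1+λ_k)`. -/

variable {E : Type*} [NormedAddCommGroup E] [InnerProductSpace ℝ E] [CompleteSpace E]

/-- Uniform boundedness of the positivity region of `J_λ` on `F_n(u)⁺`
for `λ` in a compact subset of the spectral gap. -/
theorem J_nonpos_outside_ball {E : Type*} [NormedAddCommGroup E]
    [InnerProductSpace ℝ E] [CompleteSpace E]
    (lam : ℕ → ℝ) (ζ : ℕ → E)
    (hlam_mono : Monotone lam) (hlam_nonneg : ∀ k, 0 ≤ lam k)
    (hlam_top : Tendsto lam atTop atTop)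
    (hON : ∀ j k, ⟪ζ j, ζ k⟫_ℝ = if j = k then 1 + lam k else 0)
    (hdense : (Submodule.span ℝ (Set.range ζ)).topologicalClosure = ⊤)
    (I : E → ℝ) (I' : E → E →L[ℝ] ℝ)
    (hIderiv : ∀ u, HasFDerivAt I (I' u) u) (hIderiv_cont : Continuous I')
    (hI1 : ∀ (u : ℕ → E) (a : E),
      (∀ φ : E →L[ℝ] ℝ, Tendsto (fun j => φ (u j)) atTop (𝓝 (φ a))) →
      Tendsto (fun j => I (u j)) atTop (𝓝 (I a)))
    (hI2 : I 0 = 0 ∧ ∀ u : E, u ≠ 0 → 0 < I u)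
    (hI3mono : ∀ u : E, u ≠ 0 → MonotoneOn (fun t : ℝ => I (t • u) / t ^ 2) (Ioi 0))
    (hI3zero : ∀ u : E, u ≠ 0 → Tendsto (fun t : ℝ => I (t • u) / t ^ 2) (𝓝[>] 0) (𝓝 0))
    (hI3top : ∀ u : E, u ≠ 0 → Tendsto (fun t : ℝ => I (t • u) / t ^ 2) atTop atTop)
    (hI4 : ∀ u : E, u ≠ 0 → ∀ v : E, ∀ s : ℝ, -1 ≤ s →
      I u - I ((1 + s) • u + v) + I' u ((s * (s / 2 + 1)) • u + (1 + s) • v) ≤ 0)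
    (hI4strict : ∀ u : E, u ≠ 0 → ∀ s : ℝ, -1 ≤ s → s ≠ 0 →
      I u - I ((1 + s) • u) + I' u ((s * (s / 2 + 1)) • u) < 0)
    (n : ℕ)
    (hgap : lam n < lam (n + 1))
    (K : Set ℝ) (hKcompact : IsCompact K) (hKsub : K ⊆ Ioo (lam n) (lam (n + 1)))
    (u : E) (hu : u ∉ Esub ζ n) :
    ∃ R : ℝ, 0 < R ∧ ∀ lambda ∈ K, ∀ w ∈ FsubPlus ζ n u,
      R ≤ ‖w‖ → Jfun lam ζ I lambda w ≤ 0 := by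
  have hq : ∀ lambda ∈ K, ∀ w : E, qForm lam ζ lambda w w ≤ ‖w‖ ^ 2 := by
    intro l hl w
    have hl0 : 0 ≤ l := (hlam_nonneg n).trans (hKsub hl).1.le
    have hpos : ∀ k, 0 < 1 + lam k := fun k => by linarith [hlam_nonneg k]
    have hv : Orthonormal ℝ (fun k => (√(1 + lam k))⁻¹ • ζ k) := by
      rw [orthonormal_iff_ite]
      intro j k
      rw [real_inner_smul_left, real_inner_smul_right, hON]
      split_ifs with h
      · subst h
        have h1 := Real.mul_self_sqrt (hpos j).le
        have h2 : √(1 + lam j) ≠ 0 := (Real.sqrt_pos.2 (hpos j)).ne'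
        rw [← h1]
        simp only [Real.sqrt_mul_self (Real.sqrt_nonneg _)]
        field_simp
      · simp
    unfold qForm
    apply tsum_le_of_sum_le' (sq_nonneg _)
    intro s
    refine le_trans (Finset.sum_le_sum ?_) (hv.sum_inner_products_le w (s := s))
    intro k _
    have h1 : (√(1 + lam k)) ^ 2 = 1 + lam k := Real.sq_sqrt (hpos k).le
    rw [real_inner_smul_left, Real.norm_eq_abs, sq_abs, mul_pow, inv_pow, h1, real_inner_comm]
    have h3 : (1 + lam k)⁻¹ * ⟪w, ζ k⟫_ℝ ^ 2
        = (1 + lam k) * (coefH lam ζ w k * coefH lam ζ w k) := by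
      unfold coefH
      have := (hpos k).ne'
      field_simp
    rw [h3]
    exact mul_le_mul_of_nonneg_right (by linarith) (mul_self_nonneg _)
  have hIc : Continuous I := continuous_iff_continuousAt.2 fun x => (hIderiv x).continuousAt
  have hfin : FiniteDimensional ℝ (Fsub ζ n u) := by
    have h1 : FiniteDimensional ℝ (Esub ζ n) :=
      FiniteDimensional.span_of_finite ℝ ((Set.finite_le_nat n).image ζ)
    unfold Fsub
    infer_instance
  have hcomp : IsCompact (Subtype.val '' Metric.sphere (0 : Fsub ζ n u) 1) :=
    (isCompact_sphere _ _).image continuous_subtype_val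
  have hT : ∃ T : ℝ, 0 < T ∧ ∀ e ∈ Subtype.val '' Metric.sphere (0 : Fsub ζ n u) 1,
      e ≠ 0 → ∀ t ≥ T, 1 / 2 ≤ I (t • e) / t ^ 2 := by
    refine hcomp.induction_on (p := fun S => ∃ T : ℝ, 0 < T ∧ ∀ e ∈ S,
      e ≠ 0 → ∀ t ≥ T, 1 / 2 ≤ I (t • e) / t ^ 2) ⟨1, one_pos, by simp⟩ ?_ ?_ ?_
    · rintro s t hst ⟨T, hT, h⟩
      exact ⟨T, hT, fun e he => h e (hst he)⟩
    · rintro s t ⟨T, hT, h⟩ ⟨T2, hT2, h2⟩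
      refine ⟨max T T2, lt_max_of_lt_left hT, ?_⟩
      rintro e (he | he) h0 r hr
      · exact h e he h0 r ((le_max_left _ _).trans hr)
      · exact h2 e he h0 r ((le_max_right _ _).trans hr)
    · rintro _ ⟨e, he, rfl⟩
      have he0 : (e : E) ≠ 0 := by
        intro h
        have h1 : ‖(e : E)‖ = 1 := by simpa using he
        rw [h, norm_zero] at h1
        exact zero_ne_one h1
      obtain ⟨T, h1, h2⟩ := (((hI3top e he0).eventually_gt_atTop (1 / 2)).and
        (eventually_gt_atTop 0)).exists
      have hc : Continuous fun x : E => I (T • x) / T ^ 2 := by fun_prop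
      refine ⟨_, mem_nhdsWithin_of_mem_nhds
        (hc.continuousAt.eventually (lt_mem_nhds h1)), T, h2, ?_⟩
      intro x hx hx0 t ht
      exact (le_of_lt hx).trans (hI3mono x hx0 h2 (h2.trans_le ht) ht)
  obtain ⟨T, hT0, hT⟩ := hT
  refine ⟨T, hT0, ?_⟩
  rintro l hl w ⟨v, hv, t, ht, hw⟩ hR
  have hwpos : 0 < ‖w‖ := hT0.trans_le hR
  have hwF : w ∈ Fsub ζ n u := by
    rw [hw]
    exact Submodule.add_mem_sup hv (Submodule.smul_mem _ _ (Submodule.mem_span_singleton_self u))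
  have hn : ‖‖w‖⁻¹ • w‖ = 1 := by
    rw [norm_smul, norm_inv, norm_norm, inv_mul_cancel₀ hwpos.ne']
  have hmem : ‖w‖⁻¹ • w ∈ Subtype.val '' Metric.sphere (0 : Fsub ζ n u) 1 :=
    ⟨⟨_, Submodule.smul_mem _ _ hwF⟩, by simpa using hn, rfl⟩
  have h0 : ‖w‖⁻¹ • w ≠ 0 := by
    intro h
    rw [h, norm_zero] at hn
    exact zero_ne_one hn
  have key := hT _ hmem h0 ‖w‖ hR
  rw [smul_inv_smul₀ hwpos.ne', le_div_iff₀ (by positivity)] at key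
  have := hq l hl w
  unfold Jfun
  linarith
end
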